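/- arXiv:2206.11001 — 3 statements merged into one kernel-verified Lean document; each statement's English description precedes it below -/
import Mathlib

section
/- Let A and B be reduced orders and let G and H be finite abelian groups. Then the group rings A[G] and B[H] are isomorphic as rings if and only if there exist an order C and finite abelian groups I and J such that A is isomorphic to C[I] as rings, B is isomorphic to C[J] as rings, and I × G is isomorphic to J × H as groups. -/
section polysec
open Polynomial

lemma gr_exists_hom_domain_aux {D : Type*} [CommRing D] [IsDomain D] [CharZero D]
    [Module.Finite ℤ D] (K : Type*) [Field K] [Algebra D K] [IsFractionRing D K]
    {x : D} (hx : x ≠ 0) : ∃ σ : D →+* ℂ, 1 ≤ ‖σ x‖ := by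
  have : CharZero K := charZero_of_injective_algebraMap (IsFractionRing.injective D K)
  have : Algebra.IsIntegral ℤ D := inferInstance
  have : Algebra.IsAlgebraic ℤ D := inferInstance
  have : Algebra.IsAlgebraic ℚ K :=
    by
    have hD : ∀ a : D, IsIntegral ℚ (algebraMap D K a) := fun a =>
      ((Algebra.IsIntegral.isIntegral (R := ℤ) a).map (algebraMap D K).toIntAlgHom).tower_top
    constructor
    intro z
    obtain ⟨a, b, -, rfl⟩ := IsFractionRing.div_surjective (A := D) z
    rw [div_eq_mul_inv]
    exact ((hD a).mul (hD b).inv).isAlgebraic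
  set y : K := algebraMap D K x with hy
  have hy0 : y ≠ 0 := by simpa [hy] using hx
  have hyint : IsIntegral ℤ y := (Algebra.IsIntegral.isIntegral (R := ℤ) x).map (algebraMap D K).toIntAlgHom
  have hmin := minpoly.isIntegrallyClosed_eq_field_fractions' ℚ hyint
  obtain ⟨z, hz, hz1⟩ : ∃ z : ℂ, aeval z (minpoly ℚ y) = 0 ∧ 1 ≤ ‖z‖ := by
    by_contra! hcon
    let p : ℂ[X] := (minpoly ℚ y).map (algebraMap ℚ ℂ)
    have hp : p.Monic := (minpoly.monic hyint.tower_top).map _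
    have h0 := (IsAlgClosed.splits p).coeff_zero_eq_prod_roots_of_monic hp
    have hc : p.coeff 0 = (((minpoly ℤ y).coeff 0 : ℤ) : ℂ) := by
      simp [p, hmin]
    have hne : (minpoly ℤ y).coeff 0 ≠ 0 := by
      have h := minpoly.coeff_zero_ne_zero (hyint.tower_top (A := ℚ)) hy0
      rw [hmin] at h
      intro h'
      simp [h'] at h
    have hge : 1 ≤ ‖p.coeff 0‖ := by
      rw [hc, Complex.norm_intCast]
      exact_mod_cast Int.one_le_abs hne
    have hroots : ∀ z ∈ p.roots, ‖z‖ < 1 := by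
      intro z hz
      apply hcon
      have := (mem_roots'.1 hz).2
      simpa [p, IsRoot, eval_map_algebraMap] using this
    have hnon : p.roots ≠ 0 := by
      intro h
      have := IsAlgClosed.exists_root p (by
        rw [Polynomial.degree_map]
        exact (minpoly.degree_pos hyint.tower_top).ne')
      obtain ⟨z, hz⟩ := this
      have : z ∈ p.roots := (mem_roots hp.ne_zero).2 hz
      simp [h] at this
    have hprod : ∀ s : Multiset ℂ, (∀ z ∈ s, ‖z‖ < 1) → s ≠ 0 → ‖s.prod‖ < 1 := by
      intro s
      induction s using Multiset.induction with
      | empty => simp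
      | cons a s ih =>
        intro h _
        rw [Multiset.prod_cons, norm_mul]
        by_cases hs : s = 0
        · subst hs; simpa using h a (by simp)
        · have h1 := h a (by simp)
          have h2 := ih (fun z hz => h z (by simp [hz])) hs
          nlinarith [norm_nonneg a, norm_nonneg s.prod]
    have := hprod _ hroots hnon
    rw [h0, norm_mul, norm_pow, norm_neg, norm_one, one_pow, one_mul] at hge
    linarith
  obtain ⟨φ, hφ⟩ := IntermediateField.exists_algHom_of_splits_of_aeval (F := ℚ) (E := K) (K := ℂ)
    (fun s => ⟨(Algebra.IsIntegral.isIntegral s), IsAlgClosed.splits _⟩) hz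
  exact ⟨φ.toRingHom.comp (algebraMap D K), by simpa [hφ, ← hy] using hz1⟩

lemma gr_exists_hom_domain {D : Type*} [CommRing D] [IsDomain D] [CharZero D] [Module.Finite ℤ D]
    {x : D} (hx : x ≠ 0) : ∃ σ : D →+* ℂ, 1 ≤ ‖σ x‖ :=
  gr_exists_hom_domain_aux (FractionRing D) hx

lemma gr_exists_hom {B : Type*} [CommRing B] [Module.Free ℤ B] [Module.Finite ℤ B] [IsReduced B]
    {x : B} (hx : x ≠ 0) : ∃ σ : B →+* ℂ, 1 ≤ ‖σ x‖ := by
  have h1 : ¬ IsNilpotent x := fun h => hx h.eq_zero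
  have h2 : x ∉ sInf (minimalPrimes B) := by
    intro h
    have : sInf (minimalPrimes B) = nilradical B := by
      rw [nilradical, ← Ideal.sInf_minimalPrimes]; rfl
    rw [this] at h
    exact h1 h
  rw [Submodule.mem_sInf] at h2
  push Not at h2
  obtain ⟨P, hP, hxP⟩ := h2
  change Ideal B at P
  have : Ideal.IsPrime P := hP.1.1
  have hd := Ideal.disjoint_nonZeroDivisors_of_mem_minimalPrimes hP
  have : CharZero (B ⧸ P) := by
    have hinj : ∀ n : ℕ, (n : B ⧸ P) = 0 → n = 0 := by
      intro n hn
      by_contra hn0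
      have hmem : (n : B) ∈ P := by
        rw [← Ideal.Quotient.eq_zero_iff_mem]; simpa using hn
      refine Set.disjoint_left.1 hd hmem ?_
      rw [SetLike.mem_coe, mem_nonZeroDivisors_iff_right]
      intro y hy
      have : (n : ℤ) • y = 0 := by simpa [mul_comm] using hy
      exact (smul_eq_zero.1 this).resolve_left (by exact_mod_cast hn0)
    exact charZero_of_inj_zero hinj
  obtain ⟨σ, hσ⟩ := gr_exists_hom_domain (x := Ideal.Quotient.mk P x)
    (by rwa [Ne, Ideal.Quotient.eq_zero_iff_mem])
  exact ⟨σ.comp (Ideal.Quotient.mk P), hσ⟩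

end polysec

section unitsec
open MonoidAlgebra

lemma gr_sep {H : Type*} [CommGroup H] [Fintype H] (f : H → ℂ)
    (hf : ∀ χ : H →* ℂ, ∑ h, f h * χ h = 0) (k : H) : f k = 0 := by
  classical
  have h1 : ∀ ψ : AddChar (Additive H) ℂ, ∑ h, f h * ψ (Additive.ofMul h) = 0 := fun ψ =>
    hf { toFun := fun h => ψ (Additive.ofMul h)
         map_one' := by simp
         map_mul' := fun a b => by simp [AddChar.map_add_eq_mul] }
  have h2 : ∑ ψ : AddChar (Additive H) ℂ, ψ (Additive.ofMul k⁻¹) *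
      ∑ h, f h * ψ (Additive.ofMul h) = 0 := by simp [h1]
  simp_rw [Finset.mul_sum] at h2
  rw [Finset.sum_comm] at h2
  have h3 : ∀ h : H, ∑ ψ : AddChar (Additive H) ℂ, ψ (Additive.ofMul k⁻¹) *
      (f h * ψ (Additive.ofMul h)) = f h * if h = k then (Fintype.card H : ℂ) else 0 := by
    intro h
    have := AddChar.sum_apply_eq_ite (Additive.ofMul (k⁻¹ * h))
    have e : (Additive.ofMul (k⁻¹ * h) = 0) ↔ h = k := by
      rw [ofMul_eq_zero, inv_mul_eq_one, eq_comm]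
    simp only [e] at this
    rw [(Fintype.card_congr Additive.ofMul : Fintype.card H = Fintype.card (Additive H)), ← this, Finset.mul_sum]
    refine Finset.sum_congr rfl fun ψ _ => ?_
    rw [ofMul_mul, AddChar.map_add_eq_mul]; ring
  simp_rw [h3] at h2
  simpa using h2

lemma gr_unitary {B H : Type*} [CommRing B] [CommGroup H] [Finite H] (σ : B →+* ℂ)
    {u v : MonoidAlgebra B H} (huv : u * v = 1) {n : ℕ} (hn : n ≠ 0) (hu : u ^ n = 1) (h : H) :
    σ (v.coeff h⁻¹) = (starRingEnd ℂ) (σ (u.coeff h)) := by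
  classical
  have := Fintype.ofFinite H
  have key : ∀ k : H, σ (v.coeff k) - (starRingEnd ℂ) (σ (u.coeff k⁻¹)) = 0 := by
    refine gr_sep _ fun χ => ?_
    let τ : MonoidAlgebra B H →+* ℂ := liftNCRingHom σ χ fun _ _ => mul_comm _ _
    have hτ : ∀ x, τ x = ∑ k, σ (x.coeff k) * χ k := by
      intro x
      conv_lhs => rw [← sum_coeff_single x]
      rw [Finsupp.sum_fintype _ _ (by simp), map_sum]
      refine Finset.sum_congr rfl fun k _ => ?_
      exact liftNCRingHom_single _ _ _ _ _
    have h1 : τ u ^ n = 1 := by rw [← map_pow, hu, map_one]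
    have h2 : τ u * τ v = 1 := by rw [← map_mul, huv, map_one]
    have h3 : τ v = (starRingEnd ℂ) (τ u) := by
      rw [← Complex.inv_eq_conj (Complex.norm_eq_one_of_pow_eq_one h1 hn)]
      exact eq_inv_of_mul_eq_one_right h2
    have hχ : ∀ k, (starRingEnd ℂ) (χ k) = χ k⁻¹ := by
      intro k
      have hk : χ k ^ (Fintype.card H) = 1 := by
        rw [← map_pow, pow_card_eq_one, map_one]
      rw [← Complex.inv_eq_conj (Complex.norm_eq_one_of_pow_eq_one hk Fintype.card_ne_zero)]
      symm
      apply eq_inv_of_mul_eq_one_right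
      rw [← map_mul]; simp
    rw [hτ, hτ, map_sum] at h3
    simp_rw [map_mul, hχ] at h3
    simp_rw [sub_mul]
    rw [Finset.sum_sub_distrib, h3, sub_eq_zero]
    exact Fintype.sum_equiv (Equiv.inv H) _ _ (by simp)
  have := key h⁻¹
  rwa [inv_inv, sub_eq_zero] at this

lemma gr_coeff_one_mul {B H : Type*} [CommRing B] [CommGroup H] [Fintype H]
    (u v : MonoidAlgebra B H) : (u * v).coeff 1 = ∑ h, u.coeff h * v.coeff h⁻¹ := by
  rw [coeff_mul_apply_left, Finsupp.sum_fintype _ _ (by simp)]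
  simp

/-- The coefficients of a torsion unit give orthogonal idempotents. -/
lemma gr_torsion_values {B H : Type*} [CommRing B] [Module.Free ℤ B] [Module.Finite ℤ B]
    [IsReduced B] [CommGroup H] [Fintype H]
    {u v : MonoidAlgebra B H} (huv : u * v = 1) {n : ℕ} (hn : n ≠ 0) (hu : u ^ n = 1) :
    (∀ (σ : B →+* ℂ) h, σ (u.coeff h * v.coeff h⁻¹) = ((‖σ (u.coeff h)‖ ^ 2 : ℝ) : ℂ)) ∧
    (∀ (σ : B →+* ℂ), ∑ h, ‖σ (u.coeff h)‖ ^ 2 = 1) ∧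
    (∀ h, IsIdempotentElem (u.coeff h * v.coeff h⁻¹)) := by
  have h1 : ∀ (σ : B →+* ℂ) h,
      σ (u.coeff h * v.coeff h⁻¹) = ((‖σ (u.coeff h)‖ ^ 2 : ℝ) : ℂ) := by
    intro σ h
    rw [map_mul, gr_unitary σ huv hn hu, Complex.mul_conj, Complex.normSq_eq_norm_sq]
  have h2 : ∀ (σ : B →+* ℂ), ∑ h, ‖σ (u.coeff h)‖ ^ 2 = 1 := by
    intro σ
    have := congrArg σ (gr_coeff_one_mul u v)
    rw [huv, coeff_one_one, map_one, map_sum] at this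
    simp_rw [h1] at this
    exact_mod_cast this.symm
  refine ⟨h1, h2, fun h => ?_⟩
  set e := u.coeff h * v.coeff h⁻¹ with he
  rw [IsIdempotentElem, ← sub_eq_zero]
  by_contra hne
  obtain ⟨σ, hσ⟩ := gr_exists_hom hne
  rw [map_sub, map_mul, he, h1] at hσ
  have hle : ‖σ (u.coeff h)‖ ^ 2 ≤ 1 := by
    rw [← h2 σ]
    exact Finset.single_le_sum (f := fun h => ‖σ (u.coeff h)‖ ^ 2) (fun _ _ => by positivity)
      (Finset.mem_univ h)
  have h0 : 0 ≤ ‖σ (u.coeff h)‖ ^ 2 := by positivity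
  generalize ‖σ (u.coeff h)‖ ^ 2 = t at hσ hle h0
  rw [← Complex.ofReal_mul, ← Complex.ofReal_sub, Complex.norm_real, Real.norm_eq_abs,
    le_abs] at hσ
  rcases hσ with hσ | hσ <;> nlinarith

lemma gr_eq_zero {B : Type*} [CommRing B] [Module.Free ℤ B] [Module.Finite ℤ B]
    [IsReduced B] {x : B} (hx : ∀ σ : B →+* ℂ, σ x = 0) : x = 0 := by
  by_contra hne
  obtain ⟨σ, hσ⟩ := gr_exists_hom hne
  rw [hx, norm_zero] at hσ
  linarith

/-- Torsion units are homogeneous over a connected reduced order. -/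
lemma gr_homogeneous {B H : Type*} [CommRing B] [Module.Free ℤ B] [Module.Finite ℤ B]
    [IsReduced B] [Nontrivial B] (hB : ∀ e : B, IsIdempotentElem e → e = 0 ∨ e = 1)
    [CommGroup H] [Finite H]
    {u v : MonoidAlgebra B H} (huv : u * v = 1) {n : ℕ} (hn : n ≠ 0) (hu : u ^ n = 1) :
    ∃ (h : H) (b : B), u = single h b := by
  classical
  have := Fintype.ofFinite H
  obtain ⟨h1, h2, h3⟩ := gr_torsion_values huv hn hu
  have hex : ∃ h, u.coeff h * v.coeff h⁻¹ = 1 := by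
    by_contra! hcon
    have h0 : ∀ h, u.coeff h * v.coeff h⁻¹ = 0 := fun h => (hB _ (h3 h)).resolve_right (hcon h)
    have := gr_coeff_one_mul u v
    rw [huv, coeff_one_one] at this
    simp [h0] at this
  obtain ⟨h, hh⟩ := hex
  refine ⟨h, u.coeff h, ?_⟩
  ext k
  rw [coeff_single, Finsupp.single_apply]
  split_ifs with hk
  · rw [hk]
  · refine gr_eq_zero fun σ => ?_
    have e1 : ‖σ (u.coeff h)‖ ^ 2 = 1 := by
      have := h1 σ h
      rw [hh, map_one] at this
      exact_mod_cast this.symm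
    have e2 := h2 σ
    rw [← Finset.add_sum_erase _ _ (Finset.mem_univ h), e1] at e2
    have e3 : ∑ x ∈ Finset.univ.erase h, ‖σ (u.coeff x)‖ ^ 2 = 0 := by linarith
    rw [Finset.sum_eq_zero_iff_of_nonneg (fun _ _ => by positivity)] at e3
    have := e3 k (by simp [Ne.symm hk])
    simpa using this

/-- Idempotents of the group ring come from the base. -/
lemma gr_idem {B H : Type*} [CommRing B] [Module.Free ℤ B] [Module.Finite ℤ B]
    [IsReduced B] [CommGroup H] [Finite H]
    {e : MonoidAlgebra B H} (he : IsIdempotentElem e) : ∃ f : B, e = single 1 f := by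
  classical
  have := Fintype.ofFinite H
  have he' : e * e = e := he
  have huv : (1 - 2 * e) * (1 - 2 * e) = 1 := by linear_combination 4 * he'
  obtain ⟨h1, h2, h3⟩ := gr_torsion_values huv (n := 2) (by norm_num) (by rw [sq, huv])
  have hc : ∀ h, (1 - 2 * e).coeff h = (1 : MonoidAlgebra B H).coeff h - 2 * e.coeff h := by
    intro h
    rw [two_mul, two_mul]; simp
  refine ⟨e.coeff 1, ?_⟩
  ext k
  rw [coeff_single, Finsupp.single_apply]
  split_ifs with hk
  · rw [hk]
  · refine gr_eq_zero fun σ => ?_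
    have i1 := congrArg σ (h3 1)
    rw [map_mul, h1] at i1
    have ht : ‖σ ((1 - 2 * e).coeff 1)‖ ^ 2 = 1 := by
      have i2 : ‖σ ((1 - 2 * e).coeff 1)‖ ^ 2 * ‖σ ((1 - 2 * e).coeff 1)‖ ^ 2
        = ‖σ ((1 - 2 * e).coeff 1)‖ ^ 2 := by exact_mod_cast i1
      rcases IsIdempotentElem.iff_eq_zero_or_one.1 i2 with h | h
      · exfalso
        have h0 : σ ((1 - 2 * e).coeff 1) = 0 := by simpa using h
        rw [hc, coeff_one_one, map_sub, map_one, map_mul, map_ofNat] at h0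
        have hyint : IsIntegral ℤ (σ (e.coeff 1)) :=
          (Algebra.IsIntegral.isIntegral (R := ℤ) (e.coeff 1)).map σ.toIntAlgHom
        have hv : σ (e.coeff 1) = algebraMap ℚ ℂ (1 / 2) := by
          rw [eq_ratCast]; push_cast; linear_combination (-1 / 2) * h0
        rw [hv, isIntegral_algebraMap_iff (algebraMap ℚ ℂ).injective,
          IsIntegrallyClosed.isIntegral_iff] at hyint
        obtain ⟨y, hy⟩ := hyint
        have : (2 * y : ℚ) = 1 := by
          rw [eq_intCast] at hy; rw [hy]; norm_num
        have : 2 * y = 1 := by exact_mod_cast this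
        omega
      · exact h
    have e2 := h2 σ
    rw [← Finset.add_sum_erase _ _ (Finset.mem_univ (1 : H)), ht] at e2
    have e3 : ∑ x ∈ Finset.univ.erase (1 : H), ‖σ ((1 - 2 * e).coeff x)‖ ^ 2 = 0 := by linarith
    rw [Finset.sum_eq_zero_iff_of_nonneg (fun _ _ => by positivity)] at e3
    have h4 := e3 k (by simp [Ne.symm hk])
    have h5 : σ ((1 - 2 * e).coeff k) = 0 := by simpa using h4
    rw [hc, one_def, coeff_single, Finsupp.single_apply, if_neg hk, zero_sub, map_neg, map_mul,
      map_ofNat] at h5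
    simpa using h5

end unitsec

section isosec
open MonoidAlgebra

lemma gr_degree {S B G H : Type*} [CommRing S] [CommRing B] [Module.Free ℤ B] [Module.Finite ℤ B]
    [IsReduced B] [Nontrivial B] (hB : ∀ e : B, IsIdempotentElem e → e = 0 ∨ e = 1)
    [CommGroup G] [Finite G] [CommGroup H] [Finite H]
    (φ : MonoidAlgebra S G →+* MonoidAlgebra B H) :
    ∃ (d : G →* H) (b : G →* Bˣ), ∀ g, φ (single g 1) = single (d g) (b g : B) := by
  have h1 : ∀ g : G, ∃ (h : H) (b : B), φ (single g 1) = single h b := by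
    intro g
    refine gr_homogeneous hB (v := φ (single g⁻¹ 1)) (n := Nat.card G) ?_ Nat.card_pos.ne' ?_
    · rw [← map_mul, single_mul_single, mul_inv_cancel, one_mul, ← one_def, map_one]
    · rw [← map_pow, single_pow, pow_card_eq_one', one_pow, ← one_def, map_one]
  choose d b hdb using h1
  have hone : d 1 = 1 ∧ b 1 = 1 := by
    have := hdb 1
    rw [← one_def, map_one, one_def, single_inj] at this
    rcases this with ⟨h, h'⟩ | h
    · exact ⟨h.symm, h'.symm⟩
    · exact absurd h.1 one_ne_zero
  have hinv : ∀ g, b g * b g⁻¹ = 1 := by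
    intro g
    have : φ (single g 1) * φ (single g⁻¹ 1) = 1 := by
      rw [← map_mul, single_mul_single, mul_inv_cancel, one_mul, ← one_def, map_one]
    rw [hdb, hdb, single_mul_single, one_def, single_inj] at this
    rcases this with h | h
    · exact h.2
    · exact absurd h.2 one_ne_zero
  have hne : ∀ g, b g ≠ 0 := fun g h => by have := hinv g; simp [h] at this
  have hmul : ∀ g g', d (g * g') = d g * d g' ∧ b (g * g') = b g * b g' := by
    intro g g'
    have : φ (single g 1) * φ (single g' 1) = φ (single (g * g') 1) := by
      rw [← map_mul, single_mul_single, one_mul]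
    rw [hdb, hdb, hdb, single_mul_single, single_inj] at this
    rcases this with h | h
    · exact ⟨h.1.symm, h.2.symm⟩
    · exact absurd h.2 (hne _)
  refine ⟨{ toFun := d, map_one' := hone.1, map_mul' := fun g g' => (hmul g g').1 },
    { toFun := fun g => ⟨b g, b g⁻¹, hinv g, by rw [mul_comm]; exact hinv g⟩
      map_one' := Units.ext hone.2
      map_mul' := fun g g' => Units.ext (hmul g g').2 }, hdb⟩

lemma gr_twist {B G H : Type*} [CommRing B] [CommGroup G] [CommGroup H]
    (δ : G ≃* H) (β : G →* Bˣ) :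
    ∃ Θ : MonoidAlgebra B G ≃+* MonoidAlgebra B H,
      (∀ b, Θ (single 1 b) = single 1 b) ∧ ∀ g, Θ (single g 1) = single (δ g) (β g : B) := by
  let m₁ : G →* MonoidAlgebra B H :=
    { toFun := fun g => single (δ g) (β g : B)
      map_one' := by simp [one_def]
      map_mul' := fun g g' => by simp [single_mul_single] }
  let m₂ : H →* MonoidAlgebra B G :=
    { toFun := fun h => single (δ.symm h) ((β (δ.symm h))⁻¹ : Bˣ).val
      map_one' := by simp [one_def]
      map_mul' := fun g g' => by simp [single_mul_single, mul_comm] }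
  let F : MonoidAlgebra B G →+* MonoidAlgebra B H :=
    liftNCRingHom singleOneRingHom m₁ fun _ _ => mul_comm _ _
  let F' : MonoidAlgebra B H →+* MonoidAlgebra B G :=
    liftNCRingHom singleOneRingHom m₂ fun _ _ => mul_comm _ _
  have hF : ∀ g b, F (single g b) = single (δ g) (b * β g) := fun g b => by
    refine (liftNCRingHom_single _ _ _ _ _).trans ?_
    change single 1 b * single (δ g) (β g : B) = _
    rw [single_mul_single, one_mul]
  have hF' : ∀ h b, F' (single h b) = single (δ.symm h) (b * ((β (δ.symm h))⁻¹ : Bˣ).val) :=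
    fun g b => by
    refine (liftNCRingHom_single _ _ _ _ _).trans ?_
    change single 1 b * single (δ.symm g) _ = _
    rw [single_mul_single, one_mul]
  refine ⟨RingEquiv.ofRingHom F F' ?_ ?_, ?_, ?_⟩
  · apply ringHom_ext
    · intro r; simp [hF, hF']
    · intro r; simp [hF, hF']
  · apply ringHom_ext
    · intro r; simp [hF, hF']
    · intro r; simp [hF, hF']
  · intro b; simp [hF]
  · intro b; simp [hF]

/-- The augmentation map. -/
noncomputable def grAug (B G : Type*) [CommRing B] [CommGroup G] : MonoidAlgebra B G →+* B :=
  liftNCRingHom (RingHom.id B) (1 : G →* B) fun _ _ => mul_comm _ _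

lemma grAug_single {B G : Type*} [CommRing B] [CommGroup G] (g : G) (b : B) :
    grAug B G (single g b) = b := by
  refine (liftNCRingHom_single _ _ _ _ _).trans ?_
  simp

lemma gr_cancel_same {A B G : Type*} [CommRing A] [CommRing B] [CommGroup G]
    (φ : MonoidAlgebra A G ≃+* MonoidAlgebra B G) (hφ : ∀ g, φ (single g 1) = single g 1) :
    Nonempty (A ≃+* B) := by
  have hφ' : ∀ g, φ.symm (single g 1) = single g 1 := fun g => by
    rw [RingEquiv.symm_apply_eq, hφ]
  have k1 : ((grAug A G).comp (φ.symm : MonoidAlgebra B G →+* MonoidAlgebra A G)).comp (singleOneRingHom.comp (grAug B G)) =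
      (grAug A G).comp (φ.symm : MonoidAlgebra B G →+* MonoidAlgebra A G) := by
    apply ringHom_ext
    · intro r; simp [grAug_single]
    · intro g; simp [grAug_single, hφ', ← one_def]
  have k2 : ((grAug B G).comp (φ : MonoidAlgebra A G →+* MonoidAlgebra B G)).comp (singleOneRingHom.comp (grAug A G)) =
      (grAug B G).comp (φ : MonoidAlgebra A G →+* MonoidAlgebra B G) := by
    apply ringHom_ext
    · intro r; simp [grAug_single]
    · intro g; simp [grAug_single, hφ, ← one_def]
  refine ⟨RingEquiv.ofRingHom (((grAug B G).comp (φ : MonoidAlgebra A G →+* MonoidAlgebra B G)).comp singleOneRingHom)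
    (((grAug A G).comp (φ.symm : MonoidAlgebra B G →+* MonoidAlgebra A G)).comp singleOneRingHom) ?_ ?_⟩
  · ext b
    have := RingHom.congr_fun k2 (φ.symm (single 1 b))
    simpa [grAug_single] using this
  · ext b
    have := RingHom.congr_fun k1 (φ (single 1 b))
    simpa [grAug_single] using this

lemma gr_case_one {A B G H : Type*} [CommRing A] [CommRing B] [CommGroup G] [CommGroup H]
    (φ : MonoidAlgebra A G ≃+* MonoidAlgebra B H) (d : G ≃* H) (b : G →* Bˣ)
    (hφ : ∀ g, φ (single g 1) = single (d g) (b g : B)) : Nonempty (A ≃+* B) := by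
  obtain ⟨Θ, -, h2⟩ := gr_twist d b
  refine gr_cancel_same (φ.trans Θ.symm) fun g => ?_
  rw [RingEquiv.trans_apply, RingEquiv.symm_apply_eq, hφ, h2]

/-- The ideal generated by the elements `b g - 1`. -/
def grIdeal {B G : Type*} [CommRing B] [CommGroup G] (b : G →* Bˣ) : Ideal B :=
  Ideal.span (Set.range fun g => (b g : B) - 1)

lemma grIdeal_mk {B G : Type*} [CommRing B] [CommGroup G] (b : G →* Bˣ) (g : G) :
    Ideal.Quotient.mk (grIdeal b) (b g : B) = 1 := by
  rw [← map_one (Ideal.Quotient.mk (grIdeal b)), Ideal.Quotient.eq]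
  exact Ideal.subset_span ⟨g, rfl⟩

lemma grIdeal_le {B G S : Type*} [CommRing B] [CommRing S] [CommGroup G] (b : G →* Bˣ)
    (p : B →+* S) (hp : ∀ g, p (b g) = 1) : ∀ x ∈ grIdeal b, p x = 0 := by
  intro x hx
  have : grIdeal b ≤ RingHom.ker p := by
    rw [grIdeal, Ideal.span_le]
    rintro _ ⟨g, rfl⟩
    simp [RingHom.mem_ker, hp]
  exact this hx

section norm
variable {A B G H : Type*} [CommRing A] [CommRing B] [CommGroup G] [CommGroup H]
    (φ : MonoidAlgebra A G ≃+* MonoidAlgebra B H) (a : H →* Aˣ) (b : G →* Bˣ)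
    (ha : ∀ h, φ (single 1 (a h : A)) = single h 1)
    (hb : ∀ g, φ (single g 1) = single 1 (b g : B))

/-- The induced map on bases. -/
noncomputable def grP : B →+* A :=
  ((grAug A G).comp (φ.symm : MonoidAlgebra B H →+* MonoidAlgebra A G)).comp singleOneRingHom

lemma grP_apply (x : B) : grP φ x = grAug A G (φ.symm (single 1 x)) := rfl

lemma grP_b (hb : ∀ g, φ (single g 1) = single 1 (b g : B)) (g : G) : grP φ (b g) = 1 := by
  rw [grP_apply, ← hb, RingEquiv.symm_apply_apply, grAug_single]

lemma gr_norm_iso (ha : ∀ h, φ (single 1 (a h : A)) = single h 1)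
    (hb : ∀ g, φ (single g 1) = single 1 (b g : B)) :
    Nonempty (A ≃+* MonoidAlgebra (B ⧸ grIdeal b) H) := by
  let p' : (B ⧸ grIdeal b) →+* A :=
    Ideal.Quotient.lift _ (grP φ) (grIdeal_le b _ (grP_b φ b hb))
  let M : MonoidAlgebra B H →+* MonoidAlgebra (B ⧸ grIdeal b) H :=
    mapRingHom H (Ideal.Quotient.mk (grIdeal b))
  let F : A →+* MonoidAlgebra (B ⧸ grIdeal b) H :=
    (M.comp (φ : MonoidAlgebra A G →+* MonoidAlgebra B H)).comp singleOneRingHom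
  let W : MonoidAlgebra (B ⧸ grIdeal b) H →+* A :=
    liftNCRingHom p' ((Units.coeHom A).comp a) fun _ _ => mul_comm _ _
  have hW : ∀ h c, W (single h c) = p' c * a h := fun h c => liftNCRingHom_single _ _ _ _ _
  have hM : ∀ h c, M (single h c) = single h (Ideal.Quotient.mk (grIdeal b) c) :=
    fun h c => mapRingHom_single _ _ _
  have hFa : ∀ x, F x = M (φ (single 1 x)) := fun _ => rfl
  have ha' : ∀ h, φ.symm (single h 1) = single 1 (a h : A) := fun h => by
    rw [RingEquiv.symm_apply_eq, ha]
  have k1 : W.comp M = (grAug A G).comp (φ.symm : MonoidAlgebra B H →+* MonoidAlgebra A G) := by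
    apply ringHom_ext
    · intro r
      simp only [RingHom.comp_apply, hM, hW, map_one, Units.val_one, mul_one]
      rfl
    · intro h
      simp [hM, hW, ha', grAug_single]
  have k2 : (F.comp (grAug A G)) = M.comp (φ : MonoidAlgebra A G →+* MonoidAlgebra B H) := by
    apply ringHom_ext
    · intro r
      simp [hFa, grAug_single]
    · intro g
      simp [grAug_single, hb, hM, grIdeal_mk, one_def]
  refine ⟨RingEquiv.ofRingHom F W ?_ ?_⟩
  · apply ringHom_ext
    · intro c
      obtain ⟨x, rfl⟩ := Ideal.Quotient.mk_surjective c
      have e1 : W (single 1 (Ideal.Quotient.mk (grIdeal b) x)) = grP φ x := by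
        rw [hW, map_one, Units.val_one, mul_one]; rfl
      have := RingHom.congr_fun k2 (φ.symm (single 1 x))
      simp only [RingHom.comp_apply, RingHom.coe_coe, RingEquiv.apply_symm_apply] at this
      rw [RingHom.comp_apply, e1, grP_apply, this, hM]; rfl
    · intro h
      simp [hW, hFa, ha, hM]
  · ext x
    have := RingHom.congr_fun k1 (φ (single 1 x))
    simpa [grAug_single, hFa] using this

lemma gr_norm_base (ha : ∀ h, φ (single 1 (a h : A)) = single h 1)
    (hb : ∀ g, φ (single g 1) = single 1 (b g : B)) :
    Nonempty ((B ⧸ grIdeal b) ≃+* (A ⧸ grIdeal a)) := by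
  have ha' : ∀ h, φ.symm (single h 1) = single 1 (a h : A) := fun h => by
    rw [RingEquiv.symm_apply_eq, ha]
  have hb' : ∀ h, φ.symm (single 1 (b h : B)) = single h 1 := fun h => by
    rw [RingEquiv.symm_apply_eq, hb]
  let P : (B ⧸ grIdeal b) →+* (A ⧸ grIdeal a) :=
    Ideal.Quotient.lift _ ((Ideal.Quotient.mk _).comp (grP φ))
      (grIdeal_le b _ fun g => by simp [grP_b φ b hb])
  let Q : (A ⧸ grIdeal a) →+* (B ⧸ grIdeal b) :=
    Ideal.Quotient.lift _ ((Ideal.Quotient.mk _).comp (grP φ.symm))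
      (grIdeal_le a _ fun g => by simp [grP_b φ.symm a ha'])
  have k1 : ((Ideal.Quotient.mk (grIdeal b)).comp (grP φ.symm)).comp (grAug A G) =
      (Ideal.Quotient.mk (grIdeal b)).comp
        ((grAug B H).comp (φ : MonoidAlgebra A G →+* MonoidAlgebra B H)) := by
    apply ringHom_ext
    · intro r
      simp [grAug_single, grP_apply]
    · intro r
      simp [grAug_single, hb, grIdeal_mk]
  have k2 : ((Ideal.Quotient.mk (grIdeal a)).comp (grP φ)).comp (grAug B H) =
      (Ideal.Quotient.mk (grIdeal a)).comp
        ((grAug A G).comp (φ.symm : MonoidAlgebra B H →+* MonoidAlgebra A G)) := by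
    apply ringHom_ext
    · intro r
      simp [grAug_single, grP_apply]
    · intro r
      simp [grAug_single, ha', grIdeal_mk]
  refine ⟨RingEquiv.ofRingHom P Q ?_ ?_⟩
  · apply Ideal.Quotient.ringHom_ext
    ext x
    have := RingHom.congr_fun k2 (φ (single 1 x))
    simpa [grAug_single, P, Q, grP_apply] using this
  · apply Ideal.Quotient.ringHom_ext
    ext x
    have := RingHom.congr_fun k1 (φ.symm (single 1 x))
    simpa [grAug_single, P, Q, grP_apply] using this

end norm

lemma gr_case_two {A : Type*} {B : Type v} {G H : Type*} [CommRing A] [CommRing B]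
    [CommGroup G] [CommGroup H] [Finite G] [Finite H]
    (φ : MonoidAlgebra A G ≃+* MonoidAlgebra B H) (d : G →* H) (b : G →* Bˣ)
    (hφ : ∀ g, φ (single g 1) = single (d g) (b g : B)) (d' : H →* G) (a : H →* Aˣ)
    (hφ' : ∀ h, φ.symm (single h 1) = single (d' h) (a h : A))
    (hfix : ∀ g, d' (d g) = g → g = 1) :
    ∃ (C : Type v) (_ : CommRing C), Nonempty (A ≃+* MonoidAlgebra C H) ∧
      Nonempty (B ≃+* MonoidAlgebra C G) := by
  have hfix' : ∀ h, d (d' h) = h → h = 1 := by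
    intro h hh
    have := hfix (d' h) (by rw [hh])
    rw [← hh, this, map_one]
  let eG : G →* G := MonoidHom.id G * (d'.comp d)⁻¹
  let eH : H →* H := MonoidHom.id H * (d.comp d')⁻¹
  have iG : Function.Injective eG := by
    rw [injective_iff_map_eq_one]
    intro g hg
    apply hfix
    have : g * (d' (d g))⁻¹ = 1 := hg
    exact (mul_inv_eq_one.1 this).symm
  have iH : Function.Injective eH := by
    rw [injective_iff_map_eq_one]
    intro g hg
    apply hfix'
    have : g * (d (d' g))⁻¹ = 1 := hg
    exact (mul_inv_eq_one.1 this).symm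
  let δG : G ≃* G := MulEquiv.ofBijective eG (Finite.injective_iff_bijective.1 iG)
  let δH : H ≃* H := MulEquiv.ofBijective eH (Finite.injective_iff_bijective.1 iH)
  have hδG : ∀ g, δG g = g * (d' (d g))⁻¹ := fun _ => rfl
  have hδH : ∀ g, δH g = g * (d (d' g))⁻¹ := fun _ => rfl
  obtain ⟨ΘG, G1, G2⟩ := gr_twist δG ((a.comp d)⁻¹)
  obtain ⟨ΘH, H1, H2⟩ := gr_twist δH ((b.comp d')⁻¹)
  have key1 : ∀ h, φ (single 1 (a h : A)) = ΘH (single h 1) := by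
    intro h
    have e1 : single h 1 = φ (single 1 (a h : A)) * single (d (d' h)) (b (d' h) : B) := by
      rw [← hφ, ← map_mul, single_mul_single, one_mul, mul_one, ← hφ', RingEquiv.apply_symm_apply]
    have e2 : single (d (d' h)) (b (d' h) : B) *
        single (d (d' h))⁻¹ (((b (d' h))⁻¹ : Bˣ) : B) = 1 := by
      rw [single_mul_single, mul_inv_cancel, Units.mul_inv, one_def]
    have e3 : ΘH (single h 1) = single h 1 *
        single (d (d' h))⁻¹ (((b (d' h))⁻¹ : Bˣ) : B) := by
      rw [H2, hδH, single_mul_single, one_mul]; rfl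
    rw [e3, e1, mul_assoc, e2, mul_one]
  have key2 : ∀ g, φ (ΘG (single g 1)) = single 1 (b g : B) := by
    intro g
    have e1 : single g 1 = φ.symm (single 1 (b g : B)) * single (d' (d g)) (a (d g) : A) := by
      rw [← hφ', ← map_mul, single_mul_single, one_mul, mul_one, ← hφ, RingEquiv.symm_apply_apply]
    have e2 : single (d' (d g)) (a (d g) : A) *
        single (d' (d g))⁻¹ (((a (d g))⁻¹ : Aˣ) : A) = 1 := by
      rw [single_mul_single, mul_inv_cancel, Units.mul_inv, one_def]
    have e3 : ΘG (single g 1) = single g 1 *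
        single (d' (d g))⁻¹ (((a (d g))⁻¹ : Aˣ) : A) := by
      rw [G2, hδG, single_mul_single, one_mul]; rfl
    rw [e3, e1, mul_assoc, e2, mul_one, RingEquiv.apply_symm_apply]
  let ψ := (ΘG.trans φ).trans ΘH.symm
  have ha : ∀ h, ψ (single 1 (a h : A)) = single h 1 := by
    intro h
    simp only [ψ, RingEquiv.trans_apply, G1, key1, RingEquiv.symm_apply_apply]
  have hb : ∀ g, ψ (single g 1) = single 1 (b g : B) := by
    intro g
    simp only [ψ, RingEquiv.trans_apply, key2]
    rw [RingEquiv.symm_apply_eq, H1]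
  obtain ⟨i1⟩ := gr_norm_iso ψ a b ha hb
  obtain ⟨i2⟩ := gr_norm_iso ψ.symm b a (fun g => by rw [RingEquiv.symm_apply_eq, hb])
    (fun g => by rw [RingEquiv.symm_apply_eq, ha])
  obtain ⟨i3⟩ := gr_norm_base ψ a b ha hb
  exact ⟨B ⧸ grIdeal b, inferInstance, ⟨i1⟩, ⟨i2.trans (mapRingEquiv G i3.symm)⟩⟩

end isosec

section prodsec
open MonoidAlgebra

/-- Group rings commute with finite products of base rings. -/
noncomputable def grProd (R S G : Type*) [CommRing R] [CommRing S] [CommGroup G] :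
    MonoidAlgebra (R × S) G ≃+* MonoidAlgebra R G × MonoidAlgebra S G :=
  RingEquiv.ofBijective
    (RingHom.prod (mapRingHom G (RingHom.fst R S)) (mapRingHom G (RingHom.snd R S)))
    (by
      constructor
      · intro x y hxy
        have h1 := congrArg Prod.fst hxy
        have h2 := congrArg Prod.snd hxy
        ext g
        · simpa using congrArg (fun z => z.coeff g) h1
        · simpa using congrArg (fun z => z.coeff g) h2
      · rintro ⟨x, y⟩
        refine ⟨ofCoeff (Finsupp.zipWith Prod.mk rfl x.coeff y.coeff), ?_⟩
        ext g <;> simp)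

lemma grProd_one_zero (R S G : Type*) [CommRing R] [CommRing S] [CommGroup G] :
    grProd R S G (single 1 (1, 0)) = (1, 0) := by
  change (mapRingHom G (RingHom.fst R S) (single 1 (1, 0)),
    mapRingHom G (RingHom.snd R S) (single 1 (1, 0))) = _
  simp [one_def]

lemma gr_split_iso {R₁ R₂ S₁ S₂ : Type*} [CommRing R₁] [CommRing R₂] [CommRing S₁] [CommRing S₂]
    (ψ : R₁ × R₂ ≃+* S₁ × S₂) (h : ψ (1, 0) = (1, 0)) :
    Nonempty (R₁ ≃+* S₁) ∧ Nonempty (R₂ ≃+* S₂) := by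
  have h' : ψ (0, 1) = (0, 1) := by
    have : ψ ((1, 0) + (0, 1)) = 1 := by
      rw [← map_one ψ]; congr 1; ext <;> simp
    rw [map_add, h] at this
    have e : ψ (0, 1) = 1 - (1, 0) := by rw [← this]; ring
    rw [e]; ext <;> simp
  have hs : ψ.symm (1, 0) = (1, 0) := by rw [RingEquiv.symm_apply_eq, h]
  have hs' : ψ.symm (0, 1) = (0, 1) := by rw [RingEquiv.symm_apply_eq, h']
  have m1 : ∀ x : R₁, ψ (x, 0) = ((ψ (x, 0)).1, 0) := by
    intro x
    have : ψ ((1, 0) * (x, 0)) = (1, 0) * ψ (x, 0) := by rw [map_mul, h]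
    simp only [Prod.mk_mul_mk, one_mul, mul_zero] at this
    conv_lhs => rw [this]
    ext <;> simp
  have m2 : ∀ x : R₂, ψ (0, x) = (0, (ψ (0, x)).2) := by
    intro x
    have : ψ ((0, 1) * (0, x)) = (0, 1) * ψ (0, x) := by rw [map_mul, h']
    simp only [Prod.mk_mul_mk, one_mul, mul_zero] at this
    conv_lhs => rw [this]
    ext <;> simp
  have n1 : ∀ x : S₁, ψ.symm (x, 0) = ((ψ.symm (x, 0)).1, 0) := by
    intro x
    have : ψ.symm ((1, 0) * (x, 0)) = (1, 0) * ψ.symm (x, 0) := by rw [map_mul, hs]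
    simp only [Prod.mk_mul_mk, one_mul, mul_zero] at this
    conv_lhs => rw [this]
    ext <;> simp
  have n2 : ∀ x : S₂, ψ.symm (0, x) = (0, (ψ.symm (0, x)).2) := by
    intro x
    have : ψ.symm ((0, 1) * (0, x)) = (0, 1) * ψ.symm (0, x) := by rw [map_mul, hs']
    simp only [Prod.mk_mul_mk, one_mul, mul_zero] at this
    conv_lhs => rw [this]
    ext <;> simp
  refine ⟨⟨{ toFun := fun x => (ψ (x, 0)).1
             invFun := fun x => (ψ.symm (x, 0)).1
             left_inv := fun x => by simp [← m1]
             right_inv := fun x => by simp [← n1]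
             map_mul' := fun x y => by
               rw [← Prod.fst_mul, ← map_mul]; simp
             map_add' := fun x y => by
               rw [← Prod.fst_add, ← map_add]; simp }⟩,
          ⟨{ toFun := fun x => (ψ (0, x)).2
             invFun := fun x => (ψ.symm (0, x)).2
             left_inv := fun x => by simp [← m2]
             right_inv := fun x => by simp [← n2]
             map_mul' := fun x y => by
               rw [← Prod.snd_mul, ← map_mul]; simp
             map_add' := fun x y => by
               rw [← Prod.snd_add, ← map_add]; simp }⟩⟩

/-- Splitting a ring along an idempotent. -/
lemma gr_idem_split {A : Type u} [CommRing A] {e : A} (he : IsIdempotentElem e) :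
    ∃ (A₁ A₂ : Type u) (_ : CommRing A₁) (_ : CommRing A₂) (i : A ≃+* A₁ × A₂), i e = (1, 0) := by
  have hcop : IsCoprime (Ideal.span {1 - e}) (Ideal.span {e}) := by
    rw [Ideal.isCoprime_span_singleton_iff]
    exact ⟨1, 1, by ring⟩
  have hbot : Ideal.span {1 - e} * Ideal.span {e} = (⊥ : Ideal A) := by
    rw [Ideal.span_singleton_mul_span_singleton, Ideal.span_singleton_eq_bot]
    have : e * e = e := he
    linear_combination -this
  let i := ((RingEquiv.quotientBot A).symm.trans (Ideal.quotEquivOfEq hbot.symm)).trans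
    (Ideal.quotientMulEquivQuotientProd _ _ hcop)
  refine ⟨_, _, _, _, i, ?_⟩
  change (Ideal.Quotient.mk (Ideal.span {1 - e}) e, Ideal.Quotient.mk (Ideal.span {e}) e) = _
  ext
  · change Ideal.Quotient.mk (Ideal.span {1 - e}) e = 1
    rw [← map_one (Ideal.Quotient.mk _), eq_comm, Ideal.Quotient.eq]
    exact Ideal.mem_span_singleton_self _
  · change Ideal.Quotient.mk (Ideal.span {e}) e = 0
    rw [Ideal.Quotient.eq_zero_iff_mem]
    exact Ideal.mem_span_singleton_self _

lemma gr_order_of_inj {A C : Type*} [CommRing A] [Module.Free ℤ A] [Module.Finite ℤ A] [CommRing C]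
    (f : C →+ A) (hf : Function.Injective f) : Module.Free ℤ C ∧ Module.Finite ℤ C := by
  have h1 : Module.Finite ℤ C := Module.Finite.of_injective f.toIntLinearMap hf
  have h2 : Module.IsTorsionFree ℤ C :=
    Function.Injective.moduleIsTorsionFree f hf (fun n x => map_zsmul f n x)
  exact ⟨inferInstance, h1⟩

lemma gr_order_prod {A A₁ A₂ : Type*} [CommRing A] [Module.Free ℤ A] [Module.Finite ℤ A]
    [IsReduced A] [CommRing A₁] [CommRing A₂] (i : A ≃+* A₁ × A₂) :
    (Module.Free ℤ A₁ ∧ Module.Finite ℤ A₁ ∧ IsReduced A₁) ∧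
    (Module.Free ℤ A₂ ∧ Module.Finite ℤ A₂ ∧ IsReduced A₂) := by
  have h1 := gr_order_of_inj ((i.symm : A₁ × A₂ →+ A).comp (AddMonoidHom.inl A₁ A₂))
    (i.symm.injective.comp (Prod.mk_left_injective (0 : A₂)))
  have h2 := gr_order_of_inj ((i.symm : A₁ × A₂ →+ A).comp (AddMonoidHom.inr A₁ A₂))
    (i.symm.injective.comp (Prod.mk_right_injective (0 : A₁)))
  have hr : IsReduced (A₁ × A₂) := isReduced_of_injective i.symm i.symm.injective
  refine ⟨⟨h1.1, h1.2, ⟨fun x hx => ?_⟩⟩, ⟨h2.1, h2.2, ⟨fun x hx => ?_⟩⟩⟩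
  · obtain ⟨n, hn⟩ := hx
    have : IsNilpotent ((x, 0) : A₁ × A₂) := ⟨n + 1, by ext <;> simp [pow_succ, hn]⟩
    exact congrArg Prod.fst this.eq_zero
  · obtain ⟨n, hn⟩ := hx
    have : IsNilpotent ((0, x) : A₁ × A₂) := ⟨n + 1, by ext <;> simp [pow_succ, hn]⟩
    exact congrArg Prod.snd this.eq_zero

lemma gr_split_pair {A : Type u} {B : Type v} {G H : Type*}
    [CommRing A] [Module.Free ℤ A] [Module.Finite ℤ A] [IsReduced A]
    [CommRing B] [Module.Free ℤ B] [Module.Finite ℤ B] [IsReduced B]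
    [CommGroup G] [Finite G] [CommGroup H] [Finite H]
    (φ : MonoidAlgebra A G ≃+* MonoidAlgebra B H) {e : A} (he : IsIdempotentElem e)
    (he0 : e ≠ 0) (he1 : e ≠ 1) :
    ∃ (A₁ A₂ : Type u) (_ : CommRing A₁) (_ : CommRing A₂) (_ : A ≃+* A₁ × A₂)
      (B₁ B₂ : Type v) (_ : CommRing B₁) (_ : CommRing B₂) (_ : B ≃+* B₁ × B₂),
      Nontrivial A₁ ∧ Nontrivial A₂ ∧ Nonempty (MonoidAlgebra A₁ G ≃+* MonoidAlgebra B₁ H) ∧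
      Nonempty (MonoidAlgebra A₂ G ≃+* MonoidAlgebra B₂ H) := by
  have he' : e * e = e := he
  have hi : IsIdempotentElem (φ (single 1 e)) := by
    rw [IsIdempotentElem, ← map_mul, single_mul_single, he', one_mul]
  obtain ⟨f, hf⟩ := gr_idem hi
  have hfi : IsIdempotentElem f := by
    rw [hf, IsIdempotentElem, single_mul_single, one_mul, single_right_inj] at hi
    exact hi
  obtain ⟨A₁, A₂, _, _, i, hie⟩ := gr_idem_split he
  obtain ⟨B₁, B₂, _, _, j, hjf⟩ := gr_idem_split hfi
  let ψ := (((grProd A₁ A₂ G).symm.trans (mapRingEquiv G i.symm)).trans φ).trans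
    ((mapRingEquiv H j).trans (grProd B₁ B₂ H))
  have hψ : ψ (1, 0) = (1, 0) := by
    have e1 : (grProd A₁ A₂ G).symm (1, 0) = single 1 (1, 0) := by
      rw [RingEquiv.symm_apply_eq, grProd_one_zero]
    have e2 : i.symm (1, 0) = e := by rw [RingEquiv.symm_apply_eq, hie]
    simp only [ψ, RingEquiv.trans_apply, e1, mapRingEquiv_single, e2, hf, hjf, grProd_one_zero]
  obtain ⟨k1, k2⟩ := gr_split_iso ψ hψ
  refine ⟨A₁, A₂, _, _, i, B₁, B₂, _, _, j, ?_, ?_, k1, k2⟩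
  · by_contra hn
    rw [not_nontrivial_iff_subsingleton] at hn
    apply he0
    apply i.injective
    rw [hie, map_zero]
    ext
    · exact Subsingleton.elim _ _
    · rfl
  · by_contra hn
    rw [not_nontrivial_iff_subsingleton] at hn
    apply he1
    apply i.injective
    rw [hie, map_one]
    ext
    · rfl
    · exact Subsingleton.elim _ _

/-- Reduction to connected orders. -/
lemma gr_induct {G H : Type*} [CommGroup G] [Finite G] [CommGroup H] [Finite H]
    (Q : ∀ (A : Type u) [CommRing A] (B : Type v) [CommRing B], Prop)
    (hzero : ∀ (A : Type u) [CommRing A] (B : Type v) [CommRing B],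
      Subsingleton A → Subsingleton B → Q A B)
    (hconn : ∀ (A : Type u) [CommRing A] (B : Type v) [CommRing B]
      [Module.Free ℤ A] [Module.Finite ℤ A] [IsReduced A] [Nontrivial A]
      [Module.Free ℤ B] [Module.Finite ℤ B] [IsReduced B] [Nontrivial B],
      (∀ e : A, IsIdempotentElem e → e = 0 ∨ e = 1) →
      (∀ e : B, IsIdempotentElem e → e = 0 ∨ e = 1) →
      (MonoidAlgebra A G ≃+* MonoidAlgebra B H) → Q A B)
    (hprod : ∀ (A A₁ A₂ : Type u) [CommRing A] [CommRing A₁] [CommRing A₂]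
      (B B₁ B₂ : Type v) [CommRing B] [CommRing B₁] [CommRing B₂],
      (A ≃+* A₁ × A₂) → (B ≃+* B₁ × B₂) → Q A₁ B₁ → Q A₂ B₂ → Q A B) :
    ∀ (n : ℕ) (A : Type u) [CommRing A] (B : Type v) [CommRing B]
      [Module.Free ℤ A] [Module.Finite ℤ A] [IsReduced A]
      [Module.Free ℤ B] [Module.Finite ℤ B] [IsReduced B],
      Module.finrank ℤ A = n → (MonoidAlgebra A G ≃+* MonoidAlgebra B H) → Q A B := by
  intro n
  induction n using Nat.strong_induction_on with
  | _ n ih =>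
  intro A _ B _ _ _ _ _ _ _ hn φ
  rcases subsingleton_or_nontrivial A with hA | hA
  · have h1 : Subsingleton (MonoidAlgebra B H) := φ.symm.toEquiv.subsingleton
    have h2 : Subsingleton B :=
      (single_right_injective (R := B) (m := (1 : H))).subsingleton
    exact hzero A B hA h2
  have hBn : Nontrivial B := by
    by_contra hB
    rw [not_nontrivial_iff_subsingleton] at hB
    have h1 : Subsingleton (MonoidAlgebra A G) := φ.toEquiv.subsingleton
    exact not_subsingleton _ h1
  by_cases hAc : ∃ e : A, IsIdempotentElem e ∧ e ≠ 0 ∧ e ≠ 1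
  · obtain ⟨e, he, he0, he1⟩ := hAc
    obtain ⟨A₁, A₂, _, _, i, B₁, B₂, _, _, j, _, _, ⟨k1⟩, ⟨k2⟩⟩ := gr_split_pair φ he he0 he1
    obtain ⟨⟨_, _, _⟩, ⟨_, _, _⟩⟩ := gr_order_prod i
    obtain ⟨⟨_, _, _⟩, ⟨_, _, _⟩⟩ := gr_order_prod j
    have hr : Module.finrank ℤ A = Module.finrank ℤ A₁ + Module.finrank ℤ A₂ := by
      rw [← Module.finrank_prod]
      exact LinearEquiv.finrank_eq i.toAddEquiv.toIntLinearEquiv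
    have p1 : 0 < Module.finrank ℤ A₁ := Module.finrank_pos
    have p2 : 0 < Module.finrank ℤ A₂ := Module.finrank_pos
    exact hprod A A₁ A₂ B B₁ B₂ i j (ih _ (by omega) A₁ B₁ rfl k1) (ih _ (by omega) A₂ B₂ rfl k2)
  · push Not at hAc
    refine hconn A B (fun e he => ?_) (fun f hf => ?_) φ
    · by_cases h : e = 0
      · exact Or.inl h
      · exact Or.inr (hAc e he h)
    · have hf' : f * f = f := hf
      have hi : IsIdempotentElem (φ.symm (single 1 f)) := by
        rw [IsIdempotentElem, ← map_mul, single_mul_single, hf', one_mul]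
      obtain ⟨e, hfe⟩ := gr_idem hi
      have he : IsIdempotentElem e := by
        rw [hfe, IsIdempotentElem, single_mul_single, one_mul, single_right_inj] at hi
        exact hi
      rw [RingEquiv.symm_apply_eq] at hfe
      by_cases h : e = 0
      · left
        rw [h, single_zero, map_zero, single_eq_zero] at hfe
        exact hfe
      · right
        rw [hAc e he h, ← one_def, map_one, one_def, single_right_inj] at hfe
        exact hfe

/-- Group rings of reduced orders are reduced orders. -/
lemma gr_order_groupring (A G : Type*) [CommRing A] [Module.Free ℤ A] [Module.Finite ℤ A]
    [IsReduced A] [CommGroup G] [Finite G] :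
    Module.Free ℤ (MonoidAlgebra A G) ∧ Module.Finite ℤ (MonoidAlgebra A G) ∧
      IsReduced (MonoidAlgebra A G) := by
  have := Fintype.ofFinite G
  let L : (G →₀ A) ≃ₗ[ℤ] MonoidAlgebra A G :=
    (coeffAddEquiv (R := A) (M := G)).symm.toIntLinearEquiv
  refine ⟨Module.Free.of_equiv L, Module.Finite.equiv L, ⟨fun x hx => ?_⟩⟩
  ext k
  refine gr_eq_zero fun σ => ?_
  refine gr_sep (fun k => σ (x.coeff k)) (fun χ => ?_) k
  let τ : MonoidAlgebra A G →+* ℂ := liftNCRingHom σ χ fun _ _ => mul_comm _ _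
  have hτ : τ x = ∑ k, σ (x.coeff k) * χ k := by
    conv_lhs => rw [← sum_coeff_single x]
    rw [Finsupp.sum_fintype _ _ (by simp), map_sum]
    refine Finset.sum_congr rfl fun k _ => ?_
    exact liftNCRingHom_single _ _ _ _ _
  rw [← hτ]
  exact (hx.map τ).eq_zero

end prodsec

section grpsec

/-- `P` is (isomorphic to) a direct factor of both `G` and `H`. -/
def GrCS (P G H : Type*) [CommGroup P] [CommGroup G] [CommGroup H] : Prop :=
  ∃ (i : P →* G) (r : G →* P) (j : P →* H) (s : H →* P),
    (∀ p, r (i p) = p) ∧ (∀ p, s (j p) = p)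

lemma gr_idem_pow {M : Type*} [Monoid M] [Finite M] (f : M) :
    ∃ m : ℕ, f ^ (m + 1) * f ^ (m + 1) = f ^ (m + 1) := by
  obtain ⟨a, b, hab, h⟩ := Finite.exists_ne_map_eq_of_infinite (fun n : ℕ => f ^ n)
  wlog hlt : a < b generalizing a b
  · exact this b a hab.symm h.symm (by omega)
  obtain ⟨k, rfl⟩ : ∃ k, b = a + (k + 1) := ⟨b - a - 1, by omega⟩
  have h1 : ∀ c, f ^ (a + c) = f ^ (a + c + (k + 1)) := by
    intro c
    rw [pow_add, h, ← pow_add]; congr 1; omega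
  have h2 : ∀ j c, f ^ (a + c) = f ^ (a + c + j * (k + 1)) := by
    intro j
    induction j with
    | zero => intro c; simp
    | succ j ih =>
      intro c
      rw [ih c, add_assoc a c, h1]; congr 1; ring
  obtain ⟨c, hc⟩ : ∃ c, (a + 1) * (k + 1) = a + c := ⟨(a + 1) * (k + 1) - a, by
    have : a ≤ (a + 1) * (k + 1) := by nlinarith
    omega⟩
  refine ⟨(a + 1) * (k + 1) - 1, ?_⟩
  have h3 : (a + 1) * (k + 1) - 1 + 1 = (a + 1) * (k + 1) := by
    have : 0 < (a + 1) * (k + 1) := by positivity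
    omega
  rw [h3, ← pow_add]
  conv_rhs => rw [hc, h2 (a + 1) c, ← hc]

lemma gr_retract {G H : Type*} [CommGroup G] [CommGroup H] [Finite G]
    (d : G →* H) (d' : H →* G) {x : G} (hx : x ≠ 1) (hfix : d' (d x) = x) :
    ∃ P : Subgroup G, Nontrivial P ∧ GrCS P G H ∧ (P = ⊤ → Function.Injective d) := by
  let f : Monoid.End G := d'.comp d
  have : Finite (Monoid.End G) := Finite.of_injective _ (DFunLike.coe_injective (F := G →* G))
  obtain ⟨m, hm⟩ := gr_idem_pow f
  have hid : ∀ y, (f ^ (m + 1)) ((f ^ (m + 1)) y) = (f ^ (m + 1)) y := fun y =>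
    DFunLike.congr_fun hm y
  let e : G →* G := f ^ (m + 1)
  have he : ∀ y, e (e y) = e y := hid
  have hem : ∀ y, (f ^ m : Monoid.End G) (d' (d y)) = e y := fun y =>
    DFunLike.congr_fun (pow_succ f m).symm y
  have hfx : ∀ k : ℕ, (f ^ k : Monoid.End G) x = x := by
    intro k
    induction k with
    | zero => rfl
    | succ k ih =>
      rw [pow_succ]
      change (f ^ k : Monoid.End G) (d' (d x)) = x
      rw [hfix, ih]
  have hr : ∀ p : e.range, e.rangeRestrict (p : G) = p := by
    rintro ⟨_, y, rfl⟩
    exact Subtype.ext (he y)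
  let fm : G →* G := f ^ m
  have hs : ∀ p : e.range, e.rangeRestrict (fm (d' (d (p : G)))) = p := by
    intro p
    have : fm (d' (d (p : G))) = e p := hem p
    rw [this]
    have h2 : e (p : G) = p := congrArg Subtype.val (hr p)
    rw [h2, hr]
  refine ⟨e.range, ?_, ⟨e.range.subtype, e.rangeRestrict, d.comp e.range.subtype,
    (e.rangeRestrict.comp fm).comp d', hr, hs⟩, ?_⟩
  · refine ⟨⟨⟨x, x, hfx _⟩, 1, fun h => hx (congrArg Subtype.val h)⟩⟩
  · intro ht a b hab
    have ha := hs ⟨a, ht ▸ Subgroup.mem_top a⟩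
    have hb := hs ⟨b, ht ▸ Subgroup.mem_top b⟩
    simp only [hab] at ha
    rw [ha] at hb
    exact congrArg Subtype.val hb

lemma gr_grp_split {P G : Type*} [CommGroup P] [CommGroup G] (i : P →* G) (r : G →* P)
    (h : ∀ p, r (i p) = p) : Nonempty (G ≃* P × r.ker) := by
  refine ⟨{ toFun := fun g => (r g, ⟨g * (i (r g))⁻¹, by simp [MonoidHom.mem_ker, h]⟩)
            invFun := fun q => i q.1 * q.2
            left_inv := fun g => by simp
            right_inv := ?_
            map_mul' := ?_ }⟩
  · rintro ⟨p, k, hk⟩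
    have hk' : r k = 1 := hk
    ext <;> simp [h, hk']
  · intro a b
    ext
    · simp
    · change a * b * (i (r (a * b)))⁻¹ = a * (i (r a))⁻¹ * (b * (i (r b))⁻¹)
      rw [map_mul, map_mul, mul_inv, mul_mul_mul_comm]

/-- Gluing a common factor back. -/
def gr_grp_glue {I J G H P K L : Type*} [CommGroup I] [CommGroup J] [CommGroup G] [CommGroup H]
    [CommGroup P] [CommGroup K] [CommGroup L] (eG : G ≃* P × K) (eH : H ≃* P × L)
    (ρ : I × K ≃* J × L) : I × G ≃* J × H :=
  let m1 : I × G ≃* I × (K × P) :=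
    MulEquiv.prodCongr (MulEquiv.refl I) (eG.trans MulEquiv.prodComm)
  let m2 : I × (K × P) ≃* (I × K) × P := MulEquiv.prodAssoc.symm
  let m3 : (I × K) × P ≃* (J × L) × P := MulEquiv.prodCongr ρ (MulEquiv.refl P)
  let m4 : (J × L) × P ≃* J × (L × P) := MulEquiv.prodAssoc
  let m5 : J × (L × P) ≃* J × H :=
    MulEquiv.prodCongr (MulEquiv.refl J) (MulEquiv.prodComm.trans eH.symm)
  (((m1.trans m2).trans m3).trans m4).trans m5

lemma GrCS.trans {P₀ P G H : Type*} [CommGroup P₀] [CommGroup P] [CommGroup G] [CommGroup H]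
    (h₀ : GrCS P₀ P P) (h : GrCS P G H) : GrCS P₀ G H := by
  obtain ⟨i₀, r₀, j₀, s₀, h1, h2⟩ := h₀
  obtain ⟨i, r, j, s, h3, h4⟩ := h
  exact ⟨i.comp i₀, r₀.comp r, j.comp j₀, s₀.comp s, by simp [h1, h3], by simp [h2, h4]⟩

end grpsec

section finalsec
open MonoidAlgebra

/-- The case without common direct factors. -/
lemma gr_no_common {A : Type u} {B : Type v} {G : Type w} {H : Type x}
    [CommRing A] [Module.Free ℤ A] [Module.Finite ℤ A] [IsReduced A]
    [CommRing B] [Module.Free ℤ B] [Module.Finite ℤ B] [IsReduced B]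
    [CommGroup G] [Finite G] [CommGroup H] [Finite H]
    (hno : ∀ P : Subgroup G, Nontrivial P → ¬ GrCS P G H)
    (φ : MonoidAlgebra A G ≃+* MonoidAlgebra B H) :
    ∃ (C : Type v) (_ : CommRing C), Nonempty (A ≃+* MonoidAlgebra C H) ∧
      Nonempty (B ≃+* MonoidAlgebra C G) := by
  refine gr_induct (G := G) (H := H) (fun (A : Type u) _ (B : Type v) _ =>
    ∃ (C : Type v) (_ : CommRing C), Nonempty (A ≃+* MonoidAlgebra C H) ∧
      Nonempty (B ≃+* MonoidAlgebra C G)) ?_ ?_ ?_ _ A B rfl φ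
  · intro A _ B _ hA hB
    have z1 : Subsingleton (MonoidAlgebra B H) := ⟨fun a b => by
      ext; exact Subsingleton.elim _ _⟩
    have z2 : Subsingleton (MonoidAlgebra B G) := ⟨fun a b => by
      ext; exact Subsingleton.elim _ _⟩
    refine ⟨B, inferInstance, ⟨?_⟩, ⟨?_⟩⟩
    · exact { toFun := fun _ => 0, invFun := fun _ => 0,
              left_inv := fun _ => Subsingleton.elim _ _
              right_inv := fun _ => Subsingleton.elim _ _
              map_mul' := fun _ _ => Subsingleton.elim _ _
              map_add' := fun _ _ => Subsingleton.elim _ _ }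
    · exact { toFun := fun _ => 0, invFun := fun _ => 0,
              left_inv := fun _ => Subsingleton.elim _ _
              right_inv := fun _ => Subsingleton.elim _ _
              map_mul' := fun _ _ => Subsingleton.elim _ _
              map_add' := fun _ _ => Subsingleton.elim _ _ }
  · intro A _ B _ _ _ _ _ _ _ _ _ hA hB φ
    obtain ⟨d, b, hφ⟩ := gr_degree hB (φ : MonoidAlgebra A G →+* MonoidAlgebra B H)
    obtain ⟨d', a, hφ'⟩ := gr_degree hA (φ.symm : MonoidAlgebra B H →+* MonoidAlgebra A G)
    refine gr_case_two φ d b hφ d' a hφ' fun g hg => ?_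
    by_contra hne
    obtain ⟨P, hP, hcs, -⟩ := gr_retract d d' hne hg
    exact hno P hP hcs
  · rintro A A₁ A₂ _ _ _ B B₁ B₂ _ _ _ i j ⟨C₁, _, ⟨k₁⟩, ⟨l₁⟩⟩ ⟨C₂, _, ⟨k₂⟩, ⟨l₂⟩⟩
    exact ⟨C₁ × C₂, inferInstance,
      ⟨(i.trans (RingEquiv.prodCongr k₁ k₂)).trans (grProd C₁ C₂ H).symm⟩,
      ⟨(j.trans (RingEquiv.prodCongr l₁ l₂)).trans (grProd C₁ C₂ G).symm⟩⟩

/-- Cancellation of a minimal common direct factor. -/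
lemma gr_cancel_min {A : Type u} {B : Type v} {P : Type*}
    [CommRing A] [Module.Free ℤ A] [Module.Finite ℤ A] [IsReduced A]
    [CommRing B] [Module.Free ℤ B] [Module.Finite ℤ B] [IsReduced B]
    [CommGroup P] [Finite P]
    (hmin : ∀ P₀ : Subgroup P, Nontrivial P₀ → GrCS P₀ P P → P₀ = ⊤)
    (φ : MonoidAlgebra A P ≃+* MonoidAlgebra B P) : Nonempty (A ≃+* B) := by
  refine gr_induct (G := P) (H := P) (fun (A : Type u) _ (B : Type v) _ =>
    Nonempty (A ≃+* B)) ?_ ?_ ?_ _ A B rfl φ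
  · intro A _ B _ hA hB
    exact ⟨{ toFun := fun _ => 0, invFun := fun _ => 0,
             left_inv := fun _ => Subsingleton.elim _ _
             right_inv := fun _ => Subsingleton.elim _ _
             map_mul' := fun _ _ => Subsingleton.elim _ _
             map_add' := fun _ _ => Subsingleton.elim _ _ }⟩
  · intro A _ B _ _ _ _ _ _ _ _ _ hA hB φ
    obtain ⟨d, b, hφ⟩ := gr_degree hB (φ : MonoidAlgebra A P →+* MonoidAlgebra B P)
    obtain ⟨d', a, hφ'⟩ := gr_degree hA (φ.symm : MonoidAlgebra B P →+* MonoidAlgebra A P)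
    by_cases hfix : ∀ g, d' (d g) = g → g = 1
    · obtain ⟨C, _, ⟨k⟩, ⟨l⟩⟩ := gr_case_two φ d b hφ d' a hφ' hfix
      exact ⟨k.trans l.symm⟩
    · push Not at hfix
      obtain ⟨g, hg, hne⟩ := hfix
      obtain ⟨P₀, hP, hcs, hinj⟩ := gr_retract d d' hne hg
      have hd := hinj (hmin P₀ hP hcs)
      have hbij : Function.Bijective d := Finite.injective_iff_bijective.1 hd
      exact gr_case_one φ (MulEquiv.ofBijective d hbij) b hφ
  · rintro A A₁ A₂ _ _ _ B B₁ B₂ _ _ _ i j ⟨k₁⟩ ⟨k₂⟩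
    exact ⟨(i.trans (RingEquiv.prodCongr k₁ k₂)).trans j.symm⟩

/-- Move a common factor of the groups to the outside. -/
noncomputable def gr_curry_iso {A B G H P K L : Type*} [CommRing A] [CommRing B] [CommGroup G]
    [CommGroup H] [CommGroup P] [CommGroup K] [CommGroup L] (eG : G ≃* P × K) (eH : H ≃* P × L)
    (φ : MonoidAlgebra A G ≃+* MonoidAlgebra B H) :
    MonoidAlgebra (MonoidAlgebra A K) P ≃+* MonoidAlgebra (MonoidAlgebra B L) P :=
  let m1 : MonoidAlgebra A (P × K) ≃+* MonoidAlgebra (MonoidAlgebra A K) P := curryRingEquiv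
  let m2 : MonoidAlgebra A G ≃+* MonoidAlgebra A (P × K) := mapDomainRingEquiv A eG
  let m3 : MonoidAlgebra B H ≃+* MonoidAlgebra B (P × L) := mapDomainRingEquiv B eH
  let m4 : MonoidAlgebra B (P × L) ≃+* MonoidAlgebra (MonoidAlgebra B L) P := curryRingEquiv
  (((m1.symm.trans m2.symm).trans φ).trans m3).trans m4

lemma gr_forward {A : Type u} {B : Type v}
    [CommRing A] [Module.Free ℤ A] [Module.Finite ℤ A] [IsReduced A]
    [CommRing B] [Module.Free ℤ B] [Module.Finite ℤ B] [IsReduced B] :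
    ∀ (n : ℕ) (G : Type w) [CommGroup G] [Finite G] (H : Type x) [CommGroup H] [Finite H],
      Nat.card G = n → (MonoidAlgebra A G ≃+* MonoidAlgebra B H) →
      ∃ (C : Type (max u v)) (_ : CommRing C) (_ : Module.Free ℤ C) (_ : Module.Finite ℤ C)
        (I : Type (max w x)) (_ : CommGroup I) (_ : Finite I)
        (J : Type (max w x)) (_ : CommGroup J) (_ : Finite J),
        Nonempty (A ≃+* MonoidAlgebra C I) ∧ Nonempty (B ≃+* MonoidAlgebra C J) ∧
          Nonempty ((I × G) ≃* (J × H)) := by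
  intro n
  induction n using Nat.strong_induction_on with
  | _ n ih =>
  intro G _ _ H _ _ hn φ
  by_cases hno : ∀ P : Subgroup G, Nontrivial P → ¬ GrCS P G H
  · obtain ⟨C, _, ⟨k⟩, ⟨l⟩⟩ := gr_no_common hno φ
    let e : ULift.{u} C ≃+* C := ULift.ringEquiv
    let kA : A ≃+* MonoidAlgebra (ULift.{u} C) (ULift.{w} H) :=
      (k.trans (mapRingEquiv H e.symm)).trans (mapDomainRingEquiv _ MulEquiv.ulift.symm)
    let kB : B ≃+* MonoidAlgebra (ULift.{u} C) (ULift.{x} G) :=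
      (l.trans (mapRingEquiv G e.symm)).trans (mapDomainRingEquiv _ MulEquiv.ulift.symm)
    obtain ⟨o1, o2⟩ := gr_order_of_inj
      ((kA.symm : _ →+* A).comp (singleOneRingHom (R := ULift.{u} C) (M := ULift.{w} H)) :
        ULift.{u} C →+* A).toAddMonoidHom
      (kA.symm.injective.comp (single_right_injective (R := ULift.{u} C) (m := (1 : ULift.{w} H))))
    exact ⟨ULift.{u} C, inferInstance, o1, o2, ULift.{w} H, inferInstance, inferInstance,
      ULift.{x} G, inferInstance, inferInstance, ⟨kA⟩, ⟨kB⟩,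
      ⟨(MulEquiv.prodCongr MulEquiv.ulift (MulEquiv.refl G)).trans
        (MulEquiv.prodComm.trans (MulEquiv.prodCongr MulEquiv.ulift.symm (MulEquiv.refl H)))⟩⟩
  · push Not at hno
    classical
    have hex : ∃ m : ℕ, ∃ P : Subgroup G, Nat.card P = m ∧ Nontrivial P ∧ GrCS P G H := by
      obtain ⟨P, h1, h2⟩ := hno
      exact ⟨_, P, rfl, h1, h2⟩
    obtain ⟨P, hPc, hPn, hP⟩ := Nat.find_spec hex
    have hmin : ∀ P₀ : Subgroup P, Nontrivial P₀ → GrCS P₀ P P → P₀ = ⊤ := by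
      intro P₀ hnt hcs
      have h1 : GrCS (P₀.map P.subtype) G H := by
        obtain ⟨i, r, j, s, h1, h2⟩ := hcs.trans hP
        let q : P₀ ≃* P₀.map P.subtype := P₀.equivMapOfInjective _ P.subtype_injective
        exact ⟨i.comp q.symm.toMonoidHom, q.toMonoidHom.comp r, j.comp q.symm.toMonoidHom,
          q.toMonoidHom.comp s, by simp [h1], by simp [h2]⟩
      let q : P₀ ≃* P₀.map P.subtype := P₀.equivMapOfInjective _ P.subtype_injective
      have h2 : Nontrivial (P₀.map P.subtype) := q.symm.toEquiv.nontrivial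
      have h3 := Nat.find_min' hex ⟨_, rfl, h2, h1⟩
      rw [← hPc, ← Nat.card_congr q.toEquiv] at h3
      exact Subgroup.eq_top_of_le_card P₀ h3
    obtain ⟨i, r, j, s, hri, hsj⟩ := hP
    obtain ⟨eG⟩ := gr_grp_split i r hri
    obtain ⟨eH⟩ := gr_grp_split j s hsj
    let ψ : MonoidAlgebra (MonoidAlgebra A r.ker) P ≃+* MonoidAlgebra (MonoidAlgebra B s.ker) P :=
      gr_curry_iso eG eH φ
    obtain ⟨_, _, _⟩ := gr_order_groupring A r.ker
    obtain ⟨_, _, _⟩ := gr_order_groupring B s.ker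
    obtain ⟨θ⟩ := gr_cancel_min hmin ψ
    have hcard : Nat.card r.ker < n := by
      rw [← hn, Nat.card_congr eG.toEquiv, Nat.card_prod]
      have h1 : 1 < Nat.card P := Finite.one_lt_card
      have h2 : 0 < Nat.card r.ker := Nat.card_pos
      nlinarith
    obtain ⟨C, c1, c2, c3, I, i1, i2, J, j1, j2, hA, hB, ⟨ρ⟩⟩ := ih _ hcard r.ker s.ker rfl θ
    refine ⟨C, c1, c2, c3, I, i1, i2, J, j1, j2, hA, hB, ⟨?_⟩⟩
    exact gr_grp_glue eG eH ρ

lemma gr_backward {A B C G H I J : Type*} [CommRing A] [CommRing B] [CommRing C]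
    [CommGroup G] [CommGroup H] [CommGroup I] [CommGroup J]
    (k : A ≃+* MonoidAlgebra C I) (l : B ≃+* MonoidAlgebra C J) (ρ : (I × G) ≃* (J × H)) :
    Nonempty (MonoidAlgebra A G ≃+* MonoidAlgebra B H) :=
  ⟨(((mapRingEquiv G k).trans (curryRingEquiv (R := C)).symm).trans
    (mapDomainRingEquiv C (MulEquiv.prodComm.trans (ρ.trans MulEquiv.prodComm)))).trans
    ((curryRingEquiv (R := C)).trans (mapRingEquiv H l.symm))⟩

end finalsec

/-- Let `A` and `B` be reduced orders and `G`, `H` finite abelian groups.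
Then `A[G] ≅ B[H]` as rings iff there exist an order `C` and finite abelian groups `I`, `J`
with `A ≅ C[I]`, `B ≅ C[J]` as rings and `I × G ≅ J × H` as groups. -/
theorem groupring_iso_iff_common_base
    {A : Type u} [CommRing A] [Module.Free ℤ A] [Module.Finite ℤ A] [IsReduced A]
    {B : Type v} [CommRing B] [Module.Free ℤ B] [Module.Finite ℤ B] [IsReduced B]
    {G : Type w} [CommGroup G] [Finite G] {H : Type x} [CommGroup H] [Finite H] :
    Nonempty (MonoidAlgebra A G ≃+* MonoidAlgebra B H) ↔
      ∃ (C : Type (max u v)) (_ : CommRing C) (_ : Module.Free ℤ C) (_ : Module.Finite ℤ C)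
        (I : Type (max w x)) (_ : CommGroup I) (_ : Finite I)
        (J : Type (max w x)) (_ : CommGroup J) (_ : Finite J),
        Nonempty (A ≃+* MonoidAlgebra C I) ∧ Nonempty (B ≃+* MonoidAlgebra C J) ∧
          Nonempty ((I × G) ≃* (J × H)) := by
  constructor
  · rintro ⟨φ⟩
    exact gr_forward _ G H rfl φ
  · rintro ⟨C, _, _, _, I, _, _, J, _, _, ⟨k⟩, ⟨l⟩, ⟨ρ⟩⟩
    exact gr_backward k l ρ
end

section
/- Let R be a non-zero reduced order. Then there exist a stark ring A and a finite abelian group G such that R is isomorphic to the group ring A[G] as rings; moreover A is unique up to ring isomorphism and G is unique up to group isomorphism, i.e., if B is a stark ring and H is a finite abelian group with R isomorphic to B[H] as rings, then A is isomorphic to B as rings and G is isomorphic to H as groups. -/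
/-- A commutative ring is stark if it is not isomorphic to any group ring `A[G]`
with `A` a ring and `G` a non-trivial group. -/
def IsStark (R : Type u) [CommRing R] : Prop :=
  ∀ (A : Type u) (_ : Ring A) (G : Type u) (_ : Group G),
    Nontrivial G → IsEmpty (R ≃+* MonoidAlgebra A G)


namespace Stark

section Homs
variable {R : Type*} [CommRing R] [Module.Finite ℤ R]

lemma isIntegral_hom (σ : R →+* ℂ) (x : R) : IsIntegral ℤ (σ x) := by
  have h : IsIntegral ℤ x := Algebra.IsIntegral.isIntegral x
  exact h.map σ.toIntAlgHom

lemma finite_homs (R : Type*) [CommRing R] [Module.Finite ℤ R] : Finite (R →+* ℂ) := by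
  classical
  obtain ⟨s, hs⟩ := (Module.Finite.fg_top : (⊤ : Submodule ℤ R).FG)
  have hp : ∀ x : R, ∃ p : Polynomial ℤ, p.Monic ∧ Polynomial.eval₂ (algebraMap ℤ R) x p = 0 :=
    fun x => Algebra.IsIntegral.isIntegral x
  choose p hp1 hp2 using hp
  let T : s → Set ℂ := fun x => {z | z ∈ ((p x).map (Int.castRingHom ℂ)).roots}
  have hT : ∀ x, Finite (T x) := fun x =>
    (Multiset.finite_toSet (((p x).map (Int.castRingHom ℂ)).roots)).to_subtype
  let F : (R →+* ℂ) → (∀ x : s, T x) := fun σ x => ⟨σ x, by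
    show σ x ∈ ((p x).map (Int.castRingHom ℂ)).roots
    rw [Polynomial.mem_roots ((hp1 x).map _).ne_zero, Polynomial.IsRoot, Polynomial.eval_map]
    have := congrArg σ (hp2 x)
    rw [Polynomial.hom_eval₂, map_zero] at this
    rwa [RingHom.ext_int (σ.comp (algebraMap ℤ R)) (Int.castRingHom ℂ)] at this⟩
  apply Finite.of_injective F
  intro σ τ h
  have h1 : σ.toIntAlgHom.toLinearMap = τ.toIntAlgHom.toLinearMap := by
    apply LinearMap.ext_on hs
    intro x hx
    exact congrArg Subtype.val (congrFun h ⟨x, hx⟩)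
  ext x
  exact LinearMap.congr_fun h1 x

lemma exists_hom_ne_zero [IsReduced R] [Module.IsTorsionFree ℤ R] {x : R} (hx : x ≠ 0) :
    ∃ σ : R →+* ℂ, σ x ≠ 0 := by
  let S : Submonoid R :=
    { carrier := {y | ∃ (n : ℤ) (k : ℕ), n ≠ 0 ∧ y = n • x ^ k}
      one_mem' := ⟨1, 0, one_ne_zero, by simp⟩
      mul_mem' := by
        rintro _ _ ⟨n, k, hn, rfl⟩ ⟨m, l, hm, rfl⟩
        exact ⟨n * m, k + l, mul_ne_zero hn hm, by rw [smul_mul_smul_comm, pow_add]⟩ }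
  have hS : Disjoint ((⊥ : Ideal R) : Set R) (S : Set R) := by
    rw [Set.disjoint_left]
    rintro y hy ⟨n, k, hn, rfl⟩
    have : n • x ^ k = 0 := hy
    rcases smul_eq_zero.1 this with h | h
    · exact hn h
    · exact hx (eq_zero_of_pow_eq_zero h)
  obtain ⟨P, hP, -, hd⟩ := Ideal.exists_le_prime_disjoint _ _ hS
  rw [Set.disjoint_left] at hd
  have hn : ∀ n : ℤ, n ≠ 0 → (n : R) ∉ P := fun n hn h => hd h ⟨n, 0, hn, by simp⟩
  have hxP : x ∉ P := fun h => hd h ⟨1, 1, one_ne_zero, by simp⟩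
  have hinj : Function.Injective (algebraMap ℤ (R ⧸ P)) := by
    rw [injective_iff_map_eq_zero]
    intro n h
    by_contra h0
    apply hn n h0
    rw [← Ideal.Quotient.eq_zero_iff_mem]
    simpa using h
  have : FaithfulSMul ℤ (R ⧸ P) := (faithfulSMul_iff_algebraMap_injective _ _).2 hinj
  have : Module.IsTorsionFree ℤ (R ⧸ P) := by infer_instance
  have : Algebra.IsAlgebraic ℤ (R ⧸ P) := by
    have : Algebra.IsIntegral ℤ (R ⧸ P) := inferInstance
    infer_instance
  have hI : Algebra.IsIntegral ℤ (R ⧸ P) := inferInstance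
  let τ : (R ⧸ P) →ₐ[ℤ] ℂ := IsAlgClosed.lift
  have hker : RingHom.ker (τ : (R ⧸ P) →+* ℂ) = ⊥ := by
    apply Ideal.eq_bot_of_comap_eq_bot (R := ℤ)
    rw [eq_bot_iff]
    intro n hn
    have h1 : τ (algebraMap ℤ (R ⧸ P) n) = 0 := hn
    rw [AlgHom.commutes] at h1
    simpa using h1
  refine ⟨(τ : (R ⧸ P) →+* ℂ).comp (Ideal.Quotient.mk P), ?_⟩
  intro h
  apply hxP
  rw [← Ideal.Quotient.eq_zero_iff_mem]
  have : Ideal.Quotient.mk P x ∈ RingHom.ker (τ : (R ⧸ P) →+* ℂ) := h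
  rwa [hker] at this

lemma hom_ext_zero [IsReduced R] [Module.IsTorsionFree ℤ R] {x : R}
    (h : ∀ σ : R →+* ℂ, σ x = 0) : x = 0 := by
  by_contra hx
  obtain ⟨σ, hσ⟩ := exists_hom_ne_zero hx
  exact hσ (h σ)

lemma exists_field (R : Type*) [CommRing R] [Module.Finite ℤ R] :
    ∃ K : IntermediateField ℚ ℂ, NumberField K ∧ ∀ (σ : R →+* ℂ) (x : R), σ x ∈ K := by
  classical
  have := finite_homs R
  obtain ⟨s, hs⟩ := (Module.Finite.fg_top : (⊤ : Submodule ℤ R).FG)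
  let T : Set ℂ := Set.range (fun p : (R →+* ℂ) × s => p.1 p.2)
  have hT : Finite T := (Set.finite_range _).to_subtype
  refine ⟨IntermediateField.adjoin ℚ T, ?_, ?_⟩
  · have : FiniteDimensional ℚ (IntermediateField.adjoin ℚ T) := by
      apply IntermediateField.finiteDimensional_adjoin
      rintro _ ⟨⟨σ, x⟩, rfl⟩
      exact (isIntegral_hom σ (x : R)).tower_top
    exact ⟨⟩
  · intro σ x
    have hx : x ∈ Submodule.span ℤ (s : Set R) := by rw [hs]; trivial
    induction hx using Submodule.span_induction with
    | mem x hx => exact IntermediateField.subset_adjoin _ _ ⟨(σ, ⟨x, hx⟩), rfl⟩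
    | zero => simp
    | add x y _ _ h1 h2 => rw [map_add]; exact add_mem h1 h2
    | smul n x _ h => rw [map_zsmul]; exact zsmul_mem h n

lemma finite_bounded [IsReduced R] [Module.IsTorsionFree ℤ R] (C : ℝ) :
    {x : R | ∀ σ : R →+* ℂ, ‖σ x‖ ≤ C}.Finite := by
  have := finite_homs R
  obtain ⟨K, hK, hmem⟩ := exists_field R
  let res : (R →+* ℂ) → (R →+* K) := fun σ => σ.codRestrict K.toSubfield (hmem σ)
  have hfin := NumberField.Embeddings.finite_of_norm_le K ℂ C
  let F : R → ((R →+* ℂ) → K) := fun x σ => res σ x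
  have hF : Function.Injective F := by
    intro x y h
    rw [← sub_eq_zero]
    apply hom_ext_zero
    intro σ
    have := congrArg (Subtype.val) (congrFun h σ)
    rw [map_sub, sub_eq_zero]
    exact this
  have h2 : (Set.pi Set.univ (fun _ : R →+* ℂ =>
      {x : K | IsIntegral ℤ x ∧ ∀ φ : K →+* ℂ, ‖φ x‖ ≤ C})).Finite := Set.Finite.pi (fun _ => hfin)
  refine (h2.preimage hF.injOn).subset ?_
  intro x hx σ _
  refine ⟨(Algebra.IsIntegral.isIntegral (R := ℤ) x).map (res σ).toIntAlgHom, fun φ => ?_⟩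
  exact hx (φ.comp (res σ))

lemma one_le_norm_prod [Fintype (R →+* ℂ)] (y : R) (S : Finset (R →+* ℂ))
    (hS : ∀ σ, σ ∈ S ↔ σ y ≠ 0) : 1 ≤ ‖∏ σ ∈ S, σ y‖ := by
  obtain ⟨K, hK, hmem⟩ := exists_field R
  let res : (R →+* ℂ) → (R →+* K) := fun σ => σ.codRestrict K.toSubfield (hmem σ)
  let P : K := ∏ σ ∈ S, res σ y
  have hval : (P : ℂ) = ∏ σ ∈ S, σ y := by
    show K.val P = _
    rw [map_prod]; rfl
  have hP0 : P ≠ 0 := by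
    apply Finset.prod_ne_zero_iff.2
    intro σ hσ h
    exact (hS σ).1 hσ (congrArg Subtype.val h)
  have hPint : IsIntegral ℤ P := IsIntegral.prod _ fun σ _ =>
    (Algebra.IsIntegral.isIntegral (R := ℤ) y).map (res σ).toIntAlgHom
  have hφ : ∀ φ : K →ₐ[ℚ] ℂ, φ P = (P : ℂ) := by
    intro φ
    rw [hval, map_prod]
    let f : (R →+* ℂ) → (R →+* ℂ) := fun σ => (φ : K →+* ℂ).comp (res σ)
    have hf : Function.Injective f := by
      intro σ τ h
      ext x
      have : φ (res σ x) = φ (res τ x) := RingHom.congr_fun h x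
      exact congrArg Subtype.val (φ.injective this)
    refine Finset.prod_bijective f (Finite.injective_iff_bijective.1 hf) ?_ ?_
    · intro σ
      rw [hS, hS]
      show _ ↔ φ (res σ y) ≠ 0
      rw [map_ne_zero φ, Ne, Ne, not_iff_not]
      exact ⟨fun h => Subtype.ext h, fun h => congrArg Subtype.val h⟩
    · intro σ _; rfl
  have hnorm := Algebra.norm_eq_prod_embeddings ℚ ℂ P
  rw [Finset.prod_congr rfl (fun φ _ => hφ φ), Finset.prod_const, hval] at hnorm
  have h1 : IsIntegral ℤ (Algebra.norm ℚ P) := Algebra.isIntegral_norm ℚ hPint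
  obtain ⟨n, hn⟩ := IsIntegrallyClosed.isIntegral_iff.1 h1
  have hn0 : n ≠ 0 := by
    rintro rfl
    rw [map_zero] at hn
    exact hP0 (Algebra.norm_eq_zero_iff.1 hn.symm)
  have h3 : (1 : ℝ) ≤ ‖∏ σ ∈ S, σ y‖ ^ (Finset.univ : Finset (K →ₐ[ℚ] ℂ)).card := by
    rw [← norm_pow, ← hnorm, ← hn]
    simp only [eq_intCast, map_intCast]
    rw [Complex.norm_intCast]
    exact_mod_cast Int.one_le_abs hn0
  by_contra hlt
  push Not at hlt
  rcases Nat.eq_zero_or_pos (Finset.univ : Finset (K →ₐ[ℚ] ℂ)).card with h0 | h0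
  · rw [Finset.card_eq_zero] at h0
    exact absurd (Finset.mem_univ (IsScalarTower.toAlgHom ℚ K ℂ)) (by rw [h0]; simp)
  · exact absurd h3 (not_le.2 (pow_lt_one₀ (norm_nonneg _) hlt h0.ne'))

end Homs

end Stark


namespace Stark
open scoped ComplexConjugate

section Lattice
variable {R : Type*} [CommRing R] [Fintype (R →+* ℂ)]

/-- The hermitian form on `R`. -/
noncomputable def ip (x y : R) : ℂ := ∑ σ : R →+* ℂ, σ x * conj (σ y)

/-- The associated norm form. -/
noncomputable def nrm (x : R) : ℝ := ∑ σ : R →+* ℂ, ‖σ x‖ ^ 2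

lemma ip_add_right (x y z : R) : ip x (y + z) = ip x y + ip x z := by
  simp [ip, mul_add, Finset.sum_add_distrib]

lemma ip_sum_right {ι : Type*} (s : Finset ι) (x : R) (f : ι → R) :
    ip x (∑ i ∈ s, f i) = ∑ i ∈ s, ip x (f i) := by
  simp only [ip, map_sum, Finset.mul_sum]
  exact Finset.sum_comm

lemma nrm_add {x y : R} (h : ip x y = 0) : nrm (x + y) = nrm x + nrm y := by
  have h1 : ∀ σ : R →+* ℂ, ‖σ (x + y)‖ ^ 2 = ‖σ x‖ ^ 2 + ‖σ y‖ ^ 2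
      + 2 * (σ x * conj (σ y)).re := by
    intro σ
    rw [map_add, ← Complex.normSq_eq_norm_sq, ← Complex.normSq_eq_norm_sq,
      ← Complex.normSq_eq_norm_sq, Complex.normSq_add]
  have h2 : (∑ σ : R →+* ℂ, (σ x * conj (σ y)).re) = 0 := by
    rw [← Complex.re_sum]
    exact congrArg Complex.re h
  simp only [nrm, h1, Finset.sum_add_distrib, ← Finset.mul_sum, h2]
  ring

lemma nrm_nonneg (x : R) : 0 ≤ nrm x := Finset.sum_nonneg fun _ _ => by positivity

variable [Module.Finite ℤ R]

lemma nrm_pos [IsReduced R] [Module.IsTorsionFree ℤ R] {x : R} (hx : x ≠ 0) : 0 < nrm x := by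
  obtain ⟨σ, hσ⟩ := exists_hom_ne_zero hx
  exact Finset.sum_pos' (fun _ _ => by positivity) ⟨σ, Finset.mem_univ _, by positivity⟩

lemma finite_nrm_le [IsReduced R] [Module.IsTorsionFree ℤ R] (C : ℝ) :
    {x : R | nrm x < C}.Finite := by
  refine (finite_bounded (R := R) (C + 1)).subset ?_
  intro x hx σ
  have hx : nrm x < C := hx
  have h1 : ‖σ x‖ ^ 2 ≤ nrm x :=
    Finset.single_le_sum (f := fun σ : R →+* ℂ => ‖σ x‖ ^ 2) (fun _ _ => by positivity)
      (Finset.mem_univ σ)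
  nlinarith [norm_nonneg (σ x)]

/-- Eichler: orthogonal projections preserving the lattice commute. -/
lemma proj_commute [IsReduced R] [Module.IsTorsionFree ℤ R] (p q : R →+ R)
    (hp : ∀ x, ip (p x) (x - p x) = 0) (hq : ∀ x, ip (q x) (x - q x) = 0) (x : R) :
    p (q x) = q (p x) := by
  induction hn : {y : R | nrm y < nrm x}.ncard using Nat.strong_induction_on generalizing x with
  | _ n ih =>
  have key : ∀ y z : R, x = y + z → y ≠ 0 → z ≠ 0 → ip y z = 0 → p (q x) = q (p x) := by
    intro y z hx hy hz h
    have hs : nrm x = nrm y + nrm z := by rw [hx, nrm_add h]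
    have hlt : ∀ w : R, nrm w < nrm x →
        {y : R | nrm y < nrm w}.ncard < n := by
      intro w hw
      rw [← hn]
      apply Set.ncard_lt_ncard _ (finite_nrm_le _)
      refine ⟨fun v hv => lt_trans hv hw, fun hc => ?_⟩
      have hh : nrm w < nrm w := hc (a := w) hw
      exact lt_irrefl _ hh
    have hy' := ih _ (hlt y (by rw [hs]; linarith [nrm_pos hz])) y rfl
    have hz' := ih _ (hlt z (by rw [hs]; linarith [nrm_pos hy])) z rfl
    rw [hx]
    simp only [map_add, hy', hz']
  by_cases h1 : p x = 0
  · by_cases h2 : q x = 0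
    · simp [h1, h2]
    · by_cases h3 : x - q x = 0
      · rw [sub_eq_zero] at h3
        rw [← h3, h1, map_zero]
      · exact key (q x) (x - q x) (by abel) h2 h3 (hq x)
  · by_cases h2 : x - p x = 0
    · rw [sub_eq_zero] at h2
      by_cases h3 : q x = 0
      · rw [h3, ← h2, h3, map_zero]
      · by_cases h4 : x - q x = 0
        · rw [sub_eq_zero] at h4
          rw [← h4, ← h2, ← h4]
        · exact key (q x) (x - q x) (by abel) h3 h4 (hq x)
    · exact key (p x) (x - p x) (by abel) h1 h2 (hp x)

lemma card_supp_le (y : R) (S : Finset (R →+* ℂ)) (hS : ∀ σ, σ ∈ S ↔ σ y ≠ 0) :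
    (S.card : ℝ) ≤ nrm y := by
  have h1 := one_le_norm_prod y S hS
  have h2 : ∀ σ ∈ S, 1 + 2 * Real.log ‖σ y‖ ≤ ‖σ y‖ ^ 2 := by
    intro σ hσ
    have hpos : 0 < ‖σ y‖ := norm_pos_iff.2 ((hS σ).1 hσ)
    have := Real.log_le_sub_one_of_pos (pow_pos hpos 2)
    rw [Real.log_pow] at this
    push_cast at this
    linarith
  have h3 : ∑ σ ∈ S, Real.log ‖σ y‖ = Real.log ‖∏ σ ∈ S, σ y‖ := by
    rw [norm_prod, Real.log_prod]
    intro σ hσ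
    exact (norm_pos_iff.2 ((hS σ).1 hσ)).ne'
  have h4 : 0 ≤ Real.log ‖∏ σ ∈ S, σ y‖ := Real.log_nonneg h1
  calc (S.card : ℝ) ≤ ∑ σ ∈ S, (1 + 2 * Real.log ‖σ y‖) := by
        rw [Finset.sum_add_distrib, ← Finset.mul_sum, h3]
        rw [Finset.sum_const, nsmul_eq_mul, mul_one]
        linarith
    _ ≤ ∑ σ ∈ S, ‖σ y‖ ^ 2 := Finset.sum_le_sum h2
    _ ≤ nrm y := Finset.sum_le_sum_of_subset_of_nonneg (Finset.subset_univ _)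
        fun _ _ _ => by positivity

lemma mul_eq_zero_of_orth [IsReduced R] [Module.IsTorsionFree ℤ R] {u y z : R}
    (hu : ∀ σ : R →+* ℂ, σ u = 0 ∨ ‖σ u‖ = 1) (h : u = y + z) (ho : ip y z = 0) : y * z = 0 := by
  classical
  let Sy : Finset (R →+* ℂ) := Finset.univ.filter fun σ => σ y ≠ 0
  let Sz : Finset (R →+* ℂ) := Finset.univ.filter fun σ => σ z ≠ 0
  let Su : Finset (R →+* ℂ) := Finset.univ.filter fun σ => σ u ≠ 0
  have hy := card_supp_le y Sy (by simp [Sy])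
  have hz := card_supp_le z Sz (by simp [Sz])
  have hun : nrm u = Su.card := by
    rw [nrm, Finset.card_filter]
    push_cast
    apply Finset.sum_congr rfl
    intro σ _
    rcases hu σ with h | h
    · simp [h]
    · have : σ u ≠ 0 := by intro h0; simp [h0] at h
      simp [h, this]
  have hsub : Su ⊆ Sy ∪ Sz := by
    intro σ
    simp only [Su, Sy, Sz, Finset.mem_filter, Finset.mem_univ, true_and, Finset.mem_union]
    intro h0
    by_contra hc
    push Not at hc
    apply h0
    rw [h, map_add, hc.1, hc.2, add_zero]
  have h1 : nrm u = nrm y + nrm z := by rw [h, nrm_add ho]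
  have h2 : Sy.card + Sz.card ≤ Su.card := by
    have : (Sy.card : ℝ) + Sz.card ≤ Su.card := by rw [← hun, h1]; linarith
    exact_mod_cast this
  have h3 := Finset.card_le_card hsub
  have h4 := Finset.card_union_add_card_inter Sy Sz
  have h5 : (Sy ∩ Sz).card = 0 := by omega
  rw [Finset.card_eq_zero] at h5
  apply hom_ext_zero
  intro σ
  rw [map_mul]
  by_contra hc
  have : σ ∈ Sy ∩ Sz := by
    simp only [Sy, Sz, Finset.mem_inter, Finset.mem_filter, Finset.mem_univ, true_and]
    exact ⟨left_ne_zero_of_mul hc, right_ne_zero_of_mul hc⟩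
  rw [h5] at this
  simp at this

end Lattice

section GroupRing
open MonoidAlgebra
variable {R A G : Type*} [CommRing R] [CommRing A] [CommGroup G]

/-- projection to the degree `g` part. -/
noncomputable def gp (ψ : R ≃+* MonoidAlgebra A G) (g : G) : R →+ R where
  toFun x := ψ.symm (single g ((ψ x).coeff g))
  map_zero' := by simp
  map_add' x y := by simp

lemma gp_apply (ψ : R ≃+* MonoidAlgebra A G) (g : G) (x : R) :
    gp ψ g x = ψ.symm (single g ((ψ x).coeff g)) := rfl

lemma gp_sum [Fintype G] (ψ : R ≃+* MonoidAlgebra A G) (x : R) : ∑ g, gp ψ g x = x := by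
  classical
  apply ψ.injective
  rw [map_sum]
  simp only [gp_apply, RingEquiv.apply_symm_apply]
  ext g
  simp

/-- twisting by a character -/
noncomputable def twist (ψ : R ≃+* MonoidAlgebra A G) (χ : G →* ℂ) (σ : R →+* ℂ) : R →+* ℂ :=
  (liftNCRingHom ((σ.comp (ψ.symm : MonoidAlgebra A G →+* R)).comp singleOneRingHom)
    (χ * ((σ.comp (ψ.symm : MonoidAlgebra A G →+* R) : MonoidAlgebra A G →* ℂ)).comp (of A G))
    (fun _ _ => Commute.all _ _)).comp (ψ : R →+* MonoidAlgebra A G)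

lemma twist_single (ψ : R ≃+* MonoidAlgebra A G) (χ : G →* ℂ) (σ : R →+* ℂ) (g : G) (a : A) :
    twist ψ χ σ (ψ.symm (single g a)) = χ g * σ (ψ.symm (single g a)) := by
  have : single g a = single 1 a * single g (1 : A) := by simp [single_mul_single]
  rw [this]
  simp [twist, liftNCRingHom, single_mul_single, liftNC_single]
  rw [mul_left_comm, ← map_mul, ← map_mul, single_mul_single]
  simp

lemma ip_single [Finite G] [Fintype (R →+* ℂ)] (ψ : R ≃+* MonoidAlgebra A G) {g h : G} (hgh : g ≠ h)
    (a b : A) : ip (ψ.symm (single g a)) (ψ.symm (single h b)) = 0 := by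
  obtain ⟨χ, hχ⟩ := CommGroup.exists_apply_ne_one_of_hasEnoughRootsOfUnity G ℂ
    (a := g * h⁻¹) (by rwa [Ne, mul_inv_eq_one])
  let χ' : G →* ℂ := (Units.coeHom ℂ).comp χ
  have hχ0 : ∀ k, χ' k ≠ 0 := fun k => (χ k).ne_zero
  have hinj : Function.Injective (twist ψ χ') := by
    intro σ τ hst
    ext x
    have h0 : σ.comp (ψ.symm : MonoidAlgebra A G →+* R)
        = τ.comp (ψ.symm : MonoidAlgebra A G →+* R) := by
      have : ∀ k a, σ (ψ.symm (single k a)) = τ (ψ.symm (single k a)) := by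
        intro k a
        have := RingHom.congr_fun hst (ψ.symm (single k a))
        rw [twist_single, twist_single] at this
        exact mul_left_cancel₀ (hχ0 k) this
      apply MonoidAlgebra.ringHom_ext
      · intro a; exact this _ _
      · intro k; exact this _ _
    simpa using RingHom.congr_fun h0 (ψ x)
  have hbij := Finite.injective_iff_bijective.1 hinj
  have h1 : ip (ψ.symm (single g a)) (ψ.symm (single h b))
      = (χ' g * conj (χ' h)) * ip (ψ.symm (single g a)) (ψ.symm (single h b)) := by
    conv_lhs => rw [ip, ← hbij.sum_comp]
    rw [ip, Finset.mul_sum]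
    apply Finset.sum_congr rfl
    intro σ _
    rw [twist_single, twist_single, map_mul]
    ring
  have hconj : conj (χ' h) * χ' h = 1 := by
    have hn : ‖χ' h‖ = 1 := by
      obtain ⟨n, hn, h1⟩ := (isOfFinOrder_of_finite h).exists_pow_eq_one
      apply (pow_eq_one_iff_of_nonneg (norm_nonneg _) hn.ne').1
      rw [← norm_pow]
      rw [← map_pow, h1, map_one, norm_one]
    rw [mul_comm, Complex.mul_conj, Complex.normSq_eq_norm_sq, hn]
    simp
  by_contra hne
  have h2 : χ' g * conj (χ' h) = 1 := by
    have : (χ' g * conj (χ' h) - 1) * ip (ψ.symm (single g a)) (ψ.symm (single h b)) = 0 := by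
      rw [sub_mul, one_mul, ← h1, sub_self]
    rcases mul_eq_zero.1 this with h | h
    · exact sub_eq_zero.1 h
    · exact absurd h hne
  have h3 : χ' g = χ' h := by
    calc χ' g = χ' g * (conj (χ' h) * χ' h) := by rw [hconj, mul_one]
      _ = χ' h := by rw [← mul_assoc, h2, one_mul]
  apply hχ
  rw [map_mul, map_inv, mul_inv_eq_one]
  exact Units.ext h3

lemma gp_orth [Finite G] [Fintype (R →+* ℂ)] (ψ : R ≃+* MonoidAlgebra A G) (g : G) (x : R) :
    ip (gp ψ g x) (x - gp ψ g x) = 0 := by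
  classical
  have := Fintype.ofFinite G
  have h : x - gp ψ g x = ∑ k ∈ Finset.univ.erase g, gp ψ k x := by
    rw [sub_eq_iff_eq_add, add_comm, Finset.add_sum_erase _ (fun k => gp ψ k x) (Finset.mem_univ g), gp_sum]
  rw [h, ip_sum_right]
  apply Finset.sum_eq_zero
  intro k hk
  exact ip_single ψ (Finset.ne_of_mem_erase hk).symm _ _

lemma gp_commute {B H : Type*} [CommRing B] [CommGroup H] [Finite G] [Finite H]
    [Module.Finite ℤ R] [IsReduced R] [Module.IsTorsionFree ℤ R]
    (ψ : R ≃+* MonoidAlgebra A G) (φ : R ≃+* MonoidAlgebra B H) (g : G) (h : H) (x : R) :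
    gp ψ g (gp φ h x) = gp φ h (gp ψ g x) := by
  have := finite_homs R
  have := Fintype.ofFinite (R →+* ℂ)
  exact proj_commute _ _ (gp_orth ψ g) (gp_orth φ h) x

lemma gp_mul_eq_zero [Finite G] [Module.Finite ℤ R] [IsReduced R] [Module.IsTorsionFree ℤ R]
    (ψ : R ≃+* MonoidAlgebra A G) (g : G) {u : R}
    (hu : ∀ σ : R →+* ℂ, σ u = 0 ∨ ‖σ u‖ = 1) : gp ψ g u * (u - gp ψ g u) = 0 := by
  have := finite_homs R
  have := Fintype.ofFinite (R →+* ℂ)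
  exact mul_eq_zero_of_orth hu (by abel) (gp_orth ψ g u)

end GroupRing
end Stark


namespace Stark
open MonoidAlgebra

/-- A grading of `R` by a finite group `P`, given by projections. -/
structure Gr (P R : Type*) [Fintype P] [CommGroup P] [CommRing R] where
  p : P → R →+ R
  sum : ∀ x, ∑ q, p q x = x
  proj : ∀ q x, p q (p q x) = p q x
  orth : ∀ q q' x, q ≠ q' → p q (p q' x) = 0
  mul : ∀ q q' x y, p (q * q') (p q x * p q' y) = p q x * p q' y
  one : p 1 1 = 1

namespace Gr
variable {P R : Type*} [Fintype P] [CommGroup P] [CommRing R] (g : Gr P R)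

lemma ne_of {q r : P} {x : R} (hx : g.p q x = x) (h : q ≠ r) : g.p r x = 0 := by
  rw [← hx, g.orth _ _ _ h.symm]

lemma mulh {q r : P} {x y : R} (hx : g.p q x = x) (hy : g.p r y = y) :
    g.p (q * r) (x * y) = x * y := by
  have := g.mul q r x y
  rwa [hx, hy] at this

/-- The subring of elements with degrees in a subgroup. -/
def sub (Q : Subgroup P) : Subring R where
  carrier := {x | ∀ q, q ∉ Q → g.p q x = 0}
  zero_mem' := by simp
  one_mem' := by
    intro q hq
    exact g.ne_of g.one (fun h => hq (h ▸ Q.one_mem))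
  add_mem' := by
    intro x y hx hy q hq
    rw [map_add, hx q hq, hy q hq, add_zero]
  neg_mem' := by
    intro x hx q hq
    rw [map_neg, hx q hq, neg_zero]
  mul_mem' := by
    intro x y hx hy r hr
    rw [← g.sum x, ← g.sum y, Finset.sum_mul_sum, map_sum]
    apply Finset.sum_eq_zero
    intro q _
    rw [map_sum]
    apply Finset.sum_eq_zero
    intro q' _
    by_cases h1 : q ∈ Q
    · by_cases h2 : q' ∈ Q
      · exact g.ne_of (g.mul q q' x y) (fun h => hr (h ▸ Q.mul_mem h1 h2))
      · rw [hy _ h2, mul_zero, map_zero]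
    · rw [hx _ h1, zero_mul, map_zero]

lemma mem_sub {Q : Subgroup P} {x : R} : x ∈ g.sub Q ↔ ∀ q, q ∉ Q → g.p q x = 0 := Iff.rfl

/-- Twisting by a hom into the units. -/
def twAdd (u : P →* R) : R →+ R := ∑ q, (AddMonoidHom.mulRight (u q)).comp (g.p q)

lemma twAdd_apply (u : P →* R) (x : R) : g.twAdd u x = ∑ q, g.p q x * u q := by
  simp [twAdd]

lemma twAdd_hom (u : P →* R) {q : P} {x : R} (hx : g.p q x = x) : g.twAdd u x = x * u q := by
  rw [twAdd_apply, Finset.sum_eq_single q]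
  · rw [hx]
  · intro r _ hr
    rw [g.ne_of hx hr.symm, zero_mul]
  · simp

/-- Twisting as a ring hom. -/
def tw (u : P →* R) : R →+* R where
  toFun := g.twAdd u
  map_zero' := map_zero _
  map_add' := map_add _
  map_one' := by rw [g.twAdd_hom u g.one, map_one, one_mul]
  map_mul' x y := by
    rw [g.twAdd_apply u x, g.twAdd_apply u y, Finset.sum_mul_sum]
    conv_lhs => rw [← g.sum x, ← g.sum y, Finset.sum_mul_sum]
    rw [map_sum]
    apply Finset.sum_congr rfl
    intro q _
    rw [map_sum]
    apply Finset.sum_congr rfl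
    intro q' _
    rw [g.twAdd_hom u (g.mul q q' x y), map_mul]
    ring

lemma tw_apply (u : P →* R) (x : R) : g.tw u x = ∑ q, g.p q x * u q := g.twAdd_apply u x

lemma tw_hom (u : P →* R) {q : P} {x : R} (hx : g.p q x = x) : g.tw u x = x * u q :=
  g.twAdd_hom u hx

lemma equiv_of (Q : Subgroup P) {V S : Type*} [CommGroup V] [Finite V] [CommRing S]
    (u : P →* R) (du : P →* P) (hu : ∀ q, g.p (du q) (u q) = u q)
    (w : V →* R) (dw : V →* P) (hw : ∀ v, g.p (dw v) (w v) = w v)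
    (hinj : ∀ q ∈ Q, ∀ q' ∈ Q, ∀ v v', q * du q * dw v = q' * du q' * dw v' → q = q' ∧ v = v')
    (j : S →+* R) (hj : Function.Injective j)
    (hr : ∀ x, x ∈ j.range ↔ ∀ r, (∀ q ∈ Q, ∀ v, q * du q * dw v ≠ r) → g.p r x = 0) :
    Nonempty (S ≃+* MonoidAlgebra (g.sub Q) V) := by
  classical
  have := Fintype.ofFinite V
  let F : MonoidAlgebra (g.sub Q) V →+* R :=
    liftNCRingHom ((g.tw u).comp (g.sub Q).subtype) w (fun _ _ => Commute.all _ _)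
  have hFs : ∀ v c, F (single v c) = g.tw u c * w v := by
    intro v c
    simp [F, liftNCRingHom, liftNC_single]
  have huu : ∀ q, IsUnit (u q) := fun q => (Group.isUnit q).map u
  have hwu : ∀ v, IsUnit (w v) := fun v => (Group.isUnit v).map w
  have hdeg : ∀ q v (x : R), g.p (q * du q * dw v) (g.p q x * u q * w v) = g.p q x * u q * w v :=
    fun q v x => g.mulh (g.mulh (g.proj q x) (hu q)) (hw v)
  have hF : ∀ c, F c = ∑ v, ∑ q, g.p q (c.coeff v : R) * u q * w v := by
    intro c
    induction c using MonoidAlgebra.induction_linear with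
    | zero => simp
    | add x y hx hy =>
      rw [map_add, hx, hy]
      simp [Finset.sum_add_distrib, add_mul]
    | single v c =>
      rw [hFs, tw_apply, Finset.sum_eq_single v]
      · simp [Finset.sum_mul]
      · intro v' _ hv
        simp [Finsupp.single_apply, hv.symm]
      · simp
  have hpF : ∀ c, ∀ q ∈ Q, ∀ v, g.p (q * du q * dw v) (F c) = g.p q (c.coeff v : R) * u q * w v := by
    intro c q hq v
    rw [hF, map_sum, Finset.sum_eq_single v]
    · rw [map_sum, Finset.sum_eq_single q]
      · exact hdeg _ _ _
      · intro q' _ hq'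
        by_cases h : q' ∈ Q
        · exact g.ne_of (hdeg _ _ _) (fun h0 => hq' (hinj _ h _ hq _ _ h0).1)
        · rw [(c.coeff v).2 q' h]; simp
      · simp
    · intro v' _ hv'
      rw [map_sum]
      apply Finset.sum_eq_zero
      intro q' _
      by_cases h : q' ∈ Q
      · exact g.ne_of (hdeg _ _ _) (fun h0 => hv' (hinj _ h _ hq _ _ h0).2)
      · rw [(c.coeff v').2 q' h]; simp
    · simp
  have hFinj : Function.Injective F := by
    rw [injective_iff_map_eq_zero]
    intro c hc
    ext v
    rw [← g.sum (c.coeff v : R)]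
    simp only [coeff_zero, Finsupp.coe_zero, Pi.zero_apply, ZeroMemClass.coe_zero]
    apply Finset.sum_eq_zero
    intro q _
    by_cases h : q ∈ Q
    · have := hpF c q h v
      rw [hc, map_zero, eq_comm, (hwu v).mul_left_eq_zero, (huu q).mul_left_eq_zero] at this
      exact this
    · exact (c.coeff v).2 q h
  have hrange : F.range = j.range := by
    ext x
    rw [hr]
    constructor
    · rintro ⟨c, rfl⟩ r hr
      rw [hF, map_sum]
      apply Finset.sum_eq_zero
      intro v _
      rw [map_sum]
      apply Finset.sum_eq_zero
      intro q _
      by_cases h : q ∈ Q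
      · exact g.ne_of (hdeg _ _ _) (hr q h v)
      · rw [(c.coeff v).2 q h]; simp
    · intro hx
      rw [← g.sum x]
      apply Subring.sum_mem
      intro r _
      by_cases h : ∀ q ∈ Q, ∀ v, q * du q * dw v ≠ r
      · rw [hx r h]; exact Subring.zero_mem _
      · push Not at h
        obtain ⟨q, hq, v, hqv⟩ := h
        have hy : g.p q (g.p r x * u (q⁻¹) * w (v⁻¹)) = g.p r x * u (q⁻¹) * w (v⁻¹) := by
          have := g.mulh (g.mulh (g.proj r x) (hu q⁻¹)) (hw v⁻¹)
          rw [← hqv] at this ⊢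
          simpa [mul_assoc, mul_comm, mul_left_comm] using this
        have hmem : g.p r x * u (q⁻¹) * w (v⁻¹) ∈ g.sub Q := by
          intro q' hq'
          exact g.ne_of hy (fun h => hq' (h ▸ hq))
        refine ⟨single v ⟨_, hmem⟩, ?_⟩
        rw [hFs]
        show g.tw u (g.p r x * u (q⁻¹) * w (v⁻¹)) * w v = _
        rw [g.tw_hom u hy]
        have e1 : u q⁻¹ * u q = 1 := by rw [← map_mul]; simp
        have e2 : w v⁻¹ * w v = 1 := by rw [← map_mul]; simp
        calc g.p r x * u q⁻¹ * w v⁻¹ * u q * w v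
            = g.p r x * (u q⁻¹ * u q) * (w v⁻¹ * w v) := by ring
          _ = g.p r x := by rw [e1, e2]; ring
  have e1 : S ≃+* j.range := RingEquiv.ofBijective j.rangeRestrict
    ⟨fun a b h => hj (congrArg Subtype.val h), j.rangeRestrict_surjective⟩
  have e2 : MonoidAlgebra (g.sub Q) V ≃+* F.range := RingEquiv.ofBijective F.rangeRestrict
    ⟨fun a b h => hFinj (congrArg Subtype.val h), F.rangeRestrict_surjective⟩
  exact ⟨e1.trans ((RingEquiv.subringCongr hrange.symm).trans e2.symm)⟩

end Gr

section bi
variable {R A B G H : Type*} [CommRing R] [CommRing A] [CommGroup G]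
  [CommRing B] [CommGroup H]

lemma gp_proj (ψ : R ≃+* MonoidAlgebra A G) (g : G) (x : R) :
    gp ψ g (gp ψ g x) = gp ψ g x := by
  simp [gp_apply]

lemma gp_ne (ψ : R ≃+* MonoidAlgebra A G) {g g' : G} (h : g ≠ g') (x : R) :
    gp ψ g (gp ψ g' x) = 0 := by
  classical
  simp [gp_apply, Finsupp.single_apply, h.symm]

lemma gp_mul (ψ : R ≃+* MonoidAlgebra A G) {g g' : G} {x y : R} (hx : gp ψ g x = x)
    (hy : gp ψ g' y = y) : gp ψ (g * g') (x * y) = x * y := by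
  rw [← hx, ← hy, gp_apply, gp_apply, gp_apply, ← map_mul, single_mul_single]
  simp

lemma gp_single (ψ : R ≃+* MonoidAlgebra A G) (g : G) (a : A) :
    gp ψ g (ψ.symm (single g a)) = ψ.symm (single g a) := by
  simp [gp_apply]

lemma gp_one (ψ : R ≃+* MonoidAlgebra A G) : gp ψ 1 1 = 1 := by
  have := gp_single ψ 1 1
  rwa [← one_def, map_one] at this

/-- The common refinement of two group ring gradings. -/
noncomputable def biGr [Fintype G] [Fintype H] [Module.Finite ℤ R] [IsReduced R]
    [Module.IsTorsionFree ℤ R] (ψ : R ≃+* MonoidAlgebra A G) (φ : R ≃+* MonoidAlgebra B H) :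
    Gr (G × H) R where
  p q := (gp ψ q.1).comp (gp φ q.2)
  sum x := by
    rw [Fintype.sum_prod_type]
    simp only [AddMonoidHom.comp_apply, ← map_sum, gp_sum]
  proj q x := by
    simp only [AddMonoidHom.comp_apply]
    rw [← gp_commute ψ φ, gp_proj, gp_proj]
  orth q q' x h := by
    simp only [AddMonoidHom.comp_apply]
    rw [← gp_commute ψ φ]
    by_cases h1 : q.1 = q'.1
    · have h2 : q.2 ≠ q'.2 := fun h2 => h (Prod.ext h1 h2)
      rw [gp_ne φ h2, map_zero, map_zero]
    · rw [gp_ne ψ h1]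
  mul q q' x y := by
    simp only [AddMonoidHom.comp_apply, Prod.fst_mul, Prod.snd_mul]
    rw [gp_mul φ, gp_mul ψ]
    · exact gp_proj _ _ _
    · exact gp_proj _ _ _
    · rw [gp_commute ψ φ, gp_proj]
    · rw [gp_commute ψ φ, gp_proj]
  one := by
    simp only [AddMonoidHom.comp_apply, Prod.fst_one, Prod.snd_one]
    rw [gp_one, gp_one]

end bi
end Stark


namespace Stark

lemma exists_idem_pow {M : Type*} [Monoid M] [Finite M] (f : M) :
    ∃ n, 0 < n ∧ IsIdempotentElem (f ^ n) := by
  obtain ⟨a, b, hab, h⟩ := Finite.exists_ne_map_eq_of_infinite (fun n : ℕ => f ^ (n + 1))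
  wlog hlt : a < b generalizing a b
  · exact this b a hab.symm h.symm (by omega)
  obtain ⟨d, rfl⟩ := Nat.exists_eq_add_of_lt hlt
  have h1 : ∀ k, f ^ (a + 1 + k) = f ^ (a + 1 + k + (d + 1)) := by
    intro k
    rw [pow_add, h, ← pow_add]; congr 1; ring
  have h2 : ∀ m k, f ^ (a + 1 + k) = f ^ (a + 1 + k + m * (d + 1)) := by
    intro m
    induction m with
    | zero => simp
    | succ m ih =>
      intro k
      rw [h1, add_assoc (a + 1) k, ih]
      congr 1; ring
  refine ⟨(a + 1) * (d + 1), by positivity, ?_⟩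
  have h3 := h2 (a + 1) ((a + 1) * (d + 1) - (a + 1))
  have h4 : a + 1 + ((a + 1) * (d + 1) - (a + 1)) = (a + 1) * (d + 1) := by
    have : a + 1 ≤ (a + 1) * (d + 1) := Nat.le_mul_of_pos_right _ (by omega)
    omega
  rw [h4] at h3
  rw [IsIdempotentElem, ← pow_add, ← h3]

lemma end_fix {H : Type*} [Monoid H] {f : Monoid.End H} {d : H} (h : f d = d) (n : ℕ) :
    (f ^ n) d = d := by
  induction n with
  | zero => rfl
  | succ n ih => rw [pow_succ]; show (f ^ n) (f d) = d; rw [h, ih]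

lemma fitting {G H : Type*} [CommGroup G] [CommGroup H] [Finite G] [Finite H]
    (α : G →* H) (β : H →* G) :
    ∃ (I K : Subgroup H) (L : Subgroup G),
      Function.Bijective (fun x : I × K => (x.1 : H) * x.2 * (α (β x.2))⁻¹) ∧
      Function.Bijective (fun x : I × L => (β x.1)⁻¹ * (x.2 : G) * (β (α x.2))⁻¹) := by
  classical
  have hfinH : Finite (Monoid.End H) := DFunLike.finite _
  have hfinG : Finite (Monoid.End G) := DFunLike.finite _
  let f : Monoid.End H := α.comp β
  let f' : Monoid.End G := β.comp α
  obtain ⟨n1, hn1, h1⟩ := exists_idem_pow f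
  obtain ⟨n2, hn2, h2⟩ := exists_idem_pow f'
  obtain ⟨n, hn, hf, hf'⟩ : ∃ n, 0 < n ∧ IsIdempotentElem (f ^ n) ∧ IsIdempotentElem (f' ^ n) :=
    ⟨n1 * n2, by positivity, by rw [pow_mul]; exact h1.pow _, by rw [mul_comm, pow_mul]; exact h2.pow _⟩
  have hfx : ∀ x, (f ^ n) ((f ^ n) x) = (f ^ n) x := fun x => DFunLike.congr_fun hf x
  have hfx' : ∀ x, (f' ^ n) ((f' ^ n) x) = (f' ^ n) x := fun x => DFunLike.congr_fun hf' x
  have hβ : ∀ m x, β ((f ^ m) x) = (f' ^ m) (β x) := by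
    intro m
    induction m with
    | zero => intro x; rfl
    | succ m ih => intro x; rw [pow_succ, pow_succ]; exact ih (f x)
  have hα : ∀ m x, α ((f' ^ m) x) = (f ^ m) (α x) := by
    intro m
    induction m with
    | zero => intro x; rfl
    | succ m ih => intro x; rw [pow_succ, pow_succ]; exact ih (f' x)
  have hfe : ∀ x, (f ^ n) (α (β x)) = α (β ((f ^ n) x)) := fun x => by
    rw [hβ, hα]
  have hfe' : ∀ x, (f' ^ n) (β (α x)) = β (α ((f' ^ n) x)) := fun x => by
    rw [hα, hβ]
  have hf1 : ∀ x, α (β x) = 1 → (f ^ n) x = 1 := fun x hx => by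
    obtain ⟨m, rfl⟩ := Nat.exists_eq_succ_of_ne_zero hn.ne'
    rw [pow_succ]; show (f ^ m) (α (β x)) = 1
    rw [hx, map_one]
  have hf1' : ∀ x, β (α x) = 1 → (f' ^ n) x = 1 := fun x hx => by
    obtain ⟨m, rfl⟩ := Nat.exists_eq_succ_of_ne_zero hn.ne'
    rw [pow_succ]; show (f' ^ m) (β (α x)) = 1
    rw [hx, map_one]
  let e : H →* H := f ^ n
  let e' : G →* G := f' ^ n
  have hI : ∀ i ∈ e.range, (f ^ n) i = i := by
    rintro _ ⟨x, rfl⟩; exact hfx x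
  have hI' : ∀ i ∈ e'.range, (f' ^ n) i = i := by
    rintro _ ⟨x, rfl⟩; exact hfx' x
  have cle : Nat.card e.range ≤ Nat.card e'.range := by
    refine Nat.card_le_card_of_injective
      (fun x : e.range => (⟨β x, by obtain ⟨_, y, rfl⟩ := x; exact ⟨β y, (hβ n y).symm⟩⟩ : e'.range)) ?_
    intro x y hxy
    have hxy : β x = β y := congrArg Subtype.val hxy
    have h3 := hf1 ((x : H) / y) (by rw [map_div, hxy, div_self', map_one])
    rw [map_div, hI _ x.2, hI _ y.2, div_eq_one] at h3
    exact Subtype.ext h3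
  have cge : Nat.card e'.range ≤ Nat.card e.range := by
    refine Nat.card_le_card_of_injective
      (fun x : e'.range => (⟨α x, by obtain ⟨_, y, rfl⟩ := x; exact ⟨α y, (hα n y).symm⟩⟩ : e.range)) ?_
    intro x y hxy
    have hxy : α x = α y := congrArg Subtype.val hxy
    have h3 := hf1' ((x : G) / y) (by rw [map_div, hxy, div_self', map_one])
    rw [map_div, hI' _ x.2, hI' _ y.2, div_eq_one] at h3
    exact Subtype.ext h3
  have c1 : Nat.card (e.range × e.ker) = Nat.card H := by
    rw [Nat.card_prod, ← Subgroup.index_ker, mul_comm, Subgroup.card_mul_index]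
  have c2 : Nat.card (e.range × e'.ker) = Nat.card G := by
    rw [Nat.card_prod, le_antisymm cle cge, ← Subgroup.index_ker, mul_comm,
      Subgroup.card_mul_index]
  let m1 : e.range × e.ker →* H :=
    (e.range.subtype).coprod (e.ker.subtype * ((α.comp β).comp e.ker.subtype)⁻¹)
  let m2 : e.range × e'.ker →* G :=
    ((β.comp e.range.subtype)⁻¹).coprod (e'.ker.subtype * ((β.comp α).comp e'.ker.subtype)⁻¹)
  have i1 : Function.Injective m1 := by
    rw [injective_iff_map_eq_one]
    rintro ⟨⟨i, hi⟩, ⟨k, hk⟩⟩ h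
    have h : i * (k * (α (β k))⁻¹) = 1 := h
    have hk : (f ^ n) k = 1 := hk
    have hi1 : i = 1 := by
      have := congrArg (f ^ n) h
      rw [map_mul, map_mul, map_inv, hfe, hI i hi, hk] at this
      simpa only [map_one, inv_one, mul_one] using this
    subst hi1
    have hk1 : f k = k := by
      rw [one_mul, mul_inv_eq_one] at h; exact h.symm
    have hk2 : k = 1 := by rw [← hk, end_fix hk1]
    subst hk2
    rfl
  have i2 : Function.Injective m2 := by
    rw [injective_iff_map_eq_one]
    rintro ⟨⟨i, hi⟩, ⟨k, hk⟩⟩ h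
    have h : (β i)⁻¹ * (k * (β (α k))⁻¹) = 1 := h
    have hk : (f' ^ n) k = 1 := hk
    have hi1 : i = 1 := by
      have := congrArg (f' ^ n) h
      rw [map_mul, map_mul, map_inv, map_inv, hfe', ← hβ, hI i hi, hk] at this
      simp only [map_one, inv_one, mul_one, inv_eq_one] at this
      rw [← hI i hi]
      exact hf1 i (by rw [this, map_one])
    subst hi1
    have hk1 : f' k = k := by
      rw [map_one, inv_one, one_mul, mul_inv_eq_one] at h; exact h.symm
    have hk2 : k = 1 := by rw [← hk, end_fix hk1]
    subst hk2
    rfl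
  refine ⟨e.range, e.ker, e'.ker, ?_, ?_⟩
  · have := i1.bijective_of_nat_card_le c1.ge
    convert this using 2 with x
    exact mul_assoc _ _ _
  · have := i2.bijective_of_nat_card_le c2.ge
    convert this using 2 with x
    exact mul_assoc _ _ _

end Stark


namespace Stark
open MonoidAlgebra

section conn
variable {R A B G H : Type*} [CommRing R] [CommRing A] [CommGroup G]
  [CommRing B] [CommGroup H] [Finite G] [Finite H] [Module.Finite ℤ R] [IsReduced R]
    [Module.IsTorsionFree ℤ R]

lemma gp_idem (φ : R ≃+* MonoidAlgebra B H) {e : R} (he : e * e = e) : gp φ 1 e = e := by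
  classical
  have := Fintype.ofFinite H
  have hσ : ∀ σ : R →+* ℂ, σ e = 0 ∨ σ e = 1 := by
    intro σ
    have : σ e * (σ e - 1) = 0 := by
      rw [mul_sub, ← map_mul, he]; ring
    rcases mul_eq_zero.1 this with h | h
    · exact .inl h
    · exact .inr (sub_eq_zero.1 h)
  have h0 : ∀ h, h ≠ 1 → gp φ h e = 0 := by
    intro h hh
    have h1 := gp_mul_eq_zero φ h (u := e) (fun σ => (hσ σ).imp id (fun h => by simp [h]))
    set y := gp φ h e with hy
    have hyy : y * y = y := by
      rw [← sub_eq_zero]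
      apply hom_ext_zero
      intro σ
      have h2 : σ y * (σ e - σ y) = 0 := by rw [← map_sub, ← map_mul, h1, map_zero]
      rw [map_sub, map_mul]
      rcases mul_eq_zero.1 h2 with h3 | h3
      · rw [h3]; ring
      · rw [sub_eq_zero] at h3
        rcases hσ σ with h4 | h4 <;> rw [← h3, h4] <;> ring
    have hp : gp φ h y = y := gp_proj φ h e
    have hp2 := gp_mul φ hp hp
    rw [hyy] at hp2
    rw [← hp, ← hp2, gp_ne φ]
    intro h3
    exact hh (by simpa using h3)
  have := gp_sum φ e
  rwa [Finset.sum_eq_single 1 (fun h _ hh => h0 h hh) (by simp)] at this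

lemma gp_homog (hc : ∀ e : R, e * e = e → e = 0 ∨ e = 1) [Nontrivial R]
    (φ : R ≃+* MonoidAlgebra B H) {u v : R} (huv : v * u = 1)
    {n : ℕ} (hn : n ≠ 0) (hu : u ^ n = 1) : ∃ h, gp φ h u = u := by
  classical
  have := Fintype.ofFinite H
  have hσ : ∀ σ : R →+* ℂ, σ u = 0 ∨ ‖σ u‖ = 1 := by
    intro σ
    right
    have : (σ u) ^ n = 1 := by rw [← map_pow, hu, map_one]
    exact Complex.norm_eq_one_of_pow_eq_one this hn
  have key : ∀ h, gp φ h u = 0 ∨ gp φ h u = u := by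
    intro h
    have h1 := gp_mul_eq_zero φ h hσ
    have h2 : (v * gp φ h u) * (v * gp φ h u) = v * gp φ h u := by
      have : v * gp φ h u * (v * u) - (v * gp φ h u) * (v * gp φ h u) = 0 := by
        linear_combination v * v * h1
      rw [huv, mul_one] at this
      exact (sub_eq_zero.1 this).symm
    have h3 : gp φ h u = u * (v * gp φ h u) := by linear_combination - (gp φ h u) * huv
    rcases hc _ h2 with h | h
    · left; rw [h3, h, mul_zero]
    · right; rw [h3, h, mul_one]
  by_contra hcon
  push Not at hcon
  have hz : ∀ h, gp φ h u = 0 := fun h => (key h).resolve_right (hcon h)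
  have hu0 : u = 0 := by rw [← gp_sum φ u]; exact Finset.sum_eq_zero fun h _ => hz h
  rw [hu0, mul_zero] at huv
  exact zero_ne_one huv

/-- The group elements inside `R`. -/
noncomputable def ofR (ψ : R ≃+* MonoidAlgebra A G) : G →* R :=
  (ψ.symm : MonoidAlgebra A G →* R).comp (of A G)

lemma gp_ofR (ψ : R ≃+* MonoidAlgebra A G) (g : G) : gp ψ g (ofR ψ g) = ofR ψ g :=
  gp_single ψ g 1

lemma exists_deg (hc : ∀ e : R, e * e = e → e = 0 ∨ e = 1) [Nontrivial R]
    (ψ : R ≃+* MonoidAlgebra A G) (φ : R ≃+* MonoidAlgebra B H) :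
    ∃ α : G →* H, ∀ g, gp φ (α g) (ofR ψ g) = ofR ψ g := by
  have h1 : ∀ g, ∃ h, gp φ h (ofR ψ g) = ofR ψ g := by
    intro g
    refine gp_homog hc φ (v := ofR ψ g⁻¹) (n := Nat.card G) (by rw [← map_mul]; simp)
      Nat.card_pos.ne' (by rw [← map_pow]; simp)
  choose α hα using h1
  refine ⟨MonoidHom.mk' α ?_, hα⟩
  intro a b
  by_contra hne
  have h2 := gp_mul φ (hα a) (hα b)
  rw [← map_mul] at h2
  have h3 : ofR ψ (a * b) = 0 := by rw [← hα, ← h2, gp_ne φ hne]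
  have h4 : ofR ψ (a * b) * ofR ψ (a * b)⁻¹ = 1 := by rw [← map_mul]; simp
  rw [h3, zero_mul] at h4
  exact zero_ne_one h4

/-- The coefficient ring inside `R`. -/
noncomputable def coR (ψ : R ≃+* MonoidAlgebra A G) : A →+* R :=
  (ψ.symm : MonoidAlgebra A G →+* R).comp singleOneRingHom

lemma coR_injective (ψ : R ≃+* MonoidAlgebra A G) : Function.Injective (coR ψ) := by
  intro a b h
  have : (single 1 a : MonoidAlgebra A G) = single 1 b := ψ.symm.injective h
  simpa using this

lemma mem_coR (ψ : R ≃+* MonoidAlgebra A G) (x : R) : x ∈ (coR ψ).range ↔ gp ψ 1 x = x := by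
  constructor
  · rintro ⟨a, rfl⟩
    exact gp_single ψ 1 a
  · intro h
    rw [gp_apply] at h
    exact ⟨_, h⟩

lemma mem_coR' (ψ : R ≃+* MonoidAlgebra A G) (x : R) :
    x ∈ (coR ψ).range ↔ ∀ g ≠ 1, gp ψ g x = 0 := by
  classical
  have := Fintype.ofFinite G
  rw [mem_coR]
  constructor
  · intro h g hg
    rw [← h, gp_ne ψ hg]
  · intro h
    have := gp_sum ψ x
    rwa [Finset.sum_eq_single 1 (fun g _ hg => h g hg) (by simp)] at this

end conn

theorem connected {R A B G H : Type u} [CommRing R] [CommRing A] [CommGroup G]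
    [CommRing B] [CommGroup H] [Finite G] [Finite H] [Module.Finite ℤ R] [IsReduced R]
    [Module.IsTorsionFree ℤ R] [Nontrivial R]
    (hc : ∀ e : R, e * e = e → e = 0 ∨ e = 1)
    (ψ : R ≃+* MonoidAlgebra A G) (φ : R ≃+* MonoidAlgebra B H) :
    ∃ (C : Type u) (_ : CommRing C) (I K : Subgroup H) (L : Subgroup G),
      Nonempty (A ≃+* MonoidAlgebra C K) ∧ Nonempty (B ≃+* MonoidAlgebra C L) ∧
      Nonempty (I × K ≃* H) ∧ Nonempty (I × L ≃* G) := by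
  classical
  have := Fintype.ofFinite H
  have := Fintype.ofFinite G
  obtain ⟨α, hα⟩ := exists_deg hc ψ φ
  obtain ⟨β, hβ⟩ := exists_deg hc φ ψ
  obtain ⟨I, K, L, h1, h2⟩ := fitting α β
  let g := biGr ψ φ
  have hgp : ∀ q x, g.p q x = gp ψ q.1 (gp φ q.2 x) := fun q x => rfl
  have hofG : ∀ a, g.p (a, α a) (ofR ψ a) = ofR ψ a := by
    intro a; rw [hgp, hα, gp_ofR]
  have hofH : ∀ b, g.p (β b, b) (ofR φ b) = ofR φ b := by
    intro b; rw [hgp, gp_ofR, hβ]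
  let Q : Subgroup (G × H) := I.map (MonoidHom.inr G H)
  have hQ : ∀ q, q ∈ Q ↔ ∃ i ∈ I, q = (1, i) := by
    intro q
    simp [Q, Subgroup.mem_map, eq_comm]
  refine ⟨g.sub Q, inferInstance, I, K, L, ?_, ?_, ?_, ?_⟩
  · let dw : K →* G × H := (((β.prod (MonoidHom.id H)).comp K.subtype)) *
        ((((MonoidHom.id G).prod α).comp β).comp (K.subtype.comp (invMonoidHom : K →* K)))
    have hd : ∀ i (k : K), ((1 : G), i) * (1 : G × H →* G × H) (1, i) * dw k
        = (1, i * k * (α (β k))⁻¹) := by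
      intro i k
      ext <;> simp [dw, mul_assoc]
    refine g.equiv_of Q (V := K) 1 1 (fun q => g.one)
      (((ofR φ).comp K.subtype) * (((ofR ψ).comp β).comp (K.subtype.comp (invMonoidHom : K →* K))))
      dw ?_ ?_ (coR ψ) (coR_injective ψ) ?_
    · intro k
      exact g.mulh (hofH _) (hofG _)
    · intro q hq q' hq' v v' h
      obtain ⟨i, hi, rfl⟩ := (hQ q).1 hq
      obtain ⟨i', hi', rfl⟩ := (hQ q').1 hq'
      rw [hd, hd] at h
      have h3 := @h1.1 (⟨i, hi⟩, v) (⟨i', hi'⟩, v') (congrArg Prod.snd h)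
      simp only [Prod.mk.injEq, Subtype.mk.injEq] at h3
      rw [h3.1]
      exact ⟨rfl, h3.2⟩
    · intro x
      rw [mem_coR']
      constructor
      · intro h r hr
        by_cases hr1 : r.1 = 1
        · obtain ⟨⟨i, k⟩, hik⟩ := h1.2 r.2
          refine absurd ?_ (hr (1, i) ((hQ _).2 ⟨i, i.2, rfl⟩) k)
          rw [hd]
          exact Prod.ext hr1.symm hik
        · rw [hgp, gp_commute ψ φ, h _ hr1, map_zero]
      · intro h a ha
        rw [← gp_sum φ (gp ψ a x)]
        apply Finset.sum_eq_zero
        intro b _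
        rw [← gp_commute ψ φ]
        refine h (a, b) ?_
        intro q hq v h3
        obtain ⟨i, hi, rfl⟩ := (hQ q).1 hq
        rw [hd] at h3
        exact ha (congrArg Prod.fst h3).symm
  · let dw : L →* G × H := ((((MonoidHom.id G).prod α).comp L.subtype)) *
        (((β.prod (MonoidHom.id H)).comp α).comp (L.subtype.comp (invMonoidHom : L →* L)))
    let du : G × H →* G × H :=
      (β.prod (MonoidHom.id H)).comp ((invMonoidHom : H →* H).comp (MonoidHom.snd G H))
    have hd : ∀ i (k : L), ((1 : G), i) * du (1, i) * dw k
        = ((β i)⁻¹ * k * (β (α k))⁻¹, 1) := by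
      intro i k
      ext <;> simp [dw, du, mul_assoc]
    refine g.equiv_of Q (V := L)
      ((ofR φ).comp ((invMonoidHom : H →* H).comp (MonoidHom.snd G H))) du ?_
      (((ofR ψ).comp L.subtype) * (((ofR φ).comp α).comp (L.subtype.comp (invMonoidHom : L →* L))))
      dw ?_ ?_ (coR φ) (coR_injective φ) ?_
    · intro q
      exact hofH _
    · intro k
      exact g.mulh (hofG _) (hofH _)
    · intro q hq q' hq' v v' h
      obtain ⟨i, hi, rfl⟩ := (hQ q).1 hq
      obtain ⟨i', hi', rfl⟩ := (hQ q').1 hq'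
      rw [hd, hd] at h
      have h3 := @h2.1 (⟨i, hi⟩, v) (⟨i', hi'⟩, v') (congrArg Prod.fst h)
      simp only [Prod.mk.injEq, Subtype.mk.injEq] at h3
      rw [h3.1]
      exact ⟨rfl, h3.2⟩
    · intro x
      rw [mem_coR']
      constructor
      · intro h r hr
        by_cases hr1 : r.2 = 1
        · obtain ⟨⟨i, k⟩, hik⟩ := h2.2 r.1
          refine absurd ?_ (hr (1, i) ((hQ _).2 ⟨i, i.2, rfl⟩) k)
          rw [hd]
          exact Prod.ext hik hr1.symm
        · rw [hgp, h _ hr1, map_zero]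
      · intro h b hb
        rw [← gp_sum ψ (gp φ b x)]
        apply Finset.sum_eq_zero
        intro a _
        refine h (a, b) ?_
        intro q hq v h3
        obtain ⟨i, hi, rfl⟩ := (hQ q).1 hq
        rw [hd] at h3
        exact hb (congrArg Prod.snd h3).symm
  · refine ⟨MulEquiv.ofBijective ((I.subtype).coprod (K.subtype * ((α.comp β).comp K.subtype)⁻¹)) ?_⟩
    convert h1 using 2 with x
    exact (mul_assoc _ _ _).symm
  · refine ⟨MulEquiv.ofBijective
      (((β.comp I.subtype)⁻¹).coprod (L.subtype * ((β.comp α).comp L.subtype)⁻¹)) ?_⟩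
    convert h2 using 2 with x
    exact (mul_assoc _ _ _).symm

end Stark


namespace Stark

/-- The number of elements killed by `k`. -/
noncomputable def tc (G : Type*) [CommGroup G] (k : ℕ) : ℕ := Nat.card {x : G // x ^ k = 1}

lemma tc_congr {G H : Type*} [CommGroup G] [CommGroup H] (e : G ≃* H) (k : ℕ) : tc G k = tc H k := by
  apply Nat.card_congr
  refine e.toEquiv.subtypeEquiv ?_
  intro x
  show _ ↔ (e x) ^ k = 1
  rw [← map_pow, map_eq_one_iff e e.injective]

lemma tc_ne {G : Type*} [CommGroup G] [Finite G] (k : ℕ) : tc G k ≠ 0 := by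
  have : Nonempty {x : G // x ^ k = 1} := ⟨⟨1, one_pow k⟩⟩
  exact Nat.card_pos.ne'

lemma tc_prod (G H : Type*) [CommGroup G] [CommGroup H] (k : ℕ) : tc (G × H) k = tc G k * tc H k := by
  rw [tc, tc, tc, ← Nat.card_prod]
  refine Nat.card_congr ⟨fun x => (⟨x.1.1, congrArg Prod.fst x.2⟩, ⟨x.1.2, congrArg Prod.snd x.2⟩),
    fun x => ⟨(x.1.1, x.2.1), Prod.ext x.1.2 x.2.2⟩, fun x => rfl, fun x => rfl⟩

lemma tc_pi {ι : Type*} [Fintype ι] (M : ι → Type*) [∀ i, CommGroup (M i)] (k : ℕ) :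
    tc (∀ i, M i) k = ∏ i, tc (M i) k := by
  simp only [tc]
  rw [← Nat.card_pi]
  exact Nat.card_congr ⟨fun x i => ⟨x.1 i, congrFun x.2 i⟩,
    fun x => ⟨fun i => (x i).1, funext fun i => (x i).2⟩, fun x => rfl, fun x => rfl⟩

/-- Cyclic group of prime power order. -/
abbrev zc (q : ℕ × ℕ) : Type := Multiplicative (ZMod (q.1 ^ (q.2 + 1)))

lemma tc_zc (q : ℕ × ℕ) (hq : q.1.Prime) (k : ℕ) : tc (zc q) k = (q.1 ^ (q.2 + 1)).gcd k := by
  have : NeZero (q.1 ^ (q.2 + 1)) := ⟨pow_ne_zero _ hq.ne_zero⟩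
  have : IsCyclic (zc q) := inferInstance
  have h := IsCyclic.card_powMonoidHom_ker (G := zc q) k
  rw [Nat.card_congr (Multiplicative.toAdd (α := ZMod (q.1 ^ (q.2 + 1)))), Nat.card_zmod] at h
  exact h

/-- The multiplicity of the cyclic group of order `p^(e+1)`. -/
noncomputable def mu (G : Type*) [CommGroup G] (q : ℕ × ℕ) : ℤ :=
  2 * ((tc G (q.1 ^ (q.2 + 1))).factorization q.1 : ℤ) - (tc G (q.1 ^ q.2)).factorization q.1
    - (tc G (q.1 ^ (q.2 + 2))).factorization q.1

lemma mu_congr {G H : Type*} [CommGroup G] [CommGroup H] (e : G ≃* H) (q : ℕ × ℕ) :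
    mu G q = mu H q := by
  simp only [mu, tc_congr e]

lemma mu_prod (G H : Type*) [CommGroup G] [CommGroup H] [Finite G] [Finite H] (q : ℕ × ℕ) :
    mu (G × H) q = mu G q + mu H q := by
  simp only [mu, tc_prod, Nat.factorization_mul (tc_ne _) (tc_ne _), Finsupp.add_apply]
  push_cast
  ring

lemma mu_pi {ι : Type*} [Fintype ι] (M : ι → Type*) [∀ i, CommGroup (M i)] [∀ i, Finite (M i)]
    (q : ℕ × ℕ) : mu (∀ i, M i) q = ∑ i, mu (M i) q := by
  simp only [mu, tc_pi, Nat.factorization_prod (fun _ _ => tc_ne _), Finsupp.finsetSum_apply]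
  push_cast
  rw [Finset.sum_sub_distrib, Finset.sum_sub_distrib, Finset.mul_sum]

lemma mu_zc (q r : ℕ × ℕ) (hq : q.1.Prime) (hr : r.1.Prime) :
    mu (zc q) r = if q = r then 1 else 0 := by
  have h : ∀ k, ((q.1 ^ (q.2 + 1)).gcd (r.1 ^ k)).factorization r.1 =
      if q.1 = r.1 then min (q.2 + 1) k else 0 := by
    intro k
    rw [Nat.factorization_gcd (pow_ne_zero _ hq.ne_zero) (pow_ne_zero _ hr.ne_zero),
      hq.factorization_pow, hr.factorization_pow, Finsupp.inf_apply, Finsupp.single_eq_same]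
    split_ifs with h
    · rw [h, Finsupp.single_eq_same]
    · rw [Finsupp.single_eq_of_ne (by tauto)]; simp
  simp only [mu, tc_zc q hq, h]
  obtain ⟨a, b⟩ := q
  obtain ⟨c, d⟩ := r
  simp only [Prod.mk.injEq]
  by_cases h1 : a = c
  · simp only [h1, if_true, true_and]
    split_ifs with h2
    · subst h2; rw [min_eq_left, min_eq_right, min_eq_left] <;> omega
    · rcases lt_or_gt_of_ne h2 with h3 | h3
      · rw [min_eq_left, min_eq_left, min_eq_left] <;> omega
      · rw [min_eq_right, min_eq_right, min_eq_right] <;> omega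
  · simp [h1]

lemma exists_decomp (G : Type*) [CommGroup G] [Finite G] :
    ∃ (ι : Type) (_ : Fintype ι) (f : ι → ℕ × ℕ), (∀ i, (f i).1.Prime) ∧
      Nonempty (G ≃* ∀ i, zc (f i)) := by
  classical
  obtain ⟨ι, _, p, hp, e, ⟨E⟩⟩ := AddCommGroup.equiv_directSum_zmod_of_finite (Additive G)
  have E2 : G ≃* ∀ i, Multiplicative (ZMod (p i ^ e i)) := MulEquiv.toAdditive.symm <| E.trans <|
    (DirectSum.addEquivProd _).trans (MulEquiv.piMultiplicative _).toAdditiveRight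
  have hs : ∀ i : {i // e i ≠ 0}, p i ^ e i = p i ^ (e i - 1 + 1) := fun i => by
    rw [Nat.sub_add_cancel (Nat.one_le_iff_ne_zero.2 i.2)]
  refine ⟨{i // e i ≠ 0}, inferInstance, fun i => (p i, e i - 1), fun i => hp i, ⟨E2.trans ?_⟩⟩
  let F : (∀ i, Multiplicative (ZMod (p i ^ e i))) →*
      (∀ i : {i // e i ≠ 0}, Multiplicative (ZMod (p i ^ e i))) :=
    { toFun := fun x i => x i, map_one' := rfl, map_mul' := fun _ _ => rfl }
  have hF : Function.Bijective F := by
    constructor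
    · intro x y h
      funext i
      by_cases hi : e i ≠ 0
      · exact congrFun h ⟨i, hi⟩
      · push Not at hi
        have : Subsingleton (Multiplicative (ZMod (p i ^ e i))) := by
          rw [hi, pow_zero]
          exact inferInstanceAs (Subsingleton (ZMod 1))
        exact Subsingleton.elim _ _
    · intro y
      refine ⟨fun i => if h : e i ≠ 0 then y ⟨i, h⟩ else 1, ?_⟩
      funext i
      exact dif_pos i.2
  refine (MulEquiv.ofBijective F hF).trans (MulEquiv.piCongrRight fun i => ?_)
  show Multiplicative (ZMod (p i ^ e i)) ≃* Multiplicative (ZMod (p i ^ (e i - 1 + 1)))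
  rw [hs i]

lemma zc_finite (q : ℕ × ℕ) (hq : q.1.Prime) : Finite (zc q) := by
  have : NeZero (q.1 ^ (q.2 + 1)) := ⟨pow_ne_zero _ hq.ne_zero⟩
  exact inferInstanceAs (Finite (ZMod (q.1 ^ (q.2 + 1))))

lemma zc_nontrivial (q : ℕ × ℕ) (hq : q.1.Prime) : Nontrivial (zc q) := by
  have : Fact (1 < q.1 ^ (q.2 + 1)) := ⟨Nat.one_lt_pow (by omega) hq.one_lt⟩
  exact inferInstanceAs (Nontrivial (ZMod (q.1 ^ (q.2 + 1))))

lemma mu_decomp {G : Type*} [CommGroup G] {ι : Type} [Fintype ι] {f : ι → ℕ × ℕ}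
    (hf : ∀ i, (f i).1.Prime) (E : G ≃* ∀ i, zc (f i)) (q : ℕ × ℕ) (hq : q.1.Prime) :
    mu G q = Nat.card {i // f i = q} := by
  classical
  have := fun i => zc_finite (f i) (hf i)
  rw [mu_congr E, mu_pi, Finset.sum_congr rfl (fun i _ => mu_zc (f i) q (hf i) hq)]
  simp [Finset.sum_boole, Fintype.card_subtype]

lemma iso_of_mu {G H : Type*} [CommGroup G] [CommGroup H] [Finite G] [Finite H]
    (h : ∀ q : ℕ × ℕ, q.1.Prime → mu G q = mu H q) : Nonempty (G ≃* H) := by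
  obtain ⟨ι, _, f, hf, ⟨E⟩⟩ := exists_decomp G
  obtain ⟨ι', _, f', hf', ⟨E'⟩⟩ := exists_decomp H
  have h1 : ∀ q, Nonempty ({i // f i = q} ≃ {i // f' i = q}) := by
    intro q
    by_cases hq : q.1.Prime
    · have := h q hq
      rw [mu_decomp hf E q hq, mu_decomp hf' E' q hq] at this
      exact Finite.card_eq.1 (by exact_mod_cast this)
    · have : IsEmpty {i // f i = q} := ⟨fun i => hq (i.2 ▸ hf i)⟩
      have : IsEmpty {i // f' i = q} := ⟨fun i => hq (i.2 ▸ hf' i)⟩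
      exact ⟨Equiv.equivOfIsEmpty _ _⟩
  obtain ⟨σ, hσ⟩ : ∃ σ : ι ≃ ι', ∀ i, f' (σ i) = f i :=
    ⟨Equiv.ofFiberEquiv fun q => (h1 q).some, fun i => Equiv.ofFiberEquiv_map _ i⟩
  obtain rfl : f = fun i => f' (σ i) := funext fun i => (hσ i).symm
  let T : (∀ i, zc (f' i)) ≃* (∀ i, zc (f' (σ i))) :=
    { (Equiv.piCongrLeft (fun i => zc (f' i)) σ).symm with map_mul' := fun _ _ => rfl }
  exact ⟨E.trans (T.symm.trans E'.symm)⟩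

lemma split_of_mu {G : Type u} [CommGroup G] [Finite G] (q : ℕ × ℕ) (hq : q.1.Prime)
    (h : 0 < mu G q) : ∃ (G' : Type) (_ : CommGroup G') , Nonempty (G ≃* zc q × G') := by
  classical
  obtain ⟨ι, _, f, hf, ⟨E⟩⟩ := exists_decomp G
  rw [mu_decomp hf E q hq] at h
  have h : 0 < Nat.card {i // f i = q} := by exact_mod_cast h
  obtain ⟨⟨⟨i, rfl⟩⟩, _⟩ := Nat.card_pos_iff.1 h
  refine ⟨∀ j : {j // j ≠ i}, zc (f j), inferInstance, ⟨E.trans ?_⟩⟩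
  exact { Equiv.piSplitAt i (fun j => zc (f j)) with map_mul' := fun _ _ => rfl }

lemma mu_nonneg {G : Type*} [CommGroup G] [Finite G] (q : ℕ × ℕ) (hq : q.1.Prime) : 0 ≤ mu G q := by
  obtain ⟨ι, _, f, hf, ⟨E⟩⟩ := exists_decomp G
  rw [mu_decomp hf E q hq]
  positivity

end Stark


namespace Stark
open MonoidAlgebra

/-- Any two trivial rings are isomorphic. -/
def eqvSub (A B : Type*) [CommRing A] [CommRing B] [Subsingleton A] [Subsingleton B] : A ≃+* B where
  toFun _ := 0
  invFun _ := 0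
  left_inv _ := Subsingleton.elim _ _
  right_inv _ := Subsingleton.elim _ _
  map_mul' _ _ := Subsingleton.elim _ _
  map_add' _ _ := Subsingleton.elim _ _

lemma prod_iso (X Y Z : Type*) [CommRing X] [CommRing Y] [CommGroup Z] :
    Nonempty (MonoidAlgebra (X × Y) Z ≃+* MonoidAlgebra X Z × MonoidAlgebra Y Z) := by
  classical
  refine ⟨RingEquiv.ofBijective
    ((mapRingHom Z (RingHom.fst X Y)).prod (mapRingHom Z (RingHom.snd X Y))) ⟨?_, ?_⟩⟩
  · intro x y h
    ext z
    · have := congrArg (fun t : MonoidAlgebra X Z × MonoidAlgebra Y Z => t.1.coeff z) h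
      simpa using this
    · have := congrArg (fun t : MonoidAlgebra X Z × MonoidAlgebra Y Z => t.2.coeff z) h
      simpa using this
  · rintro ⟨x, y⟩
    refine ⟨ofCoeff (Finsupp.zipWith Prod.mk rfl x.coeff y.coeff), ?_⟩
    ext z
    · simp
    · simp

section quot
variable {R : Type*} [CommRing R] {e : R}

lemma mem_span_idem (he : e * e = e) (x : R) : x ∈ Ideal.span {1 - e} ↔ e * x = 0 := by
  rw [Ideal.mem_span_singleton]
  constructor
  · rintro ⟨c, rfl⟩
    linear_combination - c * he
  · intro h
    exact ⟨x, by linear_combination h⟩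

lemma mk_eq_zero_idem (he : e * e = e) (x : R) :
    Ideal.Quotient.mk (Ideal.span {1 - e}) x = 0 ↔ e * x = 0 := by
  rw [Ideal.Quotient.eq_zero_iff_mem, mem_span_idem he]

lemma quot_reduced [IsReduced R] (he : e * e = e) : IsReduced (R ⧸ Ideal.span {1 - e}) := by
  constructor
  rintro x ⟨n, hn⟩
  obtain ⟨x, rfl⟩ := Ideal.Quotient.mk_surjective x
  rw [← map_pow, mk_eq_zero_idem he] at hn
  rw [mk_eq_zero_idem he]
  have : (e * x) ^ (n + 1) = 0 := by
    rw [mul_pow, pow_succ x, pow_succ e]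
    linear_combination e ^ n * x * hn
  exact IsReduced.eq_zero _ ⟨_, this⟩

lemma quot_tf [Module.IsTorsionFree ℤ R] (he : e * e = e) :
    Module.IsTorsionFree ℤ (R ⧸ Ideal.span {1 - e}) := by
  rw [Module.isTorsionFree_iff_smul_eq_zero]
  intro n x h
  obtain ⟨x, rfl⟩ := Ideal.Quotient.mk_surjective x
  rw [← map_zsmul, mk_eq_zero_idem he, mul_smul_comm, smul_eq_zero] at h
  rwa [mk_eq_zero_idem he]

lemma quot_prod (he : e * e = e) :
    Nonempty (R ≃+* (R ⧸ Ideal.span {1 - e}) × (R ⧸ Ideal.span {1 - (1 - e)})) := by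
  have he' : IsIdempotentElem e := he
  exact ⟨(AlgEquiv.prodQuotientOfIsIdempotentElem R he'.one_sub
    (by simpa using he') (by ring) (by linear_combination -he)).toRingEquiv⟩

lemma quot_iso {A G : Type*} [CommRing A] [CommGroup G] (ψ : R ≃+* MonoidAlgebra A G)
    {a : A} (ha : a * a = a) :
    Nonempty (R ⧸ Ideal.span {1 - ψ.symm (single 1 a)} ≃+*
      MonoidAlgebra (A ⧸ Ideal.span {1 - a}) G) := by
  classical
  set e := ψ.symm (single 1 a) with hedef
  have he : e * e = e := by rw [hedef, ← map_mul, single_mul_single, ha, one_mul]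
  let p : R →+* MonoidAlgebra (A ⧸ Ideal.span {1 - a}) G :=
    (mapRingHom G (Ideal.Quotient.mk (Ideal.span {1 - a}))).comp (ψ : R →+* MonoidAlgebra A G)
  have hp : Function.Surjective p := by
    intro y
    induction y using MonoidAlgebra.induction_linear with
    | zero => exact ⟨0, map_zero _⟩
    | add x y hx hy =>
      obtain ⟨x, rfl⟩ := hx
      obtain ⟨y, rfl⟩ := hy
      exact ⟨x + y, map_add _ _ _⟩
    | single g b =>
      obtain ⟨b, rfl⟩ := Ideal.Quotient.mk_surjective b
      exact ⟨ψ.symm (single g b), by simp [p]⟩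
  have hk : Ideal.span {1 - e} = RingHom.ker p := by
    ext x
    rw [mem_span_idem he, RingHom.mem_ker]
    have h1 : e * x = 0 ↔ single 1 a * ψ x = 0 := by
      rw [← map_eq_zero_iff ψ ψ.injective, map_mul, hedef, ψ.apply_symm_apply]
    have h2 : ∀ y : MonoidAlgebra A G, single 1 a * y = 0 ↔ ∀ g, a * y.coeff g = 0 := by
      intro y
      rw [← coeff_inj, Finsupp.ext_iff]
      simp
    have h3 : p x = 0 ↔ ∀ g, Ideal.Quotient.mk (Ideal.span {1 - a}) ((ψ x).coeff g) = 0 := by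
      rw [← coeff_inj, Finsupp.ext_iff]
      simp [p]
    rw [h1, h2, h3]
    simp only [mk_eq_zero_idem ha]
  exact ⟨(Ideal.quotEquivOfEq hk).trans (RingHom.quotientKerEquivOfSurjective hp)⟩

end quot

lemma general_sub {R A B G H : Type u} [CommRing R] [CommRing A] [CommGroup G]
    [CommRing B] [CommGroup H] [Finite G] [Finite H] [Module.Finite ℤ R] [IsReduced R]
    [Module.IsTorsionFree ℤ R] [Subsingleton R]
    (ψ : R ≃+* MonoidAlgebra A G) (φ : R ≃+* MonoidAlgebra B H) :
    (Nonempty (G ≃* H) → Nonempty (A ≃+* B)) ∧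
    (∀ q : ℕ × ℕ, q.1.Prime → mu G q < mu H q → ∃ (A' : Type u) (_ : CommRing A'),
      Nonempty (A ≃+* MonoidAlgebra A' (zc q))) := by
  have : Subsingleton A := (coR_injective ψ).subsingleton
  have : Subsingleton B := (coR_injective φ).subsingleton
  refine ⟨fun _ => ⟨eqvSub _ _⟩, fun q _ _ => ⟨A, inferInstance, ?_⟩⟩
  have : Subsingleton (MonoidAlgebra A (zc q)) := inferInstance
  exact ⟨eqvSub _ _⟩

lemma general (n : ℕ) : ∀ {R A B G H : Type u} [CommRing R] [CommRing A] [CommGroup G]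
    [CommRing B] [CommGroup H] [Finite G] [Finite H] [Module.Finite ℤ R] [IsReduced R]
    [Module.IsTorsionFree ℤ R] (_ : Module.finrank ℤ R ≤ n)
    (_ : R ≃+* MonoidAlgebra A G) (_ : R ≃+* MonoidAlgebra B H),
    (Nonempty (G ≃* H) → Nonempty (A ≃+* B)) ∧
    (∀ q : ℕ × ℕ, q.1.Prime → mu G q < mu H q → ∃ (A' : Type u) (_ : CommRing A'),
      Nonempty (A ≃+* MonoidAlgebra A' (zc q))) := by
  induction n with
  | zero =>
    intro R A B G H _ _ _ _ _ _ _ _ _ _ hn ψ φ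
    rcases subsingleton_or_nontrivial R with hR | hR
    · exact general_sub ψ φ
    · have : 0 < Module.finrank ℤ R := Module.finrank_pos
      omega
  | succ n ih =>
    intro R A B G H _ _ _ _ _ _ _ _ _ _ hn ψ φ
    rcases subsingleton_or_nontrivial R with hR | hR
    · exact general_sub ψ φ
    by_cases hc : ∀ e : R, e * e = e → e = 0 ∨ e = 1
    · obtain ⟨C, _, I, K, L, ⟨a1⟩, ⟨a2⟩, ⟨a3⟩, ⟨a4⟩⟩ := connected hc ψ φ
      constructor
      · rintro ⟨E⟩
        have : Nonempty (K ≃* L) := by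
          apply iso_of_mu
          intro q hq
          have h1 := mu_congr a3 q
          have h2 := mu_congr a4 q
          rw [mu_prod] at h1 h2
          have h3 := mu_congr E q
          linarith
        obtain ⟨E2⟩ := this
        exact ⟨a1.trans ((mapDomainRingEquiv C E2).trans a2.symm)⟩
      · intro q hq hlt
        have h1 := mu_congr a3 q
        have h2 := mu_congr a4 q
        rw [mu_prod] at h1 h2
        have h3 := mu_nonneg (G := L) q hq
        obtain ⟨G', _, ⟨E⟩⟩ := split_of_mu (G := K) q hq (by linarith)
        exact ⟨MonoidAlgebra C G', inferInstance,
          ⟨a1.trans ((mapDomainRingEquiv C E).trans curryRingEquiv)⟩⟩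
    · push Not at hc
      obtain ⟨e, he, he0, he1⟩ := hc
      obtain ⟨a, ha⟩ := (mem_coR ψ e).2 (gp_idem ψ he)
      obtain ⟨b, hb⟩ := (mem_coR φ e).2 (gp_idem φ he)
      have haa : a * a = a := coR_injective ψ (by rw [map_mul, ha, he])
      have hbb : b * b = b := coR_injective φ (by rw [map_mul, hb, he])
      have he' : (1 - e) * (1 - e) = 1 - e := by linear_combination he
      have haa' : (1 - a) * (1 - a) = 1 - a := by linear_combination haa
      have hbb' : (1 - b) * (1 - b) = 1 - b := by linear_combination hbb
      have ha' : coR ψ (1 - a) = 1 - e := by rw [map_sub, ha, map_one]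
      have hb' : coR φ (1 - b) = 1 - e := by rw [map_sub, hb, map_one]
      obtain ⟨ra⟩ := quot_prod haa
      obtain ⟨rb⟩ := quot_prod hbb
      obtain ⟨rr⟩ := quot_prod he
      obtain ⟨p1⟩ := quot_iso ψ haa
      obtain ⟨p2⟩ := quot_iso ψ haa'
      obtain ⟨q1⟩ := quot_iso φ hbb
      obtain ⟨q2⟩ := quot_iso φ hbb'
      rw [show ψ.symm (single 1 a) = e from ha] at p1
      rw [show ψ.symm (single 1 (1 - a)) = 1 - e from ha'] at p2
      rw [show φ.symm (single 1 b) = e from hb] at q1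
      rw [show φ.symm (single 1 (1 - b)) = 1 - e from hb'] at q2
      have := quot_reduced he
      have := quot_reduced he'
      have := quot_tf he
      have := quot_tf he'
      have f1 : Module.Finite ℤ (R ⧸ Ideal.span {1 - e}) :=
        Module.Finite.of_surjective (Ideal.Quotient.mk (Ideal.span {1 - e})).toIntAlgHom.toLinearMap
          Ideal.Quotient.mk_surjective
      have f2 : Module.Finite ℤ (R ⧸ Ideal.span {1 - (1 - e)}) :=
        Module.Finite.of_surjective (Ideal.Quotient.mk (Ideal.span {1 - (1 - e)})).toIntAlgHom.toLinearMap
          Ideal.Quotient.mk_surjective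
      have n1 : Nontrivial (R ⧸ Ideal.span {1 - e}) := by
        rw [nontrivial_iff_exists_ne 0]
        refine ⟨Ideal.Quotient.mk _ 1, ?_⟩
        rw [Ne, mk_eq_zero_idem he, mul_one]
        exact he0
      have n2 : Nontrivial (R ⧸ Ideal.span {1 - (1 - e)}) := by
        rw [nontrivial_iff_exists_ne 0]
        refine ⟨Ideal.Quotient.mk _ 1, ?_⟩
        rw [Ne, mk_eq_zero_idem he', mul_one, sub_eq_zero]
        exact fun h => he1 h.symm
      have hsum := rr.toAddEquiv.toIntLinearEquiv.finrank_eq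
      rw [Module.finrank_prod] at hsum
      have pos1 : 0 < Module.finrank ℤ (R ⧸ Ideal.span {1 - e}) := Module.finrank_pos
      have pos2 : 0 < Module.finrank ℤ (R ⧸ Ideal.span {1 - (1 - e)}) := Module.finrank_pos
      obtain ⟨i1, i2⟩ := ih (by omega) p1 q1
      obtain ⟨j1, j2⟩ := ih (by omega) p2 q2
      constructor
      · intro E
        obtain ⟨x1⟩ := i1 E
        obtain ⟨x2⟩ := j1 E
        exact ⟨ra.trans ((RingEquiv.prodCongr x1 x2).trans rb.symm)⟩
      · intro q hq hlt
        obtain ⟨X, _, ⟨x1⟩⟩ := i2 q hq hlt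
        obtain ⟨Y, _, ⟨x2⟩⟩ := j2 q hq hlt
        obtain ⟨z⟩ := prod_iso X Y (zc q)
        exact ⟨X × Y, inferInstance, ⟨ra.trans ((RingEquiv.prodCongr x1 x2).trans z.symm)⟩⟩

end Stark


namespace Stark
open MonoidAlgebra

lemma step {R A G : Type u} [CommRing R] [CommRing A] [CommGroup G] [Module.Finite ℤ R]
    [IsReduced R] [Module.IsTorsionFree ℤ R] [Nontrivial R] [Nontrivial G]
    (ψ : R ≃+* MonoidAlgebra A G) : Finite G ∧ Module.Finite ℤ A ∧ IsReduced A ∧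
      Module.IsTorsionFree ℤ A ∧ Nontrivial A ∧ Module.finrank ℤ A < Module.finrank ℤ R := by
  have nA : Nontrivial A := by
    by_contra h
    rw [not_nontrivial_iff_subsingleton] at h
    have : Subsingleton (MonoidAlgebra A G) := inferInstance
    have := ψ.injective.subsingleton
    exact not_subsingleton R this
  let E : R ≃ₗ[ℤ] (G →₀ A) := (ψ.toAddEquiv.trans coeffAddEquiv).toIntLinearEquiv
  have fG : Module.Finite ℤ (G →₀ A) := Module.Finite.equiv E
  have fGA := Module.finite_finsupp_iff.1 fG
  have hG : Finite G := by
    rcases fGA with h | h | h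
    · exact Finite.of_subsingleton
    · exact absurd h (not_subsingleton A)
    · exact h.2
  have hi := coR_injective ψ
  have hfin : Module.Finite ℤ A :=
    Module.Finite.of_injective (coR ψ).toIntAlgHom.toLinearMap hi
  have htf : Module.IsTorsionFree ℤ A := by
    rw [Module.isTorsionFree_iff_smul_eq_zero]
    intro n x h
    have h2 := congrArg (coR ψ) h
    rw [map_zsmul, map_zero, smul_eq_zero] at h2
    exact h2.imp id (fun h => (map_eq_zero_iff _ hi).1 h)
  refine ⟨hG, hfin, isReduced_of_injective (coR ψ) hi, htf, nA, ?_⟩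
  have := Fintype.ofFinite G
  have h1 := E.finrank_eq
  rw [Module.finrank_finsupp] at h1
  have h2 : 0 < Module.finrank ℤ A := Module.finrank_pos
  have h3 : 1 < Fintype.card G := Fintype.one_lt_card
  rw [h1]
  nlinarith

lemma exists_stark (n : ℕ) : ∀ {R : Type u} [CommRing R] [Module.Finite ℤ R]
    [IsReduced R] [Module.IsTorsionFree ℤ R] [Nontrivial R] (_ : Module.finrank ℤ R ≤ n),
    ∃ (A : Type u) (_ : CommRing A) (G : Type u) (_ : CommGroup G) (_ : Finite G),
      IsStark A ∧ Nonempty (R ≃+* MonoidAlgebra A G) := by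
  induction n with
  | zero =>
    intro R _ _ _ _ _ h
    have : 0 < Module.finrank ℤ R := Module.finrank_pos
    omega
  | succ n ih =>
    intro R _ _ _ _ _ hn
    by_cases hs : IsStark R
    · exact ⟨R, inferInstance, PUnit, inferInstance, inferInstance, hs,
        ⟨(uniqueRingEquiv PUnit).symm⟩⟩
    · unfold IsStark at hs
      push Not at hs
      obtain ⟨A, iA, G, iG, hG, ⟨ψ⟩⟩ := hs
      have nA : Nontrivial A := by
        by_contra h
        rw [not_nontrivial_iff_subsingleton] at h
        have : Subsingleton (MonoidAlgebra A G) := inferInstance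
        have := ψ.injective.subsingleton
        exact not_subsingleton R this
      have hcomm : ∀ x y : MonoidAlgebra A G, x * y = y * x := by
        intro x y
        apply ψ.symm.injective
        rw [map_mul, map_mul, mul_comm]
      have cA : ∀ a b : A, a * b = b * a := by
        intro a b
        have := hcomm (single 1 a) (single 1 b)
        rw [single_mul_single, single_mul_single] at this
        simpa using this
      have cG : ∀ a b : G, a * b = b * a := by
        intro a b
        apply of_injective (R := A)
        rw [map_mul, map_mul, hcomm]
      letI jA : CommRing A := { iA with mul_comm := cA }
      letI jG : CommGroup G := { iG with mul_comm := cG }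
      have ψ' : R ≃+* MonoidAlgebra A G := ψ
      clear ψ
      obtain ⟨h1, h2, h3, h4, h5, h6⟩ := step ψ'
      obtain ⟨A', _, G', _, _, hst, ⟨E⟩⟩ := ih (R := A) (by omega)
      refine ⟨A', inferInstance, G × G', inferInstance, inferInstance, hst, ⟨?_⟩⟩
      exact ψ'.trans ((mapRingEquiv G E).trans curryRingEquiv.symm)

lemma not_stark {A A' : Type u} [CommRing A] [CommRing A'] (h : IsStark A) (q : ℕ × ℕ)
    (hq : q.1.Prime) (E : A ≃+* MonoidAlgebra A' (zc q)) : False := by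
  have := zc_nontrivial q hq
  exact (h A' inferInstance (ULift.{u} (zc q)) inferInstance inferInstance).false
    (E.trans (mapDomainRingEquiv A' MulEquiv.ulift.symm))

end Stark

/-- Every non-zero reduced order `R` is isomorphic to a group ring `A[G]`
with `A` a stark ring and `G` a finite abelian group, and such `A` and `G` are unique
up to ring isomorphism, respectively group isomorphism. -/
theorem exists_unique_stark_groupring
    {R : Type u} [CommRing R] [Nontrivial R] [Module.Free ℤ R] [Module.Finite ℤ R]
    [IsReduced R] :
    ∃ (A : Type u) (_ : CommRing A) (G : Type u) (_ : CommGroup G) (_ : Finite G),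
      IsStark A ∧ Nonempty (R ≃+* MonoidAlgebra A G) ∧
        ∀ (B : Type u) (_ : CommRing B) (H : Type u) (_ : CommGroup H) (_ : Finite H),
          IsStark B → Nonempty (R ≃+* MonoidAlgebra B H) →
            Nonempty (A ≃+* B) ∧ Nonempty (G ≃* H) := by
  obtain ⟨A, iA, G, iG, fG, hA, ⟨ψ⟩⟩ := Stark.exists_stark (R := R) _ le_rfl
  refine ⟨A, iA, G, iG, fG, hA, ⟨ψ⟩, ?_⟩
  intro B iB H iH fH hB ⟨φ⟩
  obtain ⟨h1, h2⟩ := Stark.general _ le_rfl ψ φ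
  obtain ⟨_, h3⟩ := Stark.general _ le_rfl φ ψ
  have hiso : Nonempty (G ≃* H) := by
    apply Stark.iso_of_mu
    intro q hq
    rcases lt_trichotomy (Stark.mu G q) (Stark.mu H q) with h | h | h
    · obtain ⟨A', _, ⟨E⟩⟩ := h2 q hq h
      exact (Stark.not_stark hA q hq E).elim
    · exact h
    · obtain ⟨B', _, ⟨E⟩⟩ := h3 q hq h
      exact (Stark.not_stark hB q hq E).elim
  exact ⟨h1 hiso, hiso⟩
end

section
/- Let R be a connected reduced order. Suppose A and B are stark subrings of R and G and H are subgroups of the unit group R^* such that the natural ring homomorphisms A[G] → R and B[H] → R are both isomorphisms. Then the natural ring homomorphisms A[H] → R and B[G] → R are also isomorphisms. -/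
/-- The natural ring homomorphism `A[G] → R` for a subring `A ⊆ R` and a subgroup `G ⊆ Rˣ`. -/
noncomputable def gpRgHom {R : Type*} [CommRing R] (A : Subring R) (G : Subgroup Rˣ) :
    MonoidAlgebra A G →+* R :=
  MonoidAlgebra.liftNCRingHom A.subtype ((Units.coeHom R).comp G.subtype)
    (fun _ _ => Commute.all _ _)

/-- `A[G] = R`: the natural map `A[G] → R` is a ring isomorphism. -/
def IsGpRg {R : Type*} [CommRing R] (A : Subring R) (G : Subgroup Rˣ) : Prop :=
  Function.Bijective (gpRgHom A G)

/-- A commutative ring is connected if it is non-zero and `0`, `1` are its only idempotents. -/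
def IsConnectedRing (R : Type*) [CommRing R] : Prop :=
  Nontrivial R ∧ ∀ e : R, IsIdempotentElem e → e = 0 ∨ e = 1

open scoped TensorProduct

theorem xo_exists_embedding {R : Type*} [CommRing R] [Module.Free ℤ R] [Module.Finite ℤ R] [IsReduced R]
    {y : R} (hy : y ≠ 0) : ∃ σ : R →+* ℂ, 1 ≤ ‖σ y‖ := by
  let F := ℚ ⊗[ℤ] R
  let ι : R →ₐ[ℤ] F := Algebra.TensorProduct.includeRight
  have hι : Function.Injective ι :=
    Algebra.TensorProduct.includeRight_injective (RingHom.injective_int _)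
  have hn : ¬ IsNilpotent (ι y) := by
    rintro ⟨n, hn⟩
    rw [← map_pow] at hn
    have : y ^ n = 0 := hι (by rw [hn, map_zero])
    exact hy (IsReduced.eq_zero _ ⟨n, this⟩)
  rw [nilpotent_iff_mem_prime] at hn
  push Not at hn
  obtain ⟨P, hP, hyP⟩ := hn
  have : IsArtinianRing F := IsArtinianRing.of_finite ℚ F
  have hmax : P.IsMaximal := IsArtinianRing.isMaximal_of_isPrime P
  let : Field (F ⧸ P) := Ideal.Quotient.field P
  have : CharZero (F ⧸ P) := algebraRat.charZero _
  have : NumberField (F ⧸ P) := 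
    { to_charZero := inferInstance
      to_finiteDimensional := by
        have : Module.Finite ℚ (F ⧸ P) := inferInstance
        convert this
        exact Subsingleton.elim _ _ }
  let f : R →+* (F ⧸ P) := (Ideal.Quotient.mk P).comp ι.toRingHom
  have hf : f y ≠ 0 := by
    intro h
    exact hyP (Ideal.Quotient.eq_zero_iff_mem.mp h)
  have hint : IsIntegral ℤ (f y) := by
    have : IsIntegral ℤ y := Algebra.IsIntegral.isIntegral y
    exact this.map (f.toIntAlgHom)
  let a : NumberField.RingOfIntegers (F ⧸ P) := ⟨f y, hint⟩
  have ha : a ≠ 0 := by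
    intro h
    exact hf (congrArg Subtype.val h)
  by_contra hc
  push Not at hc
  have hall : ∀ z : NumberField.InfinitePlace (F ⧸ P), z (a : F ⧸ P) < 1 := by
    intro z
    rw [← NumberField.InfinitePlace.norm_embedding_eq]
    exact hc (z.embedding.comp f)
  obtain ⟨w⟩ : Nonempty (NumberField.InfinitePlace (F ⧸ P)) := inferInstance
  exact absurd (NumberField.InfinitePlace.one_le_of_lt_one (w := w) ha (fun z _ => hall z)) (not_le.mpr (hall w))

instance xo_finite_hom {R : Type*} [CommRing R] [Module.Finite ℤ R] : Finite (R →+* ℂ) := by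
  have h1 : LinearIndependent ℂ (fun f : R →* ℂ => (f : R → ℂ)) := linearIndependent_monoidHom R ℂ
  have h2 : LinearIndependent ℂ (fun f : R →+* ℂ => (f : R → ℂ)) :=
    h1.comp (fun f : R →+* ℂ => (f : R →* ℂ)) (fun f g h => by
      ext x; exact DFunLike.congr_fun h x)
  obtain ⟨s, hs⟩ := (Module.Finite.fg_top : (⊤ : Submodule ℤ R).FG)
  -- restrict to generators
  have h3 : LinearIndependent ℂ (fun (f : R →+* ℂ) (i : s) => f i) := by
    rw [linearIndependent_iff'] at h2 ⊢
    intro t c hc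
    apply h2 t c
    let Φ : R →+ ℂ := ∑ f ∈ t, (AddMonoidHom.mulLeft (c f)).comp f.toAddMonoidHom
    have hΦ : ∀ x, Φ x = ∑ f ∈ t, c f * f x := by intro x; simp [Φ]
    have : Φ.toIntLinearMap = 0 := by
      apply LinearMap.ext_on hs
      intro x hx
      have := congrFun hc ⟨x, hx⟩
      simpa [hΦ] using this
    ext x
    have h5 := LinearMap.congr_fun this x
    simp only [AddMonoidHom.coe_toIntLinearMap, hΦ] at h5
    simpa using h5
  exact h3.finite_of_isNoetherian

theorem xo_finite_bounded {R : Type*} [CommRing R] [Module.Free ℤ R] [Module.Finite ℤ R] [IsReduced R]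
    (C : ℝ) : {x : R | ∀ σ : R →+* ℂ, ‖σ x‖ ≤ C}.Finite := by
  classical
  have : Fintype (R →+* ℂ) := Fintype.ofFinite _
  let Ψ : R → ((R →+* ℂ) → ℂ) := fun x σ => σ x
  have hc : IsCompact (Metric.closedBall (0 : (R →+* ℂ) → ℂ) |C|) := isCompact_closedBall _ _
  obtain ⟨t, -, htf, ht⟩ := hc.finite_cover_balls (e := 1/2) (by norm_num)
  have key : ∀ x : R, (∀ σ : R →+* ℂ, ‖σ x‖ ≤ C) → ∃ p ∈ t, Ψ x ∈ Metric.ball p (1/2) := by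
    intro x hx
    have : Ψ x ∈ Metric.closedBall (0 : (R →+* ℂ) → ℂ) |C| := by
      rw [mem_closedBall_zero_iff, pi_norm_le_iff_of_nonneg (abs_nonneg _)]
      intro σ; exact (hx σ).trans (le_abs_self _)
    simpa using ht this
  refine Set.Finite.subset (s := ⋃ p ∈ t, {x : R | Ψ x ∈ Metric.ball p (1/2)}) ?_ ?_
  · refine htf.biUnion fun p _ => Set.Subsingleton.finite ?_
    intro x hx y hy
    by_contra hne
    obtain ⟨σ, hσ⟩ := xo_exists_embedding (sub_ne_zero.mpr hne)
    have h1 : dist (Ψ x) (Ψ y) < 1 := by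
      have h1 := Metric.mem_ball.mp hx
      have h2 := Metric.mem_ball.mp hy
      have := dist_triangle_right (Ψ x) (Ψ y) p
      linarith
    have h2 := dist_le_pi_dist (Ψ x) (Ψ y) σ
    rw [dist_eq_norm] at h2
    rw [map_sub] at hσ
    simp only [Ψ] at h2 h1
    linarith
  · intro x hx
    obtain ⟨p, hp, h⟩ := key x hx
    exact Set.mem_biUnion hp h

/-- `D` is a grading of `R` by `K`, given as a coaction. -/
def XoGr {R K : Type*} [CommRing R] [CommGroup K] (D : R →+* MonoidAlgebra R K) : Prop :=
  ∀ x : R, x ∈ AddSubgroup.closure {s : R | ∃ k, D s = MonoidAlgebra.single k s}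

section coaction
variable {R K : Type*} [CommRing R] [CommGroup K] {D : R →+* MonoidAlgebra R K}

theorem XoGr.induction (hD : XoGr D) {p : R → Prop}
    (h : ∀ s k, D s = MonoidAlgebra.single k s → p s) (h0 : p 0)
    (ha : ∀ x y, p x → p y → p (x + y)) (hn : ∀ x, p x → p (-x)) (x : R) : p x := by
  refine AddSubgroup.closure_induction (p := fun x _ => p x) ?_ h0 ?_ ?_ (hD x)
  · rintro s ⟨k, hk⟩; exact h s k hk
  · intro x y _ _ hx hy; exact ha x y hx hy
  · intro x _ hx; exact hn x hx

theorem XoGr.hom (hD : XoGr D) (x : R) (k : K) :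
    D ((D x).coeff k) = MonoidAlgebra.single k ((D x).coeff k) := by
  classical
  refine hD.induction (p := fun x => D ((D x).coeff k) = MonoidAlgebra.single k ((D x).coeff k))
    ?_ ?_ ?_ ?_ x
  · intro s k' hs
    rw [hs, MonoidAlgebra.coeff_single, Finsupp.single_apply]
    split_ifs with h
    · rw [hs, h]
    · simp
  · simp
  · intro x y hx hy; simp [hx, hy, MonoidAlgebra.single_add]
  · intro x hx; simp [hx, MonoidAlgebra.single_neg]

theorem XoGr.sum [Fintype K] (hD : XoGr D) (x : R) : ∑ k, (D x).coeff k = x := by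
  classical
  refine hD.induction (p := fun x => ∑ k, (D x).coeff k = x) ?_ ?_ ?_ ?_ x
  · intro s k' hs
    simp [hs]
  · simp
  · intro x y hx hy; simp [Finset.sum_add_distrib, hx, hy]
  · intro x hx; simp [hx]

/-- twist of a complex embedding by a character -/
noncomputable def xoTwist (D : R →+* MonoidAlgebra R K) (σ : R →+* ℂ) (χ : K →* ℂˣ) : R →+* ℂ :=
  (MonoidAlgebra.liftNCRingHom σ ((Units.coeHom ℂ).comp χ) (fun _ _ => Commute.all _ _)).comp D

theorem xoTwist_hom (σ : R →+* ℂ) (χ : K →* ℂˣ) {s : R} {k : K}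
    (hs : D s = MonoidAlgebra.single k s) : xoTwist D σ χ s = σ s * χ k := by
  simp [xoTwist, hs]

theorem xoTwist_apply [Fintype K] (hD : XoGr D) (σ : R →+* ℂ) (χ : K →* ℂˣ) (x : R) :
    xoTwist D σ χ x = ∑ k, σ ((D x).coeff k) * χ k := by
  conv_lhs => rw [← hD.sum x]
  rw [map_sum]
  exact Finset.sum_congr rfl fun k _ => xoTwist_hom σ χ (hD.hom x k)

theorem xoTwist_twist (hD : XoGr D) (σ : R →+* ℂ) (χ : K →* ℂˣ) :
    xoTwist D (xoTwist D σ χ) χ⁻¹ = σ := by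
  ext x
  refine hD.induction (p := fun x => xoTwist D (xoTwist D σ χ) χ⁻¹ x = σ x) ?_ ?_ ?_ ?_ x
  · intro s k hs
    rw [xoTwist_hom _ _ hs, xoTwist_hom _ _ hs, mul_assoc, ← Units.val_mul]
    simp
  · simp
  · intro x y hx hy; simp [hx, hy]
  · intro x hx; simp [hx]

theorem xo_char_norm [Finite K] (χ : K →* ℂˣ) (k : K) : ‖(χ k : ℂ)‖ = 1 := by
  have h : (χ k : ℂ) ^ (orderOf k) = 1 := by
    rw [← Units.val_pow_eq_pow_val, ← map_pow, pow_orderOf_eq_one]; simp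
  exact Complex.norm_eq_one_of_pow_eq_one h (orderOf_pos k).ne'

theorem xo_exists_char [Finite K] {k : K} (hk : k ≠ 1) : ∃ χ : K →* ℂˣ, χ k ≠ 1 := by
  have : NeZero (Monoid.exponent K) := ⟨Monoid.exponent_ne_zero_of_finite⟩
  exact CommGroup.exists_apply_ne_one_of_hasEnoughRootsOfUnity K ℂ hk

theorem xo_fourier [Fintype K] (f f' : K → ℂ)
    (h : ∀ χ : K →* ℂˣ, ∑ k, f k * χ k = ∑ k, f' k * χ k) : f = f' := by
  have h1 : LinearIndependent ℂ (fun f : (K →* ℂˣ) →* ℂ => (f : (K →* ℂˣ) → ℂ)) :=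
    linearIndependent_monoidHom (K →* ℂˣ) ℂ
  let ev : K → ((K →* ℂˣ) →* ℂ) := fun k =>
    { toFun := fun χ => (χ k : ℂ), map_one' := by simp, map_mul' := by intro a b; simp }
  have hev : Function.Injective ev := by
    intro k k' hkk
    by_contra hne
    obtain ⟨χ, hχ⟩ := xo_exists_char (k := k * k'⁻¹) (by rwa [Ne, mul_inv_eq_one])
    apply hχ
    have : (χ k : ℂ) = χ k' := DFunLike.congr_fun hkk χ
    rw [map_mul, map_inv, mul_inv_eq_one]
    exact Units.ext this
  have h2 := h1.comp ev hev
  rw [Fintype.linearIndependent_iff] at h2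
  have h3 := h2 (fun k => f k - f' k) (by
    ext χ
    have := h χ
    simp only [Finset.sum_apply, Pi.smul_apply, Function.comp, smul_eq_mul, Pi.zero_apply, sub_mul,
      Finset.sum_sub_distrib]
    exact sub_eq_zero.mpr this)
  ext k
  exact sub_eq_zero.mp (h3 k)

open ComplexConjugate in
theorem xo_orth [Finite K] [Fintype (R →+* ℂ)] (hD : XoGr D) {s t : R} {k l : K}
    (hs : D s = MonoidAlgebra.single k s) (ht : D t = MonoidAlgebra.single l t) (hkl : k ≠ l) :
    ∑ σ : R →+* ℂ, σ s * conj (σ t) = 0 := by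
  obtain ⟨χ, hχ⟩ := xo_exists_char (k := k * l⁻¹) (by rwa [Ne, mul_inv_eq_one])
  have hinj : Function.Injective (fun σ => xoTwist D σ χ) :=
    Function.LeftInverse.injective (g := fun σ => xoTwist D σ χ⁻¹) (fun σ => xoTwist_twist hD σ χ)
  have hbij := hinj.bijective_of_finite
  have h1 : ∑ σ : R →+* ℂ, σ s * conj (σ t) =
      ∑ σ : R →+* ℂ, (xoTwist D σ χ) s * conj ((xoTwist D σ χ) t) :=
    (Function.Bijective.sum_comp hbij (fun σ : R →+* ℂ => σ s * conj (σ t))).symm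
  have h2 : ∑ σ : R →+* ℂ, (xoTwist D σ χ) s * conj ((xoTwist D σ χ) t)
      = ((χ k : ℂ) * conj (χ l : ℂ)) * ∑ σ : R →+* ℂ, σ s * conj (σ t) := by
    rw [Finset.mul_sum]
    refine Finset.sum_congr rfl fun σ _ => ?_
    rw [xoTwist_hom _ _ hs, xoTwist_hom _ _ ht, map_mul]; ring
  have h3 : (χ k : ℂ) * conj (χ l : ℂ) ≠ 1 := by
    intro h
    apply hχ
    have h4 : conj (χ l : ℂ) = (χ l : ℂ)⁻¹ := by
      rw [Complex.inv_eq_conj (xo_char_norm χ l)]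
    rw [h4] at h
    ext
    simpa using h
  rw [h2] at h1
  have h5 : (1 - ((χ k : ℂ) * conj (χ l : ℂ))) * ∑ σ : R →+* ℂ, σ s * conj (σ t) = 0 := by
    rw [sub_mul, one_mul, ← h1, sub_self]
  exact (mul_eq_zero.mp h5).resolve_left (sub_ne_zero.mpr (Ne.symm h3))

/-- The square length. -/
noncomputable def xoQ [Fintype (R →+* ℂ)] (x : R) : ℝ := ∑ σ : R →+* ℂ, ‖σ x‖ ^ 2

open ComplexConjugate in
theorem xoQ_add [Fintype (R →+* ℂ)] {y z : R} (h : ∑ σ : R →+* ℂ, σ y * conj (σ z) = 0) :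
    xoQ (y + z) = xoQ y + xoQ z := by
  have h1 : ∀ σ : R →+* ℂ, ‖σ (y + z)‖ ^ 2 = ‖σ y‖ ^ 2 + ‖σ z‖ ^ 2 + 2 * (σ y * conj (σ z)).re := by
    intro σ
    rw [map_add, ← Complex.normSq_eq_norm_sq, ← Complex.normSq_eq_norm_sq,
      ← Complex.normSq_eq_norm_sq, Complex.normSq_add]
  simp only [xoQ, h1, Finset.sum_add_distrib, ← Finset.mul_sum, ← Complex.re_sum, h]
  simp

theorem xoQ_pos [Module.Free ℤ R] [Module.Finite ℤ R] [IsReduced R] [Fintype (R →+* ℂ)]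
    {y : R} (hy : y ≠ 0) : 0 < xoQ y := by
  obtain ⟨σ, hσ⟩ := xo_exists_embedding hy
  refine Finset.sum_pos' (fun _ _ => by positivity) ⟨σ, Finset.mem_univ _, by positivity⟩

open ComplexConjugate in
/-- an inhomogeneous element splits into shorter ones -/
theorem xo_split [Finite K] [Module.Free ℤ R] [Module.Finite ℤ R] [IsReduced R]
    [Fintype (R →+* ℂ)] (hD : XoGr D) {x : R} (hx : ¬ ∃ k, D x = MonoidAlgebra.single k x) :
    ∃ y z, x = y + z ∧ xoQ y < xoQ x ∧ xoQ z < xoQ x := by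
  classical
  have : Fintype K := Fintype.ofFinite K
  have hx0 : x ≠ 0 := by
    rintro rfl; exact hx ⟨1, by simp⟩
  obtain ⟨k, hk⟩ : ∃ k, (D x).coeff k ≠ 0 := by
    by_contra hc
    push Not at hc
    exact hx0 (by rw [← hD.sum x]; simp [hc])
  set y := (D x).coeff k with hy
  have hxs : x = y + ∑ l ∈ Finset.univ.erase k, (D x).coeff l := by
    conv_lhs => rw [← hD.sum x]
    rw [Finset.add_sum_erase _ _ (Finset.mem_univ k)]
  set z := ∑ l ∈ Finset.univ.erase k, (D x).coeff l with hz
  have hz0 : z ≠ 0 := by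
    intro h
    rw [h, add_zero] at hxs
    exact hx ⟨k, by rw [hxs]; exact hD.hom x k⟩
  have horth : ∑ σ : R →+* ℂ, σ y * conj (σ z) = 0 := by
    simp only [hz, map_sum, Finset.mul_sum]
    rw [Finset.sum_comm]
    refine Finset.sum_eq_zero fun l hl => ?_
    exact xo_orth hD (hD.hom x k) (hD.hom x l) (Ne.symm (Finset.ne_of_mem_erase hl))
  have hq := xoQ_add horth
  rw [← hxs] at hq
  have h1 := xoQ_pos hk
  have h2 := xoQ_pos hz0
  exact ⟨y, z, hxs, by linarith, by linarith⟩

theorem xo_compat {K' : Type*} [CommGroup K'] {D' : R →+* MonoidAlgebra R K'}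
    [Finite K] [Finite K'] [Module.Free ℤ R] [Module.Finite ℤ R] [IsReduced R]
    (hD : XoGr D) (hD' : XoGr D') (x : R) :
    x ∈ AddSubgroup.closure {s : R | (∃ k, D s = MonoidAlgebra.single k s) ∧
      ∃ k, D' s = MonoidAlgebra.single k s} := by
  classical
  have : Fintype (R →+* ℂ) := Fintype.ofFinite _
  by_contra hx
  set T := AddSubgroup.closure {s : R | (∃ k, D s = MonoidAlgebra.single k s) ∧
      ∃ k, D' s = MonoidAlgebra.single k s} with hT
  let bad : Set R := {z | z ∉ T ∧ xoQ z ≤ xoQ x}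
  have hfin : bad.Finite := by
    refine (xo_finite_bounded (R := R) (xoQ x + 1)).subset ?_
    rintro z ⟨-, hz⟩ σ
    have h1 : ‖σ z‖ ^ 2 ≤ xoQ z :=
      Finset.single_le_sum (f := fun σ : R →+* ℂ => ‖σ z‖ ^ 2) (fun _ _ => by positivity)
        (Finset.mem_univ σ)
    nlinarith [norm_nonneg (σ z), sq_nonneg (‖σ z‖ - 1)]
  obtain ⟨m, ⟨hmT, hmx⟩, hmin⟩ := Set.exists_min_image bad xoQ hfin ⟨x, hx, le_rfl⟩
  have key : ∀ w, xoQ w < xoQ m → w ∈ T := by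
    intro w hw
    by_contra hwT
    exact absurd (hmin w ⟨hwT, by linarith⟩) (not_le.mpr hw)
  have hsp : (∃ y z, m = y + z ∧ xoQ y < xoQ m ∧ xoQ z < xoQ m) → False := by
    rintro ⟨y, z, h, hy, hz⟩
    exact hmT (h ▸ T.add_mem (key y hy) (key z hz))
  by_cases h1 : ∃ k, D m = MonoidAlgebra.single k m
  · by_cases h2 : ∃ k, D' m = MonoidAlgebra.single k m
    · exact hmT (AddSubgroup.subset_closure ⟨h1, h2⟩)
    · exact hsp (xo_split hD' h2)
  · exact hsp (xo_split hD h1)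

open ComplexConjugate in
theorem xo_torsion [Finite K] [Module.Free ℤ R] [Module.Finite ℤ R] [IsReduced R]
    (hconn : IsConnectedRing R) (hD : XoGr D) (g : Rˣ) (hg : IsOfFinOrder g) :
    ∃ k, D (g : R) = MonoidAlgebra.single k (g : R) := by
  classical
  have : Fintype K := Fintype.ofFinite K
  have := hconn.1
  have hconj : ∀ σ : R →+* ℂ, σ ((g⁻¹ : Rˣ) : R) = conj (σ (g : R)) := by
    intro σ
    have h1 : σ (g : R) ^ orderOf g = 1 := by
      rw [← map_pow, ← Units.val_pow_eq_pow_val, pow_orderOf_eq_one]; simp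
    have h2 : ‖σ (g : R)‖ = 1 := Complex.norm_eq_one_of_pow_eq_one h1 hg.orderOf_pos.ne'
    rw [← Complex.inv_eq_conj h2]
    apply eq_inv_of_mul_eq_one_left
    rw [← map_mul]; simp
  set c : K → R := fun k => (D (g : R)).coeff k with hc
  set d : K → R := fun k => (D ((g⁻¹ : Rˣ) : R)).coeff k with hd
  have hcd : ∀ (σ : R →+* ℂ) k, σ (d k⁻¹) = conj (σ (c k)) := by
    intro σ k
    have := xo_fourier (fun k => σ (d k)) (fun k => conj (σ (c k⁻¹))) (by
      intro χ
      rw [← xoTwist_apply hD, hconj, xoTwist_apply hD, map_sum, ← Equiv.sum_comp (Equiv.inv K)]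
      refine Finset.sum_congr rfl fun k _ => ?_
      rw [map_mul, ← Complex.inv_eq_conj (xo_char_norm χ _)]
      simp [hc])
    have := congrFun this k⁻¹
    simpa using this
  have hsum : ∑ k, c k * d k⁻¹ = 1 := by
    have h1 : (D (g : R) * D ((g⁻¹ : Rˣ) : R)).coeff 1 = 1 := by
      rw [← map_mul]; simp
    rw [MonoidAlgebra.coeff_mul_apply_left] at h1
    rw [Finsupp.sum_fintype _ _ (by simp)] at h1
    simpa using h1
  set e : K → R := fun k => c k * d k⁻¹ with he
  have hes : ∀ (σ : R →+* ℂ) k, σ (e k) = ((‖σ (c k)‖ ^ 2 : ℝ) : ℂ) := by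
    intro σ k
    simp only [he, map_mul, hcd]
    rw [Complex.mul_conj, Complex.normSq_eq_norm_sq]
  have hnsum : ∀ σ : R →+* ℂ, ∑ k, ‖σ (c k)‖ ^ 2 = 1 := by
    intro σ
    have := congrArg σ hsum
    rw [map_sum, map_one] at this
    change ∑ k, σ (e k) = 1 at this
    simp only [hes] at this
    exact_mod_cast this
  have hle : ∀ (σ : R →+* ℂ) k, ‖σ (c k)‖ ^ 2 ≤ 1 := by
    intro σ k
    rw [← hnsum σ]
    exact Finset.single_le_sum (f := fun k => ‖σ (c k)‖ ^ 2) (fun _ _ => by positivity)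
        (Finset.mem_univ k)
  have hidem : ∀ k, e k = 0 ∨ e k = 1 := by
    intro k
    apply hconn.2
    by_contra hne
    have hne' : e k * (1 - e k) ≠ 0 := by
      intro h; apply hne
      have : e k - e k * e k = 0 := by rw [← h]; ring
      exact (sub_eq_zero.mp this).symm
    obtain ⟨σ, hσ⟩ := xo_exists_embedding hne'
    rw [map_mul, map_sub, map_one, hes, ← Complex.ofReal_one, ← Complex.ofReal_sub,
      ← Complex.ofReal_mul, Complex.norm_real, Real.norm_eq_abs] at hσ
    have h0 : 0 ≤ ‖σ (c k)‖ ^ 2 := by positivity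
    have h1 := hle σ k
    rw [abs_of_nonneg (mul_nonneg h0 (by linarith))] at hσ
    nlinarith
  obtain ⟨k, hk⟩ : ∃ k, e k ≠ 0 := by
    by_contra hcon
    push Not at hcon
    have : ∑ k, e k = 1 := hsum
    simp [hcon] at this
  have hk1 := (hidem k).resolve_left hk
  have hzero : ∀ l, l ≠ k → c l = 0 := by
    intro l hl
    by_contra hne
    obtain ⟨σ, hσ⟩ := xo_exists_embedding hne
    have h1 : ‖σ (c k)‖ ^ 2 = 1 := by
      have := hes σ k
      rw [hk1, map_one] at this
      exact_mod_cast this.symm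
    have h2 := hnsum σ
    rw [← Finset.add_sum_erase _ _ (Finset.mem_univ k), h1] at h2
    have h3 : ‖σ (c l)‖ ^ 2 ≤ ∑ k ∈ Finset.univ.erase k, ‖σ (c k)‖ ^ 2 :=
      Finset.single_le_sum (f := fun k => ‖σ (c k)‖ ^ 2) (fun _ _ => by positivity)
        (Finset.mem_erase.mpr ⟨hl, Finset.mem_univ l⟩)
    nlinarith
  refine ⟨k, ?_⟩
  have hgk : c k = (g : R) := by
    have := hD.sum (g : R)
    rw [Finset.sum_eq_single k (fun l _ hl => hzero l hl) (by simp)] at this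
    exact this
  have hhom : D (c k) = MonoidAlgebra.single k (c k) := hD.hom (g : R) k
  rwa [hgk] at hhom

end coaction

section groupring
variable {R : Type*} [CommRing R]

/-- the natural map, for a homomorphism into the units -/
noncomputable def xoMap {U : Type*} [CommGroup U] (A : Subring R) (w : U →* Rˣ) :
    MonoidAlgebra A U →+* R :=
  MonoidAlgebra.liftNCRingHom A.subtype ((Units.coeHom R).comp w) (fun _ _ => Commute.all _ _)

theorem xoMap_single {U : Type*} [CommGroup U] (A : Subring R) (w : U →* Rˣ) (u : U) (a : A) :
    xoMap A w (MonoidAlgebra.single u a) = (a : R) * (w u : R) := by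
  simp [xoMap]

theorem xo_gr {K U : Type*} [CommGroup K] [CommGroup U] {D : R →+* MonoidAlgebra R K}
    {S A : Subring R} (w : U →* Rˣ) (lam : U →* K) (hbij : Function.Bijective lam)
    (hw : ∀ u, D (w u : R) = MonoidAlgebra.single (lam u) (w u : R))
    (hwS : ∀ u, (w u : R) ∈ S)
    (hA : ∀ x, x ∈ A ↔ x ∈ S ∧ D x = MonoidAlgebra.single 1 x)
    (hS : ∀ x ∈ S, x ∈ AddSubgroup.closure {s : R | s ∈ S ∧ ∃ k, D s = MonoidAlgebra.single k s}) :
    Function.Injective (xoMap A w) ∧ ∀ x, x ∈ (xoMap A w).range ↔ x ∈ S := by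
  classical
  constructor
  · rw [injective_iff_map_eq_zero]
    intro x hx
    have key : ∀ x : MonoidAlgebra A U, ∀ u,
        (D (xoMap A w x)).coeff (lam u) = (x.coeff u : R) * (w u : R) := by
      intro x u
      induction x using MonoidAlgebra.induction_linear with
      | zero => simp
      | add x y hx hy => simp [hx, hy, add_mul]
      | single v a =>
        rw [xoMap_single, map_mul, hw, ((hA a).mp a.2).2, MonoidAlgebra.single_mul_single, one_mul,
          MonoidAlgebra.coeff_single, MonoidAlgebra.coeff_single, Finsupp.single_apply,
          Finsupp.single_apply]
        by_cases h : v = u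
        · simp [h]
        · simp [h, hbij.1.ne h]
    ext u
    have := key x u
    rw [hx] at this
    simp only [map_zero, MonoidAlgebra.coeff_zero, Finsupp.coe_zero, Pi.zero_apply] at this ⊢
    simpa using this.symm
  · intro x
    constructor
    · rintro ⟨y, rfl⟩
      induction y using MonoidAlgebra.induction_linear with
      | zero => simp
      | add x y hx hy => rw [map_add]; exact S.add_mem hx hy
      | single v a => rw [xoMap_single]; exact S.mul_mem ((hA a).mp a.2).1 (hwS v)
    · intro hx
      have hle : AddSubgroup.closure {s : R | s ∈ S ∧ ∃ k, D s = MonoidAlgebra.single k s} ≤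
          (xoMap A w).range.toAddSubgroup := by
        rw [AddSubgroup.closure_le]
        rintro s ⟨hs, k, hk⟩
        obtain ⟨u, rfl⟩ := hbij.2 k
        have hmem : s * (w u⁻¹ : R) ∈ A := by
          rw [hA]
          refine ⟨S.mul_mem hs (hwS _), ?_⟩
          rw [map_mul, hk, hw, MonoidAlgebra.single_mul_single, map_inv, mul_inv_cancel]
        refine ⟨MonoidAlgebra.single u ⟨_, hmem⟩, ?_⟩
        rw [xoMap_single]
        simp
      exact hle (hS x hx)

/-- the coaction attached to a group ring -/
theorem xo_coaction (A : Subring R) (G : Subgroup Rˣ) (h : IsGpRg A G) :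
    ∃ D : R →+* MonoidAlgebra R G, XoGr D ∧
      (∀ g : G, D ((g : Rˣ) : R) = MonoidAlgebra.single g ((g : Rˣ) : R)) ∧
      (∀ x, x ∈ A ↔ D x = MonoidAlgebra.single 1 x) := by
  classical
  let E : MonoidAlgebra A G ≃+* R := RingEquiv.ofBijective (gpRgHom A G) h
  let w : G →* MonoidAlgebra R G :=
    { toFun := fun g => MonoidAlgebra.single g ((g : Rˣ) : R)
      map_one' := by simp [MonoidAlgebra.one_def]
      map_mul' := by intro a b; simp [MonoidAlgebra.single_mul_single] }
  let D0 : MonoidAlgebra A G →+* MonoidAlgebra R G :=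
    MonoidAlgebra.liftNCRingHom (MonoidAlgebra.singleOneRingHom.comp A.subtype) w
      (fun _ _ => Commute.all _ _)
  have hE : ∀ (g : G) (a : A), E (MonoidAlgebra.single g a) = (a : R) * ((g : Rˣ) : R) := by
    intro g a
    simp [E, gpRgHom]
  have hD0 : ∀ (g : G) (a : A), D0 (MonoidAlgebra.single g a)
      = MonoidAlgebra.single g ((a : R) * ((g : Rˣ) : R)) := by
    intro g a
    simp [D0, w, MonoidAlgebra.single_mul_single]
  let D : R →+* MonoidAlgebra R G := D0.comp E.symm.toRingHom
  have hDE : ∀ x, D (E x) = D0 x := by intro x; simp [D]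
  have hhom : ∀ (g : G) (a : A), D ((a : R) * ((g : Rˣ) : R))
      = MonoidAlgebra.single g ((a : R) * ((g : Rˣ) : R)) := by
    intro g a
    rw [← hE, hDE, hD0, hE]
  refine ⟨D, ?_, ?_, ?_⟩
  · intro x
    obtain ⟨y, rfl⟩ := E.surjective x
    induction y using MonoidAlgebra.induction_linear with
    | zero => simp
    | add x y hx hy => rw [map_add]; exact AddSubgroup.add_mem _ hx hy
    | single g a =>
      apply AddSubgroup.subset_closure
      exact ⟨g, by rw [hE, hhom]⟩
  · intro g
    simpa using hhom g 1
  · intro x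
    constructor
    · intro hx
      simpa using hhom 1 ⟨x, hx⟩
    · intro hx
      have key : ∀ y : MonoidAlgebra A G, (D (E y)).coeff 1 ∈ A := by
        intro y
        induction y using MonoidAlgebra.induction_linear with
        | zero => simp
        | add x y hx hy =>
          rw [map_add, map_add, MonoidAlgebra.coeff_add]; exact A.add_mem hx hy
        | single g a =>
          rw [hE, hhom, MonoidAlgebra.coeff_single, Finsupp.single_apply]
          split_ifs with hg
          · subst hg; simp
          · exact A.zero_mem
      obtain ⟨y, rfl⟩ := E.surjective x
      have := key y
      rw [hx] at this
      simpa using this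

theorem xo_finite [Module.Free ℤ R] [Module.Finite ℤ R] [Nontrivial R] {G : Subgroup Rˣ}
    {D : R →+* MonoidAlgebra R G}
    (hG : ∀ g : G, D ((g : Rˣ) : R) = MonoidAlgebra.single g ((g : Rˣ) : R)) : Finite G := by
  classical
  have hli : LinearIndependent ℤ (fun g : G => ((g : Rˣ) : R)) := by
    rw [linearIndependent_iff']
    intro s c hc g hg
    have h1 := congrArg (fun x => (D x).coeff g) hc
    simp only [map_sum, map_zsmul, hG, MonoidAlgebra.coeff_sum, Finsupp.coe_finsetSum,
      Finset.sum_apply, MonoidAlgebra.coeff_smul, MonoidAlgebra.coeff_single, Finsupp.smul_apply,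
      Finsupp.single_apply, map_zero, MonoidAlgebra.coeff_zero, Finsupp.coe_zero,
      Pi.zero_apply] at h1
    rw [Finset.sum_eq_single g (by intro b _ hb; simp [hb]) (by intro h; exact absurd hg h)] at h1
    simp only [if_true] at h1
    exact (smul_eq_zero.mp h1).resolve_right (Units.ne_zero _)
  exact hli.finite_of_isNoetherian

/-- the degree homomorphism -/
theorem xo_degree {K : Type*} [CommGroup K] [Finite K] [Module.Free ℤ R] [Module.Finite ℤ R]
    [IsReduced R] (hconn : IsConnectedRing R) {D : R →+* MonoidAlgebra R K} (hD : XoGr D)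
    (G : Subgroup Rˣ) [Finite G] :
    ∃ phi : G →* K, ∀ g : G, D ((g : Rˣ) : R) = MonoidAlgebra.single (phi g) ((g : Rˣ) : R) := by
  have := hconn.1
  have h : ∀ g : G, ∃ k, D ((g : Rˣ) : R) = MonoidAlgebra.single k ((g : Rˣ) : R) := by
    intro g
    apply xo_torsion hconn hD
    have := isOfFinOrder_of_finite g
    exact G.subtype.isOfFinOrder this
  choose phi hphi using h
  refine ⟨MonoidHom.mk' phi ?_, hphi⟩
  intro a b
  have h1 := hphi (a * b)
  rw [Subgroup.coe_mul, Units.val_mul, map_mul, hphi, hphi, MonoidAlgebra.single_mul_single,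
    MonoidAlgebra.single_left_inj (by rw [← Units.val_mul]; exact Units.ne_zero _)] at h1
  exact h1.symm

theorem xo_idem {M : Type*} [Monoid M] [Finite M] (t : M) : ∃ n, 0 < n ∧ t ^ n * t ^ n = t ^ n := by
  obtain ⟨a, b, hab, h⟩ := Finite.exists_ne_map_eq_of_infinite (fun n : ℕ => t ^ n)
  wlog hlt : a < b generalizing a b
  · exact this b a hab.symm h.symm (by omega)
  obtain ⟨p, rfl⟩ := Nat.exists_eq_add_of_lt hlt
  have h1 : ∀ j i, t ^ (a + i) = t ^ (a + i + (p + 1) * j) := by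
    intro j
    induction j with
    | zero => simp
    | succ j ih =>
      intro i
      rw [ih i]
      have : a + i + (p + 1) * (j + 1) = (a + p + 1) + (i + (p + 1) * j) := by ring
      rw [this, pow_add t (a + p + 1), ← h, ← pow_add]
      congr 1
      ring
  refine ⟨(p + 1) * (a + 1), by positivity, ?_⟩
  rw [← pow_add]
  have h2 := h1 (a + 1) (p * (a + 1) + 1)
  have e1 : a + (p * (a + 1) + 1) = (p + 1) * (a + 1) := by ring
  rw [e1] at h2
  exact h2.symm

end groupring

theorem xo_injective {R : Type u} [CommRing R] [Nontrivial R]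
    (A : Subring R) (G H : Subgroup Rˣ) [Finite H]
    (hA : IsStark A) {DG : R →+* MonoidAlgebra R G} {DH : R →+* MonoidAlgebra R H}
    (hDA : ∀ x, x ∈ A ↔ DG x = MonoidAlgebra.single 1 x)
    (hDH : ∀ h : H, DH ((h : Rˣ) : R) = MonoidAlgebra.single h ((h : Rˣ) : R))
    (hDG : ∀ g : G, DG ((g : Rˣ) : R) = MonoidAlgebra.single g ((g : Rˣ) : R))
    (hcomp : ∀ x : R, x ∈ AddSubgroup.closure {s : R | (∃ k, DG s = MonoidAlgebra.single k s) ∧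
      ∃ k, DH s = MonoidAlgebra.single k s})
    (phi : G →* H) (psi : H →* G)
    (hphi : ∀ g : G, DH ((g : Rˣ) : R) = MonoidAlgebra.single (phi g) ((g : Rˣ) : R))
    (hpsi : ∀ h : H, DG ((h : Rˣ) : R) = MonoidAlgebra.single (psi h) ((h : Rˣ) : R)) :
    Function.Injective psi := by
  classical
  let th : Monoid.End H := phi.comp psi
  have : Finite (Monoid.End H) := Finite.of_injective (fun f : Monoid.End H => (f : H → H))
    DFunLike.coe_injective
  obtain ⟨n, hn, hid⟩ := xo_idem th
  obtain ⟨m, rfl⟩ : ∃ m, n = m + 1 := ⟨n - 1, by omega⟩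
  set ep : Monoid.End H := th ^ (m + 1) with hep
  have hepid : ∀ h, ep (ep h) = ep h := fun h => DFunLike.congr_fun hid h
  have hepth : ∀ h, ep (th h) = th (ep h) := fun h => by
    have : ep * th = th * ep := by rw [hep, ← pow_succ, ← pow_succ']
    exact DFunLike.congr_fun this h
  have hker1 : ∀ h, th h = 1 → ep h = 1 := by
    intro h hh
    have : ep h = (th ^ m) (th h) := by rw [hep, pow_succ]; rfl
    rw [this, hh, map_one]
  have hfix : ∀ h, th h = h → ep h = h := by
    intro h hh
    have : ∀ j : ℕ, (th ^ j) h = h := by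
      intro j
      induction j with
      | zero => rfl
      | succ j ih =>
        have : (th ^ (j + 1)) h = (th ^ j) (th h) := by rw [pow_succ]; rfl
        rw [this, hh, ih]
    exact this _
  let H0 : Subgroup H := MonoidHom.ker (ep : H →* H)
  have hmem : ∀ h, h ∈ H0 ↔ ep h = 1 := fun h => Iff.rfl
  -- suffices that H0 is trivial
  suffices hH0 : ¬ Nontrivial H0 by
    rw [injective_iff_map_eq_one]
    intro h hh
    by_contra hne
    apply hH0
    have h1 : th h = 1 := by change phi (psi h) = 1; rw [hh, map_one]
    exact ⟨⟨h, hker1 h h1⟩, 1, fun e => hne (congrArg Subtype.val e)⟩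
  intro hnt
  let del : H →* H0 :=
    { toFun := fun h => ⟨h * (ep h)⁻¹, by rw [hmem, map_mul, map_inv, hepid, mul_inv_cancel]⟩
      map_one' := by ext; simp
      map_mul' := by
        intro a b
        apply Subtype.ext
        simp only [map_mul, mul_inv, Subgroup.coe_mul]
        exact mul_mul_mul_comm _ _ _ _ }
  let w1 : H →* Rˣ := H.subtype * (G.subtype.comp psi)⁻¹
  have hw1 : ∀ h, (w1 h : R) = ((h : Rˣ) : R) * (((psi h)⁻¹ : G) : Rˣ) := by
    intro h; simp [w1]
  have hw1A : ∀ h, (w1 h : R) ∈ A := by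
    intro h
    rw [hDA, hw1, map_mul, hpsi, hDG, MonoidAlgebra.single_mul_single, mul_inv_cancel]
  have hw1H : ∀ h, DH (w1 h : R) = MonoidAlgebra.single (h * (th h)⁻¹) (w1 h : R) := by
    intro h
    rw [hw1, map_mul, hDH, hphi, MonoidAlgebra.single_mul_single, map_inv]
    rfl
  let lam1 : H →* H := MonoidHom.id H * (phi.comp psi)⁻¹
  let lam : H0 →* H0 := (del.comp lam1).comp H0.subtype
  have hlam : ∀ k : H0, ((lam k : H0) : H) = (k : H) * (th k)⁻¹ := by
    intro k
    have hk : ep (k : H) = 1 := k.2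
    have h1 : ep ((k : H) * (th k)⁻¹) = 1 := by
      rw [map_mul, map_inv, hepth, hk, map_one, inv_one, mul_one]
    change ((k : H) * (th k)⁻¹) * (ep ((k : H) * (th k)⁻¹))⁻¹ = _
    rw [h1, inv_one, mul_one]
  have hlinj : Function.Injective lam := by
    rw [injective_iff_map_eq_one]
    intro k hk
    have h1 := hlam k
    rw [hk] at h1
    have h2 : th (k : H) = k := (mul_inv_eq_one.mp h1.symm).symm
    have h3 := hfix _ h2
    have hk : ep (k : H) = 1 := k.2
    exact Subtype.ext (h3.symm.trans hk)
  let D0 : R →+* MonoidAlgebra R H0 := (MonoidAlgebra.mapDomainRingHom R del).comp DH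
  have hD0 : ∀ s h, DH s = MonoidAlgebra.single h s → D0 s = MonoidAlgebra.single (del h) s := by
    intro s h hs
    simp [D0, hs]
  let A' : Subring R := A ⊓ RingHom.eqLocus D0 MonoidAlgebra.singleOneRingHom
  have hA' : ∀ x, x ∈ A' ↔ x ∈ A ∧ D0 x = MonoidAlgebra.single 1 x := by
    intro x; exact Iff.rfl
  have hcl : ∀ x ∈ A, x ∈ AddSubgroup.closure
      {s : R | s ∈ A ∧ ∃ k, D0 s = MonoidAlgebra.single k s} := by
    intro x hx
    set T := AddSubgroup.closure {s : R | s ∈ A ∧ ∃ k, D0 s = MonoidAlgebra.single k s} with hT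
    have key : ∀ x, (DG x).coeff 1 ∈ T := by
      intro x
      refine AddSubgroup.closure_induction (p := fun x _ => (DG x).coeff 1 ∈ T) ?_ ?_ ?_ ?_
        (hcomp x)
      · rintro s ⟨⟨g, hg⟩, h, hh⟩
        rw [hg, MonoidAlgebra.coeff_single, Finsupp.single_apply]
        split_ifs with h1
        · exact AddSubgroup.subset_closure ⟨(hDA s).mpr (by rw [hg, h1]), _, hD0 s h hh⟩
        · exact T.zero_mem
      · simp
      · intro x y _ _ hx hy
        rw [map_add, MonoidAlgebra.coeff_add]; exact T.add_mem hx hy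
      · intro x _ hx
        rw [map_neg, MonoidAlgebra.coeff_neg]; exact T.neg_mem hx
    have := key x
    rw [(hDA x).mp hx] at this
    simpa using this
  obtain ⟨hinj, hrange⟩ := xo_gr (D := D0) (S := A) (A := A') (w1.comp H0.subtype) lam
    hlinj.bijective_of_finite (fun u => hD0 _ _ (hw1H u)) (fun u => hw1A u) hA' hcl
  set f := xoMap A' (w1.comp H0.subtype) with hf
  let f' : MonoidAlgebra A' H0 →+* A := f.codRestrict A (fun x => (hrange _).mp ⟨x, rfl⟩)
  have hf' : Function.Bijective f' := by
    constructor
    · intro x y hxy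
      exact hinj (congrArg Subtype.val hxy)
    · intro a
      obtain ⟨x, hx⟩ := (hrange a).mpr a.2
      exact ⟨x, Subtype.ext hx⟩
  exact (hA A' inferInstance H0 inferInstance hnt).false (RingEquiv.ofBijective f' hf').symm

/-- Let `R` be a connected reduced order, `A`, `B` stark subrings of `R` and
`G`, `H` subgroups of `Rˣ` with `A[G] = B[H] = R`. Then `A[H] = B[G] = R`. -/
theorem crossover
    {R : Type u} [CommRing R] [Module.Free ℤ R] [Module.Finite ℤ R] [IsReduced R]
    (hconn : IsConnectedRing R)
    (A B : Subring R) (G H : Subgroup Rˣ)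
    (hAstark : IsStark A) (hBstark : IsStark B)
    (hAG : IsGpRg A G) (hBH : IsGpRg B H) :
    IsGpRg A H ∧ IsGpRg B G := by
  have := hconn.1
  obtain ⟨DG, hDG, hDGg, hDGA⟩ := xo_coaction A G hAG
  obtain ⟨DH, hDH, hDHh, hDHB⟩ := xo_coaction B H hBH
  have : Finite G := xo_finite hDGg
  have : Finite H := xo_finite hDHh
  obtain ⟨phi, hphi⟩ := xo_degree hconn hDH G
  obtain ⟨psi, hpsi⟩ := xo_degree hconn hDG H
  have hpsi_inj : Function.Injective psi :=
    xo_injective A G H hAstark hDGA hDHh hDGg (xo_compat hDG hDH) phi psi hphi hpsi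
  have hphi_inj : Function.Injective phi :=
    xo_injective B H G hBstark hDHB hDGg hDHh (xo_compat hDH hDG) psi phi hpsi hphi
  have hcard : Nat.card G = Nat.card H :=
    le_antisymm (Nat.card_le_card_of_injective phi hphi_inj)
      (Nat.card_le_card_of_injective psi hpsi_inj)
  have hpsi_bij : Function.Bijective psi :=
    (Nat.bijective_iff_injective_and_card psi).mpr ⟨hpsi_inj, hcard.symm⟩
  have hphi_bij : Function.Bijective phi :=
    (Nat.bijective_iff_injective_and_card phi).mpr ⟨hphi_inj, hcard⟩
  constructor
  · obtain ⟨h1, h2⟩ := xo_gr (D := DG) (S := ⊤) (A := A) H.subtype psi hpsi_bij hpsi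
      (fun _ => trivial) (fun x => by rw [hDGA]; simp)
      (fun x _ => AddSubgroup.closure_mono (fun s hs => And.intro trivial hs) (hDG x))
    exact ⟨h1, fun x => (h2 x).mpr trivial⟩
  · obtain ⟨h1, h2⟩ := xo_gr (D := DH) (S := ⊤) (A := B) G.subtype phi hphi_bij hphi
      (fun _ => trivial) (fun x => by rw [hDHB]; simp)
      (fun x _ => AddSubgroup.closure_mono (fun s hs => And.intro trivial hs) (hDH x))
    exact ⟨h1, fun x => (h2 x).mpr trivial⟩
end
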